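/- arXiv:2302.04963 — 5 statements merged into one kernel-verified Lean document; each statement's English description precedes it below -/
import Mathlib

section
/- There exist a constant c > 0 and a threshold d₀ ∈ ℕ such that for every dimension d ≥ d₀, every M ≥ 1, and every M-bit memory-constrained deterministic algorithm that, using T queries, is guaranteed to solve the feasibility problem over the unit ball of ℝ^d with accuracy ε = 1/(48 d² √d), one has T ≥ c · d³ / ((M + log d) · (log d)³). -/
open scoped RealInnerProductSpace

/-- An `M`-bit memory-constrained deterministic algorithm interacting with an oracle
with query space `S` and response space `R`: a query function and an update function. -/
structure MemAlg (M : ℕ) (S R : Type) where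
  query : (Fin M → Bool) → S
  update : (Fin M → Bool) → S → R → (Fin M → Bool)

namespace MemAlg

variable {M : ℕ} {S R : Type}

/-- The memory state after `t` iterations, interacting with the oracle `O`;
the initial memory state is `0^M`. -/
def mem (alg : MemAlg M S R) (O : S → R) : ℕ → (Fin M → Bool)
  | 0 => fun _ => false
  | t + 1 =>
      alg.update (alg.mem O t) (alg.query (alg.mem O t)) (O (alg.query (alg.mem O t)))

/-- The output of the algorithm after `T` queries: its last query
`q_T = ψ_query (Memory_{T-1})`. -/
def output (alg : MemAlg M S R) (O : S → R) (T : ℕ) : S :=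
  alg.query (alg.mem O (T - 1))

end MemAlg

/-- `O` is a separation oracle for the set `Q`: for each query `x` it either returns
`none` (the symbol `Success`), which is only allowed when `x ∈ Q`, or a vector `g`
separating `x` from `Q`, i.e. `⟪g, x - x'⟫ > 0` for all `x' ∈ Q`. -/
def IsSeparationOracle {d : ℕ} (Q : Set (EuclideanSpace ℝ (Fin d)))
    (O : EuclideanSpace ℝ (Fin d) → Option (EuclideanSpace ℝ (Fin d))) : Prop :=
  ∀ x, (O x = none → x ∈ Q) ∧
    ∀ g, O x = some g → ∀ x' ∈ Q, 0 < ⟪g, x - x'⟫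

/-- The algorithm `alg`, using `T` queries, is guaranteed to solve the feasibility problem
over the unit ball of `ℝ^d` with accuracy `ε`: for every convex set `Q ⊆ B_d(0,1)`
containing a ball of radius `ε` centered at some point of the unit ball, and every
separation oracle for `Q`, the output lies in `Q`. -/
def SolvesFeasibility {M : ℕ} (d : ℕ)
    (alg : MemAlg M (EuclideanSpace ℝ (Fin d)) (Option (EuclideanSpace ℝ (Fin d))))
    (T : ℕ) (ε : ℝ) : Prop :=
  ∀ Q : Set (EuclideanSpace ℝ (Fin d)),
    Convex ℝ Q → Q ⊆ Metric.closedBall (0 : EuclideanSpace ℝ (Fin d)) 1 →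
    (∃ xstar ∈ Metric.closedBall (0 : EuclideanSpace ℝ (Fin d)) 1,
        Metric.closedBall xstar ε ⊆ Q) →
    ∀ O : EuclideanSpace ℝ (Fin d) → Option (EuclideanSpace ℝ (Fin d)),
      IsSeparationOracle Q O → alg.output O T ∈ Q



namespace FeasLB

/-- Parameters of the hard instance. -/
structure Par (d : ℕ) where
  k : ℕ
  P : ℕ
  n : ℕ
  kpos : 0 < k
  Ppos : 0 < P
  κ : (Fin P × Fin (2 * k)) ⊕ Fin n ↪ Fin d
  hK : 64 * (P * k) ≤ d
  hd : 16 ≤ d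

noncomputable section

namespace Par

variable {d : ℕ} (π : Par d)

/-- The indices of the block coordinates. -/
abbrev W : Type := Fin π.P × Fin (2 * π.k)

/-- The block used by the `j`-th vector. -/
def blk (j : ℕ) : Fin π.P := ⟨(j / π.k) % π.P, Nat.mod_lt _ π.Ppos⟩

/-- The threshold for the vectors. -/
def thr (_ : Par d) : ℝ := (d : ℝ) ^ 2 * Real.sqrt d

/-- The threshold for the rows. -/
def eta (_ : Par d) : ℝ := 1 / (24 * (d : ℝ) * Real.sqrt d)

def zdot (ζ : ℕ → Fin (2 * π.k) → ℤ) (j : ℕ) (x : EuclideanSpace ℝ (Fin d)) : ℝ :=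
  ∑ b, (ζ j b : ℝ) * x (π.κ (Sum.inl (π.blk j, b)))

def zvec (ζ : ℕ → Fin (2 * π.k) → ℤ) (j : ℕ) : EuclideanSpace ℝ (Fin d) :=
  ∑ b, (ζ j b : ℝ) • EuclideanSpace.single (π.κ (Sum.inl (π.blk j, b))) (1 : ℝ)

def rdot (r : π.W → ℤ) (i : Fin π.n) (x : EuclideanSpace ℝ (Fin d)) : ℝ :=
  (∑ q, ((r q : ℝ) / (d : ℝ) ^ 4) * x (π.κ (Sum.inl q))) + (d : ℝ) * x (π.κ (Sum.inr i))

def rvec (r : π.W → ℤ) (i : Fin π.n) : EuclideanSpace ℝ (Fin d) :=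
  (∑ q, ((r q : ℝ) / (d : ℝ) ^ 4) • EuclideanSpace.single (π.κ (Sum.inl q)) (1 : ℝ))
    + (d : ℝ) • EuclideanSpace.single (π.κ (Sum.inr i)) (1 : ℝ)

lemma inner_zvec (ζ : ℕ → Fin (2 * π.k) → ℤ) (j : ℕ) (x : EuclideanSpace ℝ (Fin d)) :
    ⟪π.zvec ζ j, x⟫ = π.zdot ζ j x := by
  simp [zvec, zdot, sum_inner, inner_smul_left, EuclideanSpace.inner_single_left]

lemma inner_rvec (r : π.W → ℤ) (i : Fin π.n) (x : EuclideanSpace ℝ (Fin d)) :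
    ⟪π.rvec r i, x⟫ = π.rdot r i x := by
  simp [rvec, rdot, sum_inner, inner_smul_left, inner_add_left,
    EuclideanSpace.inner_single_left]

open Classical in
/-- violated rows -/
def viol (A : Fin π.n → π.W → ℤ) (I : Finset (Fin π.n)) (x : EuclideanSpace ℝ (Fin d)) :
    Finset (Fin π.n) := I.filter (fun i => π.eta < |π.rdot (A i) i x|)

open Classical in
/-- The hard oracle. -/
def oracle (A : Fin π.n → π.W → ℤ) (ζ : ℕ → Fin (2 * π.k) → ℤ) (J : ℕ)
    (I : Finset (Fin π.n)) (x : EuclideanSpace ℝ (Fin d)) :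
    Option (EuclideanSpace ℝ (Fin d)) :=
  if 1 < ‖x‖ then some x
  else if h : (π.viol A I x).Nonempty then
    some (if 0 < π.rdot (A ((π.viol A I x).min' h)) ((π.viol A I x).min' h) x then
      π.rvec (A ((π.viol A I x).min' h)) ((π.viol A I x).min' h)
      else - π.rvec (A ((π.viol A I x).min' h)) ((π.viol A I x).min' h))
  else if h : ∃ j, j < J ∧ -π.thr < π.zdot ζ j x then some (π.zvec ζ (Nat.find h))
  else none

/-- The feasible set. -/
def Pass (A : Fin π.n → π.W → ℤ) (ζ : ℕ → Fin (2 * π.k) → ℤ) (J : ℕ)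
    (x : EuclideanSpace ℝ (Fin d)) : Prop :=
  ‖x‖ ≤ 1 ∧ (∀ i, |π.rdot (A i) i x| ≤ π.eta) ∧ ∀ j < J, π.zdot ζ j x ≤ -π.thr

variable {π}
variable {A A' : Fin π.n → π.W → ℤ} {ζ ζ' : ℕ → Fin (2 * π.k) → ℤ} {J J' : ℕ}
  {I : Finset (Fin π.n)} {x : EuclideanSpace ℝ (Fin d)}

lemma viol_univ_empty (h : ¬ (π.viol A Finset.univ x).Nonempty) (i : Fin π.n) :
    |π.rdot (A i) i x| ≤ π.eta := by
  rw [Finset.not_nonempty_iff_eq_empty] at h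
  by_contra hc
  have : i ∈ π.viol A Finset.univ x := by
    simp only [viol, Finset.mem_filter, Finset.mem_univ, true_and]
    exact not_le.mp hc
  rw [h] at this
  simp at this

lemma isSep : IsSeparationOracle {x | π.Pass A ζ J x} (π.oracle A ζ J Finset.univ) := by
  intro x
  unfold oracle
  split_ifs with h1 h2 h3 h4
  · refine ⟨by simp, ?_⟩
    rintro g hg x' ⟨hx', -, -⟩
    obtain rfl := Option.some.inj hg
    rw [inner_sub_right, real_inner_self_eq_norm_sq]
    have := real_inner_le_norm x x'
    nlinarith [norm_nonneg x, norm_nonneg x']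
  · refine ⟨by simp, ?_⟩
    rintro g hg x' ⟨-, hx', -⟩
    obtain rfl := Option.some.inj hg
    have hm := (π.viol A Finset.univ x).min'_mem h2
    set i := (π.viol A Finset.univ x).min' h2
    simp only [viol, Finset.mem_filter, Finset.mem_univ, true_and] at hm
    have := hx' i
    rw [inner_sub_right, inner_rvec, inner_rvec]
    rw [abs_of_pos h3] at hm
    have := abs_le.mp this
    linarith
  · refine ⟨by simp, ?_⟩
    rintro g hg x' ⟨-, hx', -⟩
    obtain rfl := Option.some.inj hg
    have hm := (π.viol A Finset.univ x).min'_mem h2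
    set i := (π.viol A Finset.univ x).min' h2
    simp only [viol, Finset.mem_filter, Finset.mem_univ, true_and] at hm
    have := hx' i
    rw [inner_sub_right, inner_neg_left, inner_neg_left, inner_rvec, inner_rvec]
    rw [abs_of_nonpos (not_lt.mp h3)] at hm
    have := abs_le.mp this
    linarith
  · refine ⟨by simp, ?_⟩
    rintro g hg x' ⟨-, -, hx'⟩
    obtain rfl := Option.some.inj hg
    have hs := Nat.find_spec h4
    rw [inner_sub_right, inner_zvec, inner_zvec]
    have := hx' _ hs.1
    linarith [hs.2]
  · refine ⟨fun _ => ⟨not_lt.mp h1, viol_univ_empty h2, ?_⟩, by simp⟩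
    intro j hj
    by_contra hc
    exact h4 ⟨j, hj, not_le.mp hc⟩

lemma oracle_mono (hJ : J ≤ J') (hx : ¬ π.Pass A ζ J x) :
    π.oracle A ζ J Finset.univ x = π.oracle A ζ J' Finset.univ x := by
  unfold oracle
  split_ifs with h1 h2 h3 h4 h5 h6 <;> try rfl
  · congr 2
    apply le_antisymm
    · exact Nat.find_min' _ ⟨lt_of_le_of_lt
        (Nat.find_min' _ ⟨lt_of_lt_of_le (Nat.find_spec h4).1 hJ, (Nat.find_spec h4).2⟩)
        (Nat.find_spec h4).1, (Nat.find_spec h5).2⟩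
    · exact Nat.find_min' _ ⟨lt_of_lt_of_le (Nat.find_spec h4).1 hJ, (Nat.find_spec h4).2⟩
  · obtain ⟨j, hj, hj'⟩ := h4
    exact absurd ⟨j, hj.trans_le hJ, hj'⟩ h5
  · exfalso
    apply hx
    refine ⟨not_lt.mp h1, viol_univ_empty h2, ?_⟩
    intro j hj
    by_contra hc
    exact h4 ⟨j, hj, not_le.mp hc⟩

lemma zdot_congr {j : ℕ} (h : ζ j = ζ' j) : π.zdot ζ j x = π.zdot ζ' j x := by
  simp [zdot, h]

lemma zvec_congr {j : ℕ} (h : ζ j = ζ' j) : π.zvec ζ j = π.zvec ζ' j := by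
  simp [zvec, h]

lemma oracle_congr_z (h : ∀ j < J, ζ j = ζ' j) : π.oracle A ζ J I = π.oracle A ζ' J I := by
  funext x
  unfold oracle
  split_ifs with h1 h2 h3 h4 h5 h6 <;> try rfl
  · congr 1
    have : Nat.find h4 = Nat.find h5 := by
      apply le_antisymm
      · apply Nat.find_min'
        have := Nat.find_spec h5
        exact ⟨this.1, by rw [zdot_congr (h _ this.1)]; exact this.2⟩
      · apply Nat.find_min'
        have := Nat.find_spec h4
        exact ⟨this.1, by rw [← zdot_congr (h _ this.1)]; exact this.2⟩
    rw [← this]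
    exact zvec_congr (h _ (Nat.find_spec h4).1)
  · obtain ⟨j, hj, hj'⟩ := h4
    exact absurd ⟨j, hj, by rw [← zdot_congr (h _ hj)]; exact hj'⟩ h5
  · skip
    obtain ⟨j, hj, hj'⟩ := h6
    exact absurd ⟨j, hj, by rw [zdot_congr (h _ hj)]; exact hj'⟩ h4

lemma Pass_congr_z (h : ∀ j < J, ζ j = ζ' j) : π.Pass A ζ J x ↔ π.Pass A ζ' J x := by
  unfold Pass
  refine and_congr Iff.rfl (and_congr Iff.rfl (forall_congr' fun j => forall_congr' fun hj => ?_))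
  rw [zdot_congr (h j hj)]

lemma oracle_congr_A (h : ∀ i ∈ I, A i = A' i) : π.oracle A ζ J I = π.oracle A' ζ J I := by
  funext x
  have hv : π.viol A I x = π.viol A' I x := by
    unfold viol
    apply Finset.filter_congr
    intro i hi
    rw [h i hi]
  unfold oracle
  by_cases h1 : 1 < ‖x‖
  · simp [h1]
  rw [if_neg h1, if_neg h1]
  by_cases h2 : (π.viol A I x).Nonempty
  · have h3 : (π.viol A' I x).Nonempty := hv ▸ h2
    have he : (π.viol A I x).min' h2 = (π.viol A' I x).min' h3 := by
      congr 1
    have hm : (π.viol A' I x).min' h3 ∈ I := by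
      have := (π.viol A' I x).min'_mem h3
      simp only [viol, Finset.mem_filter] at this
      exact this.1
    rw [dif_pos h2, dif_pos h3, he, h _ hm]
  · have h3 : ¬ (π.viol A' I x).Nonempty := hv ▸ h2
    rw [dif_neg h2, dif_neg h3]

lemma oracle_restrict
    (h : ‖x‖ ≤ 1 → ∀ hne : (π.viol A Finset.univ x).Nonempty,
      (π.viol A Finset.univ x).min' hne ∈ I) :
    π.oracle A ζ J Finset.univ x = π.oracle A ζ J I x := by
  have hsub : π.viol A I x ⊆ π.viol A Finset.univ x :=
    Finset.filter_subset_filter _ (Finset.subset_univ _)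
  unfold oracle
  by_cases h1 : 1 < ‖x‖
  · simp [h1]
  rw [if_neg h1, if_neg h1]
  by_cases h2 : (π.viol A Finset.univ x).Nonempty
  · have hmI := h (not_lt.mp h1) h2
    have hm := (π.viol A Finset.univ x).min'_mem h2
    have hm' : (π.viol A Finset.univ x).min' h2 ∈ π.viol A I x := by
      simp only [viol, Finset.mem_filter] at hm ⊢
      exact ⟨hmI, hm.2⟩
    have h3 : (π.viol A I x).Nonempty := ⟨_, hm'⟩
    have he : (π.viol A Finset.univ x).min' h2 = (π.viol A I x).min' h3 := by
      apply le_antisymm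
      · exact Finset.min'_subset h3 hsub
      · exact Finset.min'_le _ _ hm'
    rw [dif_pos h2, dif_pos h3, he]
  · have h3 : ¬ (π.viol A I x).Nonempty := fun h3 => h2 (h3.mono hsub)
    rw [dif_neg h2, dif_neg h3]

end Par
end
end FeasLB


namespace FeasLB
noncomputable section
namespace Par

variable {d : ℕ} {π : Par d}

lemma two_k_le (π : Par d) : 2 * π.k ≤ d := by
  have := π.hK
  have h := π.Ppos
  nlinarith [π.kpos]

lemma card_le (π : Par d) : π.P * (2 * π.k) + π.n ≤ d := by
  have := Fintype.card_le_of_embedding π.κ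
  simpa using this

lemma coord_le (x : EuclideanSpace ℝ (Fin d)) (c : Fin d) : |x c| ≤ ‖x‖ := by
  simpa using PiLp.norm_apply_le x c

lemma abs_zdot_le {ζ : ℕ → Fin (2 * π.k) → ℤ} {j : ℕ} {C e : ℝ}
    (hζ : ∀ b, |(ζ j b : ℝ)| ≤ C) {x : EuclideanSpace ℝ (Fin d)} (hx : ‖x‖ ≤ e) :
    |π.zdot ζ j x| ≤ d * (C * e) := by
  have hC : 0 ≤ C := (abs_nonneg _).trans (hζ ⟨0, by have := π.kpos; omega⟩)
  have he : 0 ≤ e := (norm_nonneg _).trans hx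
  unfold zdot
  refine (Finset.abs_sum_le_sum_abs _ _).trans ?_
  refine (Finset.sum_le_card_nsmul _ _ (C * e) ?_).trans ?_
  · intro b _
    rw [abs_mul]
    exact mul_le_mul (hζ b) ((coord_le x _).trans hx) (abs_nonneg _) hC
  · simp only [Finset.card_univ, Fintype.card_fin, nsmul_eq_mul]
    have : ((2 * π.k : ℕ) : ℝ) ≤ d := by exact_mod_cast π.two_k_le
    exact mul_le_mul_of_nonneg_right this (by positivity)

lemma abs_rdot_le {r : π.W → ℤ} {i : Fin π.n} {e : ℝ}
    (hr : ∀ q, 0 ≤ r q ∧ r q < (d : ℤ) ^ 4) {x : EuclideanSpace ℝ (Fin d)} (hx : ‖x‖ ≤ e) :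
    |π.rdot r i x| ≤ 2 * d * e := by
  have he : 0 ≤ e := (norm_nonneg _).trans hx
  have hd : (0 : ℝ) < d := by have := π.hd; positivity
  unfold rdot
  have h1 : |∑ q, ((r q : ℝ) / (d : ℝ) ^ 4) * x (π.κ (Sum.inl q))| ≤ d * e := by
    refine (Finset.abs_sum_le_sum_abs _ _).trans ?_
    refine (Finset.sum_le_card_nsmul _ _ e ?_).trans ?_
    · intro q _
      rw [abs_mul]
      have h0 : (0 : ℝ) ≤ r q := by exact_mod_cast (hr q).1
      have h1 : (r q : ℝ) ≤ (d : ℝ) ^ 4 := by exact_mod_cast (hr q).2.le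
      have : |(r q : ℝ) / (d : ℝ) ^ 4| ≤ 1 := by
        rw [abs_of_nonneg (by positivity)]
        exact (div_le_one (by positivity)).mpr h1
      calc _ ≤ 1 * e := mul_le_mul this ((coord_le x _).trans hx) (abs_nonneg _) (by norm_num)
        _ = e := one_mul _
    · simp only [Finset.card_univ, Fintype.card_fin, nsmul_eq_mul, Fintype.card_prod]
      have : ((π.P * (2 * π.k) : ℕ) : ℝ) ≤ d := by
        exact_mod_cast (Nat.le_add_right _ _).trans π.card_le
      exact mul_le_mul_of_nonneg_right this he
  have h2 : |(d : ℝ) * x (π.κ (Sum.inr i))| ≤ d * e := by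
    rw [abs_mul, abs_of_pos hd]
    exact mul_le_mul_of_nonneg_left ((coord_le x _).trans hx) hd.le
  calc _ ≤ _ := abs_add_le _ _
    _ ≤ 2 * d * e := by linarith

lemma zdot_sub {ζ : ℕ → Fin (2 * π.k) → ℤ} {j : ℕ} (x y : EuclideanSpace ℝ (Fin d)) :
    π.zdot ζ j (x - y) = π.zdot ζ j x - π.zdot ζ j y := by
  rw [← inner_zvec, ← inner_zvec, ← inner_zvec, inner_sub_right]

lemma rdot_sub {r : π.W → ℤ} {i : Fin π.n} (x y : EuclideanSpace ℝ (Fin d)) :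
    π.rdot r i (x - y) = π.rdot r i x - π.rdot r i y := by
  rw [← inner_rvec, ← inner_rvec, ← inner_rvec, inner_sub_right]

/-- Extension of a block vector to all block coordinates. -/
def V (π : Par d) (v : ℕ → EuclideanSpace ℝ (Fin (2 * π.k))) (j : ℕ) : EuclideanSpace ℝ π.W :=
  WithLp.toLp 2 (fun q => if q.1 = π.blk j then v j q.2 else 0)

lemma inner_V (v : ℕ → EuclideanSpace ℝ (Fin (2 * π.k))) (j : ℕ) (w : EuclideanSpace ℝ π.W) :
    ⟪π.V v j, w⟫ = ∑ b, v j b * w (π.blk j, b) := by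
  simp only [V, PiLp.inner_apply, Fintype.sum_prod_type]
  rw [Finset.sum_eq_single (π.blk j)]
  · simp [mul_comm]
  · intro p _ hp
    simp [hp]
  · simp

lemma blk_eq {j l : ℕ} (hj : j < π.P * π.k) (hl : l < π.P * π.k) :
    π.blk j = π.blk l ↔ j / π.k = l / π.k := by
  have h1 : j / π.k < π.P := Nat.div_lt_of_lt_mul (by rwa [mul_comm])
  have h2 : l / π.k < π.P := Nat.div_lt_of_lt_mul (by rwa [mul_comm])
  simp [blk, Nat.mod_eq_of_lt h1, Nat.mod_eq_of_lt h2]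

/-- Orthonormality within each period. -/
def Orth (π : Par d) (v : ℕ → EuclideanSpace ℝ (Fin (2 * π.k))) (J : ℕ) : Prop :=
  ∀ j < J, ∀ l < J, j / π.k = l / π.k → ⟪v j, v l⟫ = if j = l then (1 : ℝ) else 0

/-- Rounded vectors. -/
def rnd (π : Par d) (v : ℕ → EuclideanSpace ℝ (Fin (2 * π.k))) (j : ℕ) (b : Fin (2 * π.k)) : ℤ :=
  ⌊(d : ℝ) ^ 3 * v j b⌋

lemma rnd_abs {v : ℕ → EuclideanSpace ℝ (Fin (2 * π.k))} {j : ℕ} (h : ‖v j‖ = 1)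
    (b : Fin (2 * π.k)) : |π.rnd v j b| ≤ (d : ℤ) ^ 3 := by
  have h1 : |v j b| ≤ 1 := by rw [← h]; simpa using PiLp.norm_apply_le (v j) b
  have h2 := abs_le.mp h1
  have hd : (0 : ℝ) ≤ (d : ℝ) ^ 3 := by positivity
  rw [abs_le]
  unfold rnd
  constructor
  · apply Int.le_floor.mpr
    push_cast
    nlinarith
  · have := Int.floor_le ((d : ℝ) ^ 3 * v j b)
    have h3 : ((⌊(d : ℝ) ^ 3 * v j b⌋ : ℤ) : ℝ) ≤ ((d : ℤ) ^ 3 : ℤ) := by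
      push_cast
      nlinarith
    exact_mod_cast h3

lemma rnd_err {v : ℕ → EuclideanSpace ℝ (Fin (2 * π.k))} {j : ℕ} (f : Fin (2 * π.k) → ℝ)
    (hf : ∀ b, |f b| ≤ 1) :
    |∑ b, (π.rnd v j b : ℝ) * f b - (d : ℝ) ^ 3 * ∑ b, v j b * f b| ≤ 2 * π.k := by
  rw [Finset.mul_sum, ← Finset.sum_sub_distrib]
  refine (Finset.abs_sum_le_sum_abs _ _).trans ?_
  refine (Finset.sum_le_card_nsmul _ _ 1 ?_).trans ?_
  · intro b _
    have h1 := Int.floor_le ((d : ℝ) ^ 3 * v j b)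
    have h2 := (Int.lt_floor_add_one ((d : ℝ) ^ 3 * v j b)).le
    have : (π.rnd v j b : ℝ) * f b - (d : ℝ) ^ 3 * (v j b * f b)
      = ((π.rnd v j b : ℝ) - (d : ℝ) ^ 3 * v j b) * f b := by ring
    rw [this, abs_mul]
    have h3 : |(π.rnd v j b : ℝ) - (d : ℝ) ^ 3 * v j b| ≤ 1 := by
      unfold rnd
      rw [abs_le]
      constructor <;> linarith
    calc _ ≤ (1 : ℝ) * 1 := mul_le_mul h3 (hf b) (abs_nonneg _) (by norm_num)
      _ = 1 := by norm_num
  · simp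

lemma feasible {A : Fin π.n → π.W → ℤ} (hA : ∀ i q, 0 ≤ A i q ∧ A i q < (d : ℤ) ^ 4)
    {v : ℕ → EuclideanSpace ℝ (Fin (2 * π.k))} {J : ℕ} (hJ : J ≤ π.P * π.k)
    (hv : π.Orth v J) :
    ∃ xstar ∈ Metric.closedBall (0 : EuclideanSpace ℝ (Fin d)) 1,
      Metric.closedBall xstar (1 / (48 * (d : ℝ) ^ 2 * Real.sqrt d)) ⊆
        {x | π.Pass A (π.rnd v) J x} := by
  have hd16 : (16 : ℝ) ≤ d := by exact_mod_cast π.hd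
  have hd0 : (0 : ℝ) < d := by linarith
  set s := Real.sqrt d with hs
  have hs2 : s ^ 2 = d := Real.sq_sqrt hd0.le
  have hs0 : 0 < s := Real.sqrt_pos.mpr hd0
  have hs4 : 4 ≤ s := by
    rw [hs]; apply Real.le_sqrt_of_sq_le; norm_num; exact π.hd
  have horth : ∀ j < J, ∀ l < J, ⟪π.V v j, π.V v l⟫ = if j = l then (1 : ℝ) else 0 := by
    intro j hj l hl
    rw [inner_V]
    by_cases hb : π.blk j = π.blk l
    · have hb' := (blk_eq (hj.trans_le hJ) (hl.trans_le hJ)).mp hb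
      rw [← hv j hj l hl hb']
      simp [V, hb, PiLp.inner_apply, mul_comm]
    · have : j ≠ l := by rintro rfl; exact hb rfl
      simp [V, hb, this]
  set w : EuclideanSpace ℝ π.W := (-(2 / s)) • ∑ j ∈ Finset.range J, π.V v j with hw
  have hVw : ∀ j < J, ⟪π.V v j, w⟫ = -(2 / s) := by
    intro j hj
    rw [hw, inner_smul_right, inner_sum, Finset.sum_eq_single j]
    · rw [horth j hj j hj]; simp
    · intro l hl hlj
      rw [horth j hj l (Finset.mem_range.mp hl), if_neg (Ne.symm hlj)]
    · intro h; exact absurd (Finset.mem_range.mpr hj) h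
  have hwn : ‖w‖ ^ 2 ≤ 1 / 16 := by
    rw [← real_inner_self_eq_norm_sq]
    nth_rewrite 1 [hw]
    rw [inner_smul_left, sum_inner, Finset.sum_congr rfl
      (fun j hj => hVw j (Finset.mem_range.mp hj))]
    simp only [Finset.sum_const, Finset.card_range, nsmul_eq_mul, conj_trivial]
    have hJ' : 64 * (J : ℝ) ≤ d := by
      have : 64 * J ≤ d := by have := π.hK; omega
      exact_mod_cast this
    have : -(2 / s) * (J * -(2 / s)) = 4 * J / d := by
      rw [← hs2]; field_simp; ring
    rw [this, div_le_div_iff₀ hd0 (by norm_num)]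
    linarith
  have hw1 : ∀ q, |w q| ≤ 1 := by
    intro q
    have h1 : |w q| ≤ ‖w‖ := by simpa using PiLp.norm_apply_le w q
    nlinarith [norm_nonneg w]
  set u : Fin π.n → ℝ := fun i => -(1 / d) * ∑ q, ((A i q : ℝ) / (d : ℝ) ^ 4) * w q with hu
  have hu2 : ∀ i, u i ^ 2 ≤ (1 / 16) / d := by
    intro i
    rw [hu]
    have hcs := Finset.sum_mul_sq_le_sq_mul_sq Finset.univ
      (fun q => ((A i q : ℝ) / (d : ℝ) ^ 4)) (fun q => w q)
    have h1 : ∑ q, ((A i q : ℝ) / (d : ℝ) ^ 4) ^ 2 ≤ d := by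
      refine (Finset.sum_le_card_nsmul _ _ 1 ?_).trans ?_
      · intro q _
        have h0 : (0 : ℝ) ≤ A i q := by exact_mod_cast (hA i q).1
        have h1 : (A i q : ℝ) ≤ (d : ℝ) ^ 4 := by exact_mod_cast (hA i q).2.le
        apply pow_le_one₀ (by positivity)
        exact (div_le_one (by positivity)).mpr h1
      · simp only [Finset.card_univ, Fintype.card_fin, nsmul_eq_mul, Fintype.card_prod, mul_one]
        exact_mod_cast (Nat.le_add_right _ _).trans π.card_le
    have h2 : ∑ q, w q ^ 2 ≤ 1 / 16 := by
      rw [← EuclideanSpace.real_norm_sq_eq]; exact hwn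
    have h3 : (∑ q, ((A i q : ℝ) / (d : ℝ) ^ 4) * w q) ^ 2 ≤ d * (1 / 16) :=
      hcs.trans (mul_le_mul h1 h2 (Finset.sum_nonneg fun _ _ => sq_nonneg _) hd0.le)
    have : (-(1 / (d : ℝ)) * ∑ q, ((A i q : ℝ) / (d : ℝ) ^ 4) * w q) ^ 2
      = (∑ q, ((A i q : ℝ) / (d : ℝ) ^ 4) * w q) ^ 2 / d ^ 2 := by
      rw [mul_pow]; field_simp
    simp only []
    rw [this, div_le_div_iff₀ (by positivity) hd0]
    nlinarith
  set xs : EuclideanSpace ℝ (Fin d) :=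
    WithLp.toLp 2 (Function.extend π.κ (Sum.elim w u) 0) with hxs
  have hxl : ∀ q, xs (π.κ (Sum.inl q)) = w q := by
    intro q; simp [hxs, π.κ.injective.extend_apply]
  have hxr : ∀ i, xs (π.κ (Sum.inr i)) = u i := by
    intro i; simp [hxs, π.κ.injective.extend_apply]
  have hxn : ‖xs‖ ^ 2 ≤ 1 / 8 := by
    rw [EuclideanSpace.real_norm_sq_eq]
    rw [← Finset.sum_of_injOn (s := Finset.univ) (f := fun a => (Sum.elim w u a) ^ 2) π.κ
      π.κ.injective.injOn (fun _ _ => Finset.mem_coe.mpr (Finset.mem_univ _))]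
    · rw [Fintype.sum_sum_type]
      simp only [Sum.elim_inl, Sum.elim_inr]
      have h2 : ∑ q, w q ^ 2 ≤ 1 / 16 := by
        rw [← EuclideanSpace.real_norm_sq_eq]; exact hwn
      have h3 : ∑ i, u i ^ 2 ≤ 1 / 16 := by
        refine (Finset.sum_le_card_nsmul _ _ _ (fun i _ => hu2 i)).trans ?_
        simp only [Finset.card_univ, Fintype.card_fin, nsmul_eq_mul]
        have : (π.n : ℝ) ≤ d := by exact_mod_cast (Nat.le_add_left _ _).trans π.card_le
        rw [mul_div_assoc', div_le_iff₀ hd0]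
        nlinarith
      linarith
    · intro c _ hc
      have : ¬ ∃ a, π.κ a = c := by
        rintro ⟨a, ha⟩; exact hc ⟨a, Finset.mem_coe.mpr (Finset.mem_univ _), ha⟩
      simp [hxs, Function.extend_apply' _ _ _ this]
    · rintro (q | i) _
      · simp [hxl]
      · simp [hxr]
  have hxn' : ‖xs‖ ≤ 1 / 2 := by nlinarith [norm_nonneg xs]
  have heps : 1 / (48 * (d : ℝ) ^ 2 * s) ≤ 1 / 2 := by
    apply one_div_le_one_div_of_le (by norm_num)
    nlinarith [mul_pos (pow_pos hd0 2) hs0, pow_pos hd0 2]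
  refine ⟨xs, ?_, ?_⟩
  · rw [mem_closedBall_zero_iff]; linarith
  intro y hy
  rw [mem_closedBall_iff_norm] at hy
  set δ := y - xs with hδ
  refine ⟨?_, ?_, ?_⟩
  · have : y = xs + δ := by rw [hδ]; abel
    rw [this]
    exact (norm_add_le _ _).trans (by linarith)
  · intro i
    have h0 : π.rdot (A i) i xs = 0 := by
      unfold rdot
      simp only [hxl, hxr, hu]
      field_simp
      ring
    have h1 := abs_rdot_le (π := π) (r := A i) (i := i) (hA i) hy
    rw [rdot_sub, h0, sub_zero] at h1
    refine h1.trans (le_of_eq ?_)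
    unfold eta
    rw [← hs]
    field_simp
    norm_num
  · intro j hj
    have hvj : ‖v j‖ = 1 := by
      have := hv j hj j hj rfl
      rw [real_inner_self_eq_norm_sq, if_pos rfl] at this
      nlinarith [norm_nonneg (v j)]
    have h1 := abs_zdot_le (π := π) (ζ := π.rnd v) (j := j) (C := (d : ℝ) ^ 3)
      (fun b => by exact_mod_cast rnd_abs hvj b) hy
    rw [zdot_sub] at h1
    have h2 := rnd_err (π := π) (v := v) (j := j) (fun b => w (π.blk j, b)) (fun b => hw1 _)
    rw [← inner_V, hVw j hj] at h2
    have h3 : π.zdot (π.rnd v) j xs = ∑ b, (π.rnd v j b : ℝ) * w (π.blk j, b) := by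
      simp [zdot, hxl]
    rw [← h3] at h2
    have h4 : (2 * π.k : ℝ) ≤ d := by exact_mod_cast π.two_k_le
    unfold thr
    rw [← hs]
    have e1 : (d : ℝ) ^ 3 * -(2 / s) = - 2 * (d ^ 2 * s) := by
      rw [← hs2]; field_simp
    have e2 : (d : ℝ) * (d ^ 3 * (1 / (48 * (d : ℝ) ^ 2 * s))) = d * s / 48 := by
      field_simp; rw [← hs2]
    rw [e1] at h2
    rw [e2] at h1
    have h5 := (abs_le.mp h1).2
    have h6 := (abs_le.mp h2).2
    have h7 : (d : ℝ) * s * 16 ≤ d ^ 2 * s := by nlinarith [mul_pos hd0 hs0]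
    have h8 : (d : ℝ) * 4 ≤ d * s := by nlinarith
    linarith

end Par
end
end FeasLB


namespace FeasLB
noncomputable section

/-- One step of the algorithm. -/
def stp {M : ℕ} {S R : Type} (alg : MemAlg M S R) (O : S → R) (μ : Fin M → Bool) : Fin M → Bool :=
  alg.update μ (alg.query μ) (O (alg.query μ))

lemma mem_eq_iter {M : ℕ} {S R : Type} (alg : MemAlg M S R) (O : S → R) (t : ℕ) :
    alg.mem O t = (stp alg O)^[t] (fun _ => false) := by
  induction t with
  | zero => rfl
  | succ t ih => rw [Function.iterate_succ_apply', ← ih]; rfl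

lemma iter_congr {M : ℕ} {S R : Type} (alg : MemAlg M S R) (O O' : S → R) (μ : Fin M → Bool)
    (N : ℕ) (h : ∀ s < N, O (alg.query ((stp alg O)^[s] μ)) = O' (alg.query ((stp alg O)^[s] μ))) :
    ∀ s ≤ N, (stp alg O)^[s] μ = (stp alg O')^[s] μ := by
  intro s
  induction s with
  | zero => intro _; rfl
  | succ s ih =>
    intro hs
    rw [Function.iterate_succ_apply', Function.iterate_succ_apply', ← ih (by omega)]
    unfold stp
    have := h s (by omega)
    unfold stp at this
    rw [this]

lemma exists_unit {B : ℕ} (F : Finset (EuclideanSpace ℝ (Fin B))) (hF : F.card < B) :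
    ∃ u : EuclideanSpace ℝ (Fin B), ‖u‖ = 1 ∧ ∀ f ∈ F, ⟪u, f⟫ = 0 := by
  have h1 := finrank_span_finset_le_card (R := ℝ) F
  have h2 := Submodule.finrank_add_finrank_orthogonal (𝕜 := ℝ) (Submodule.span ℝ (F : Set (EuclideanSpace ℝ (Fin B))))
  rw [finrank_euclideanSpace_fin] at h2
  unfold Set.finrank at h1
  have h3 : (Submodule.span ℝ (F : Set (EuclideanSpace ℝ (Fin B))))ᗮ ≠ ⊥ := by
    intro h
    rw [h, finrank_bot] at h2
    omega
  obtain ⟨y, hy, hy0⟩ := Submodule.exists_mem_ne_zero_of_ne_bot h3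
  refine ⟨(‖y‖⁻¹ : ℝ) • y, ?_, ?_⟩
  · rw [norm_smul, norm_inv, norm_norm, inv_mul_cancel₀ (norm_ne_zero_iff.mpr hy0)]
  · intro f hf
    rw [inner_smul_left, Submodule.mem_orthogonal' _ _ |>.mp hy f (Submodule.subset_span hf),
      mul_zero]

namespace Par

variable {d : ℕ} {π : Par d} {M : ℕ}
  (alg : MemAlg M (EuclideanSpace ℝ (Fin d)) (Option (EuclideanSpace ℝ (Fin d))))
  (A : Fin π.n → π.W → ℤ)

/-- First time at which the first `j` constraints are satisfied. -/
def tau (ζ : ℕ → Fin (2 * π.k) → ℤ) (j : ℕ) : ℕ :=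
  sInf {t | π.Pass A ζ j (alg.query (alg.mem (π.oracle A ζ j Finset.univ) t))}

/-- The query at that time. -/
def X (ζ : ℕ → Fin (2 * π.k) → ℤ) (j : ℕ) : EuclideanSpace ℝ (Fin d) :=
  alg.query (alg.mem (π.oracle A ζ j Finset.univ) (tau alg A ζ j))

lemma X_congr {ζ ζ' : ℕ → Fin (2 * π.k) → ℤ} {j : ℕ} (h : ∀ l < j, ζ l = ζ' l) :
    X alg A ζ j = X alg A ζ' j := by
  unfold X tau
  rw [oracle_congr_z h]
  simp only [Pass_congr_z h]

variable {alg A}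

lemma convex_pass {ζ : ℕ → Fin (2 * π.k) → ℤ} {J : ℕ} :
    Convex ℝ {x | π.Pass A ζ J x} := by
  have : {x | π.Pass A ζ J x} = Metric.closedBall 0 1 ∩
      ((⋂ i, {x | ⟪π.rvec (A i) i, x⟫ ≤ π.eta} ∩ {x | -π.eta ≤ ⟪π.rvec (A i) i, x⟫}) ∩
      ⋂ j, ⋂ (_ : j < J), {x | ⟪π.zvec ζ j, x⟫ ≤ -π.thr}) := by
    ext x
    simp only [Pass, Set.mem_setOf_eq, Set.mem_inter_iff, mem_closedBall_zero_iff, Set.mem_iInter,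
      inner_rvec, inner_zvec, abs_le]
    refine and_congr Iff.rfl (and_congr (forall_congr' fun i => and_comm) Iff.rfl)
  rw [this]
  have hl : ∀ g : EuclideanSpace ℝ (Fin d), IsLinearMap ℝ (fun x => ⟪g, x⟫) := fun g =>
    ⟨fun x y => inner_add_right _ _ _, fun c x => by simp [inner_smul_right]⟩
  refine (convex_closedBall _ _).inter (Convex.inter ?_ ?_)
  · exact convex_iInter fun i => (convex_halfSpace_le (hl _) _).inter (convex_halfSpace_ge (hl _) _)
  · exact convex_iInter fun j => convex_iInter fun _ => convex_halfSpace_le (hl _) _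

variable {T : ℕ}

lemma tau_spec (hsol : SolvesFeasibility d alg T (1 / (48 * (d : ℝ) ^ 2 * Real.sqrt d)))
    (hA : ∀ i q, 0 ≤ A i q ∧ A i q < (d : ℤ) ^ 4)
    {v : ℕ → EuclideanSpace ℝ (Fin (2 * π.k))} {J : ℕ} (hJ : J ≤ π.P * π.k)
    (hv : π.Orth v J) :
    π.Pass A (π.rnd v) J (X alg A (π.rnd v) J) ∧ tau alg A (π.rnd v) J ≤ T - 1 := by
  have h := hsol {x | π.Pass A (π.rnd v) J x} convex_pass ?_ (feasible hA hJ hv)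
    (π.oracle A (π.rnd v) J Finset.univ) isSep
  · refine ⟨?_, Nat.sInf_le h⟩
    exact Nat.sInf_mem (s := {t | π.Pass A (π.rnd v) J
      (alg.query (alg.mem (π.oracle A (π.rnd v) J Finset.univ) t))}) ⟨_, h⟩
  · intro x hx
    rw [mem_closedBall_zero_iff]
    exact hx.1

/-- Restriction of a vector to a block. -/
def xb (π : Par d) (p : Fin π.P) (x : EuclideanSpace ℝ (Fin d)) : EuclideanSpace ℝ (Fin (2 * π.k)) :=
  WithLp.toLp 2 (fun b => x (π.κ (Sum.inl (p, b))))

lemma exists_v (J : ℕ) (hJ : J ≤ π.P * π.k) :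
    ∃ v : ℕ → EuclideanSpace ℝ (Fin (2 * π.k)), π.Orth v J ∧
      ∀ j < J, ∀ l ≤ j, l / π.k = j / π.k →
        ⟪v j, π.xb (π.blk j) (X alg A (π.rnd v) l)⟫ = 0 := by
  classical
  induction J with
  | zero => exact ⟨fun _ => 0, fun j hj => absurd hj (Nat.not_lt_zero _),
      fun j hj => absurd hj (Nat.not_lt_zero _)⟩
  | succ J ih =>
    obtain ⟨v, hv, hx⟩ := ih (by omega)
    have hk := π.kpos
    set s := J / π.k * π.k with hs
    have hsJ : s + J % π.k = J := by rw [hs, mul_comm]; exact Nat.div_add_mod J π.k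
    have hmod := Nat.mod_lt J hk
    set F : Finset (EuclideanSpace ℝ (Fin (2 * π.k))) := (Finset.Ico s J).image v ∪
      (Finset.Icc s J).image (fun l => π.xb (π.blk J) (X alg A (π.rnd v) l)) with hF
    have hcard : F.card < 2 * π.k := by
      refine lt_of_le_of_lt (Finset.card_union_le _ _) ?_
      have h1 := Finset.card_image_le (s := Finset.Ico s J) (f := v)
      have h2 := Finset.card_image_le (s := Finset.Icc s J)
        (f := (fun l => π.xb (π.blk J) (X alg A (π.rnd v) l)))
      rw [Nat.card_Ico] at h1
      rw [Nat.card_Icc] at h2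
      omega
    obtain ⟨u, hu, huF⟩ := exists_unit F hcard
    have hsame : ∀ l ≤ J, l / π.k = J / π.k → s ≤ l := by
      intro l _ hl
      rw [hs, ← hl]
      exact Nat.div_mul_le_self l π.k
    have hold : ∀ l < J, Function.update v J u l = v l := by
      intro l hl
      rw [Function.update_of_ne (by omega)]
    have hrnd : ∀ l < J, π.rnd (Function.update v J u) l = π.rnd v l := by
      intro l hl
      funext b
      unfold rnd
      rw [hold l hl]
    have hX : ∀ l ≤ J, X alg A (π.rnd (Function.update v J u)) l = X alg A (π.rnd v) l := by
      intro l hl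
      exact X_congr alg A (fun i hi => hrnd i (by omega))
    have huv : ∀ l < J, l / π.k = J / π.k → ⟪u, v l⟫ = 0 := by
      intro l hl hl'
      apply huF
      rw [hF, Finset.mem_union]
      left
      exact Finset.mem_image_of_mem _ (Finset.mem_Ico.mpr ⟨hsame l hl.le hl', hl⟩)
    refine ⟨Function.update v J u, ?_, ?_⟩
    · intro j hj l hl hjl
      rcases Nat.lt_succ_iff_lt_or_eq.mp hj with hj | rfl
      · rcases Nat.lt_succ_iff_lt_or_eq.mp hl with hl | rfl
        · rw [hold j hj, hold l hl]
          exact hv j hj l hl hjl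
        · rw [hold j hj, Function.update_self, real_inner_comm, huv j hj hjl, if_neg (by omega)]
      · rcases Nat.lt_succ_iff_lt_or_eq.mp hl with hl | rfl
        · rw [hold l hl, Function.update_self, huv l hl hjl.symm, if_neg (by omega)]
        · rw [Function.update_self, real_inner_self_eq_norm_sq, hu]; simp
    · intro j hj l hl hjl
      rw [hX l (by omega)]
      rcases Nat.lt_succ_iff_lt_or_eq.mp hj with hj | rfl
      · rw [hold j hj]
        exact hx j hj l hl hjl
      · rw [Function.update_self]
        apply huF
        rw [hF, Finset.mem_union]
        right
        exact Finset.mem_image_of_mem (fun l => π.xb (π.blk j) (X alg A (π.rnd v) l))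
          (Finset.mem_Icc.mpr ⟨hsame l hl hjl, hl⟩)

lemma adversary (hsol : SolvesFeasibility d alg T (1 / (48 * (d : ℝ) ^ 2 * Real.sqrt d)))
    (hA : ∀ i q, 0 ≤ A i q ∧ A i q < (d : ℤ) ^ 4) :
    ∃ (ζ : ℕ → Fin (2 * π.k) → ℤ) (t : ℕ → ℕ) (x : ℕ → EuclideanSpace ℝ (Fin d)),
      (∀ s, x s = alg.query (alg.mem (π.oracle A ζ (π.P * π.k) Finset.univ) s)) ∧
      (∀ j < π.P * π.k, ∀ b, |ζ j b| ≤ (d : ℤ) ^ 3) ∧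
      (∀ j ≤ π.P * π.k, t j ≤ T - 1 ∧ π.Pass A ζ j (x (t j)) ∧
        ∀ s < t j, ¬ π.Pass A ζ j (x s)) ∧
      (∀ j < π.P * π.k, ∀ l ≤ j, l / π.k = j / π.k → |π.zdot ζ j (x (t l))| ≤ 2 * π.k) := by
  obtain ⟨v, hv, hx⟩ := exists_v (alg := alg) (A := A) (π.P * π.k) le_rfl
  have hvJ : ∀ j ≤ π.P * π.k, π.Orth v j := fun j hj a ha b hb hab =>
    hv a (ha.trans_le hj) b (hb.trans_le hj) hab
  have hagree : ∀ j ≤ π.P * π.k, ∀ s ≤ tau alg A (π.rnd v) j,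
      alg.mem (π.oracle A (π.rnd v) j Finset.univ) s =
      alg.mem (π.oracle A (π.rnd v) (π.P * π.k) Finset.univ) s := by
    intro j hj s hs
    rw [mem_eq_iter, mem_eq_iter]
    refine iter_congr alg _ _ _ (tau alg A (π.rnd v) j) ?_ s hs
    intro s hs
    apply oracle_mono hj
    rw [← mem_eq_iter]
    exact Nat.notMem_of_lt_sInf hs
  have hXx : ∀ j ≤ π.P * π.k, X alg A (π.rnd v) j =
      alg.query (alg.mem (π.oracle A (π.rnd v) (π.P * π.k) Finset.univ)
        (tau alg A (π.rnd v) j)) := by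
    intro j hj
    unfold X
    rw [hagree j hj _ le_rfl]
  refine ⟨π.rnd v, tau alg A (π.rnd v), _, fun s => rfl, ?_, ?_, ?_⟩
  · intro j hj b
    apply rnd_abs
    have := hv j hj j hj rfl
    rw [real_inner_self_eq_norm_sq, if_pos rfl] at this
    nlinarith [norm_nonneg (v j)]
  · intro j hj
    have h := tau_spec hsol hA hj (hvJ j hj)
    refine ⟨h.2, ?_, ?_⟩
    · rw [← hXx j hj]; exact h.1
    · intro s hs
      rw [← hagree j hj s hs.le]
      exact Nat.notMem_of_lt_sInf hs
  · intro j hj l hl hlj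
    rw [← hXx l (by omega)]
    have hn := (tau_spec hsol hA (show l ≤ π.P * π.k by omega) (hvJ l (by omega))).1.1
    have h1 := rnd_err (π := π) (v := v) (j := j)
      (fun b => X alg A (π.rnd v) l (π.κ (Sum.inl (π.blk j, b))))
      (fun b => (coord_le _ _).trans hn)
    have h2 := hx j hj l hl hlj
    have h3 : ∑ b, v j b * X alg A (π.rnd v) l (π.κ (Sum.inl (π.blk j, b))) = 0 := by
      rw [← h2]
      simp [xb, PiLp.inner_apply, mul_comm]
    rw [h3, mul_zero, sub_zero] at h1
    exact h1

end Par
end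
end FeasLB


namespace FeasLB
noncomputable section
namespace Par

variable {d : ℕ} {π : Par d} {M : ℕ}
  {alg : MemAlg M (EuclideanSpace ℝ (Fin d)) (Option (EuclideanSpace ℝ (Fin d)))}

lemma thr_gt (π : Par d) : 2 * (π.k : ℝ) < π.thr ∧
    π.eta * (d : ℝ) ^ 4 * 2 + π.k * (2 * π.k) < π.thr := by
  have hd16 : (16 : ℝ) ≤ d := by exact_mod_cast π.hd
  have hd0 : (0 : ℝ) < d := by linarith
  have hk : 64 * (π.k : ℝ) ≤ d := by
    have : 64 * π.k ≤ d := by have := π.hK; nlinarith [π.Ppos, π.kpos]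
    exact_mod_cast this
  have hk0 : (0 : ℝ) ≤ π.k := by positivity
  unfold thr eta
  set s := Real.sqrt d with hs
  have hs2 : s ^ 2 = d := Real.sq_sqrt hd0.le
  have hs0 : 0 < s := Real.sqrt_pos.mpr hd0
  have hs4 : 4 ≤ s := by
    rw [hs]; apply Real.le_sqrt_of_sq_le; norm_num; exact π.hd
  have hk2 : (π.k : ℝ) * (2 * π.k) ≤ d ^ 2 := by nlinarith
  have h4 : (d : ℝ) ^ 2 * 4 ≤ d ^ 2 * s := by nlinarith [pow_pos hd0 2]
  have h5 : (d : ℝ) ≤ d ^ 2 := by nlinarith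
  constructor
  · linarith
  · have : 1 / (24 * (d : ℝ) * s) * (d : ℝ) ^ 4 * 2 = d ^ 2 * s / 12 := by
      field_simp; rw [← hs2]; ring
    rw [this]
    have := pow_pos hd0 2
    linarith

/-- Matrix box. -/
def Box (π : Par d) : Finset (Fin π.n → π.W → ℤ) :=
  Fintype.piFinset (fun _ => Fintype.piFinset (fun _ => Finset.Ico 0 ((d : ℤ) ^ 4)))

lemma mem_Box {A : Fin π.n → π.W → ℤ} :
    A ∈ π.Box ↔ ∀ i q, 0 ≤ A i q ∧ A i q < (d : ℤ) ^ 4 := by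
  simp [Box, Fintype.mem_piFinset]

lemma card_Box (π : Par d) : π.Box.card = ((d ^ 4) ^ (π.P * (2 * π.k))) ^ π.n := by
  simp only [Box, Fintype.card_piFinset, Finset.prod_const, Finset.card_univ, Int.card_Ico,
    Fintype.card_prod, Fintype.card_fin]
  congr 2

/-- extension of a vector to the blocks -/
def Zx (π : Par d) (ζ : ℕ → Fin (2 * π.k) → ℤ) (j : ℕ) (q : π.W) : ℤ :=
  if q.1 = π.blk j then ζ j q.2 else 0

lemma sum_Zx (ζ : ℕ → Fin (2 * π.k) → ℤ) (j : ℕ) (x : EuclideanSpace ℝ (Fin d)) :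
    ∑ q, (π.Zx ζ j q : ℝ) * x (π.κ (Sum.inl q)) = π.zdot ζ j x := by
  simp only [Zx, Fintype.sum_prod_type, zdot]
  rw [Finset.sum_eq_single (π.blk j)]
  · simp
  · intro p _ hp
    simp [hp]
  · simp

lemma rdot_shift (r : π.W → ℤ) (i : Fin π.n) (ζ : ℕ → Fin (2 * π.k) → ℤ) (a : ℕ)
    (c : Fin π.k → Bool) (x : EuclideanSpace ℝ (Fin d)) :
    (d : ℝ) ^ 4 * π.rdot (fun q => r q + ∑ l : Fin π.k, if c l then π.Zx ζ (a + l) q else 0) i x =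
      (d : ℝ) ^ 4 * π.rdot r i x + ∑ l : Fin π.k, if c l then π.zdot ζ (a + l) x else 0 := by
  have hd : (d : ℝ) ≠ 0 := by have := π.hd; positivity
  have h1 : ∑ l : Fin π.k, (if c l then π.zdot ζ (a + l) x else 0) =
      ∑ q, ((∑ l : Fin π.k, if c l then π.Zx ζ (a + l) q else 0 : ℤ) : ℝ)
        * x (π.κ (Sum.inl q)) := by
    simp only [Int.cast_sum, Finset.sum_mul]
    rw [Finset.sum_comm]
    refine Finset.sum_congr rfl fun l _ => ?_
    by_cases h : c l = true
    · simp [h, sum_Zx]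
    · simp [h]
  rw [h1]
  unfold rdot
  rw [mul_add, mul_add, Finset.mul_sum, Finset.mul_sum, add_right_comm, ← Finset.sum_add_distrib]
  congr 1
  refine Finset.sum_congr rfl fun q _ => ?_
  push_cast
  field_simp

/-- The counting lemma. -/
lemma count (ζ : ℕ → Fin (2 * π.k) → ℤ) (a : ℕ) (ha : ∀ l < π.k, ∀ b, |ζ (a + l) b| ≤ (d : ℤ) ^ 3)
    (I : Finset (Fin π.n)) (m : ℕ) (hI : I.card ≤ m)
    (w : (Fin π.n → π.W → ℤ) → Fin π.k → EuclideanSpace ℝ (Fin d))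
    (hw : ∀ A A' : Fin π.n → π.W → ℤ, (∀ i ∈ I, A i = A' i) → w A = w A')
    (S : Finset (Fin π.n → π.W → ℤ)) (hS : S ⊆ π.Box)
    (h1 : ∀ A ∈ S, ∀ l, ∀ i ∉ I, |π.rdot (A i) i (w A l)| ≤ π.eta)
    (h2 : ∀ A ∈ S, ∀ l : Fin π.k, π.zdot ζ (a + l) (w A l) ≤ -π.thr)
    (h3 : ∀ A ∈ S, ∀ l l' : Fin π.k, l < l' → |π.zdot ζ (a + l') (w A l)| ≤ 2 * π.k) :
    S.card * (2 ^ π.k) ^ (π.n - m) ≤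
      ((d ^ 4 + 2 * π.k * d ^ 3) ^ (π.P * (2 * π.k))) ^ π.n := by
  classical
  set C : Finset (Fin π.n → Fin π.k → Bool) :=
    Fintype.piFinset (fun i => if i ∈ I then {fun _ => false} else Finset.univ) with hC
  have hCI : ∀ c ∈ C, ∀ i ∈ I, ∀ l, c i l = false := by
    intro c hc i hi l
    have := (Fintype.mem_piFinset.mp hc) i
    rw [if_pos hi, Finset.mem_singleton] at this
    rw [this]
  have hCcard : (2 ^ π.k) ^ (π.n - m) ≤ C.card := by
    rw [hC, Fintype.card_piFinset]
    have : ∀ i, (if i ∈ I then ({fun _ => false} : Finset (Fin π.k → Bool))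
        else Finset.univ).card = if i ∈ I then 1 else 2 ^ π.k := by
      intro i
      split_ifs <;> simp
    simp only [this]
    rw [Finset.prod_ite]
    simp only [Finset.prod_const_one, one_mul, Finset.prod_const]
    apply Nat.pow_le_pow_right (by positivity)
    have hc : (Finset.univ.filter (fun i => i ∉ I)).card = π.n - I.card := by
      have : Finset.univ.filter (fun i => i ∉ I) = Iᶜ := by ext; simp
      rw [this, Finset.card_compl, Fintype.card_fin]
    rw [hc]
    omega
  set Big : Finset (Fin π.n → π.W → ℤ) :=
    Fintype.piFinset (fun _ => Fintype.piFinset (fun _ =>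
      Finset.Ico (-((π.k : ℤ) * (d : ℤ) ^ 3)) ((d : ℤ) ^ 4 + (π.k : ℤ) * (d : ℤ) ^ 3))) with hBig
  have hBigcard : Big.card = ((d ^ 4 + 2 * π.k * d ^ 3) ^ (π.P * (2 * π.k))) ^ π.n := by
    simp only [hBig, Fintype.card_piFinset, Finset.prod_const, Finset.card_univ, Int.card_Ico,
      Fintype.card_prod, Fintype.card_fin]
    congr 2
    have : ((d : ℤ) ^ 4 + (π.k : ℤ) * (d : ℤ) ^ 3 - -((π.k : ℤ) * (d : ℤ) ^ 3)) =
      ((d ^ 4 + 2 * π.k * d ^ 3 : ℕ) : ℤ) := by push_cast; ring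
    rw [this, Int.toNat_natCast]
  set Φ : (Fin π.n → π.W → ℤ) × (Fin π.n → Fin π.k → Bool) → (Fin π.n → π.W → ℤ) :=
    fun y i q => y.1 i q + ∑ l : Fin π.k, if y.2 i l then π.Zx ζ (a + l) q else 0 with hΦ
  have hmain : (S ×ˢ C).card ≤ Big.card := by
    apply Finset.card_le_card_of_injOn Φ
    · rintro ⟨A, c⟩ hy
      rw [Finset.mem_coe, Finset.mem_product] at hy
      rw [Finset.mem_coe, hBig, Fintype.mem_piFinset]
      intro i
      rw [Fintype.mem_piFinset]
      intro q
      have hb := mem_Box.mp (hS hy.1) i q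
      have hsum : |∑ l : Fin π.k, if c i l then π.Zx ζ (a + l) q else 0| ≤ π.k * (d : ℤ) ^ 3 := by
        refine (Finset.abs_sum_le_sum_abs _ _).trans ?_
        refine (Finset.sum_le_card_nsmul _ _ ((d : ℤ) ^ 3) ?_).trans (by simp)
        intro l _
        have h0 : (0 : ℤ) ≤ (d : ℤ) ^ 3 := by positivity
        unfold Zx
        split_ifs
        · exact ha l l.2 _
        · simpa using h0
        · simpa using h0
      have := abs_le.mp hsum
      rw [Finset.mem_Ico]
      simp only [hΦ]
      dsimp only at hb
      constructor <;> linarith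
    · rintro ⟨A, c⟩ hy ⟨A', c'⟩ hy' heq
      rw [Finset.mem_coe, Finset.mem_product] at hy hy'
      obtain ⟨hAS, hcC⟩ := hy
      obtain ⟨hAS', hcC'⟩ := hy'
      dsimp only at hAS hcC hAS' hcC'
      have heq' : ∀ i, (fun q => A i q + ∑ l : Fin π.k, if c i l then π.Zx ζ (a + l) q else 0) =
          (fun q => A' i q + ∑ l : Fin π.k, if c' i l then π.Zx ζ (a + l) q else 0) := by
        intro i
        exact congrFun heq i
      have hAI : ∀ i ∈ I, A i = A' i := by
        intro i hi
        have := heq' i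
        simpa [hCI c hcC i hi, hCI c' hcC' i hi] using this
      have hww := hw A A' hAI
      have hcc : c = c' := by
        funext i
        by_cases hi : i ∈ I
        · funext l
          rw [hCI c hcC i hi, hCI c' hcC' i hi]
        funext l
        induction l using WellFoundedLT.induction with
        | ind l ih =>
        by_contra hne
        set x := w A l with hx
        have hx' : w A' l = x := by rw [← hww]
        have e := congrArg (fun r => (d : ℝ) ^ 4 * π.rdot r i x) (heq' i)
        simp only [rdot_shift] at e
        set f : Fin π.k → ℝ := fun l' => (if c i l' then π.zdot ζ (a + l') x else 0) -
          (if c' i l' then π.zdot ζ (a + l') x else 0) with hf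
        have hsum : ∑ l', f l' = (d : ℝ) ^ 4 * (π.rdot (A' i) i x - π.rdot (A i) i x) := by
          rw [hf, Finset.sum_sub_distrib]
          linarith
        have hb1 := h1 A hAS l i hi
        have hb2 := h1 A' hAS' l i hi
        rw [hx'] at hb2
        have hz := h2 A hAS l
        have hz' := h3 A hAS l
        rw [← hx] at hb1 hz
        simp only [← hx] at hz'
        have hthr := π.thr_gt
        have hrest : |∑ l' ∈ Finset.univ.erase l, f l'| ≤ π.k * (2 * π.k) := by
          refine (Finset.abs_sum_le_sum_abs _ _).trans ?_
          refine (Finset.sum_le_card_nsmul _ _ ((2 * π.k : ℝ)) ?_).trans ?_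
          · intro l' hl'
            have hne' := Finset.ne_of_mem_erase hl'
            rcases lt_or_gt_of_ne hne' with hlt | hgt
            · have : f l' = 0 := by simp only [hf]; rw [ih l' hlt]; simp
              rw [this]; simp
            · have := hz' l' hgt
              simp only [hf]
              split_ifs
              · simp
              · simpa using this
              · simpa using this
              · simp
          · rw [nsmul_eq_mul]
            apply mul_le_mul_of_nonneg_right _ (by positivity)
            have := Finset.card_le_univ (Finset.univ.erase l)
            rw [Fintype.card_fin] at this
            exact_mod_cast this
        have hfl : π.thr ≤ |f l| := by
          simp only [hf]
          have : π.thr ≤ |π.zdot ζ (a + l) x| := by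
            rw [le_abs]; right; linarith
          split_ifs with hc1 hc2 hc2
          · exact absurd (hc1.trans hc2.symm) hne
          · simpa using this
          · simpa using this
          · exact absurd ((Bool.not_eq_true _ ▸ hc1).trans (Bool.not_eq_true _ ▸ hc2).symm) hne
        have hsplit := Finset.add_sum_erase Finset.univ f (Finset.mem_univ l)
        have hd4 : (0 : ℝ) ≤ (d : ℝ) ^ 4 := by positivity
        have htot : |∑ l', f l'| ≤ π.eta * (d : ℝ) ^ 4 * 2 := by
          rw [hsum, abs_mul, abs_of_nonneg hd4]
          have := abs_sub (π.rdot (A' i) i x) (π.rdot (A i) i x)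
          nlinarith
        have : |f l| ≤ |∑ l', f l'| + |∑ l' ∈ Finset.univ.erase l, f l'| := by
          have : f l = ∑ l', f l' - ∑ l' ∈ Finset.univ.erase l, f l' := by linarith
          rw [this]
          exact abs_sub _ _
        linarith [hthr.2]
      subst hcc
      have : A = A' := by
        funext i q
        have := congrFun (heq' i) q
        simpa using this
      rw [this]
  rw [Finset.card_product, hBigcard] at hmain
  exact (Nat.mul_le_mul_left _ hCcard).trans hmain

end Par
end
end FeasLB


namespace FeasLB
noncomputable section

namespace Par

variable {d : ℕ} {π : Par d} {M : ℕ}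
  {alg : MemAlg M (EuclideanSpace ℝ (Fin d)) (Option (EuclideanSpace ℝ (Fin d)))}
  {A : Fin π.n → π.W → ℤ} {T : ℕ}

lemma Pass_mono {ζ : ℕ → Fin (2 * π.k) → ℤ} {J J' : ℕ} (h : J ≤ J')
    {x : EuclideanSpace ℝ (Fin d)} (hx : π.Pass A ζ J' x) : π.Pass A ζ J x :=
  ⟨hx.1, hx.2.1, fun j hj => hx.2.2 j (hj.trans_le h)⟩

lemma t_strict {ζ : ℕ → Fin (2 * π.k) → ℤ} {t : ℕ → ℕ} {x : ℕ → EuclideanSpace ℝ (Fin d)}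
    (h3 : ∀ j ≤ π.P * π.k, t j ≤ T - 1 ∧ π.Pass A ζ j (x (t j)) ∧
        ∀ s < t j, ¬ π.Pass A ζ j (x s))
    (h4 : ∀ j < π.P * π.k, ∀ l ≤ j, l / π.k = j / π.k → |π.zdot ζ j (x (t l))| ≤ 2 * π.k)
    (j : ℕ) (hj : j < π.P * π.k) : t j < t (j + 1) := by
  have a1 := h3 (j + 1) hj
  have a2 := h3 j hj.le
  have hle : t j ≤ t (j + 1) := by
    by_contra hc
    exact a2.2.2 _ (not_le.mp hc) (Pass_mono (Nat.le_succ j) a1.2.1)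
  refine lt_of_le_of_ne hle fun he => ?_
  have b1 := a1.2.1.2.2 j (Nat.lt_succ_self j)
  rw [← he] at b1
  have b2 := (abs_le.mp (h4 j hj j le_rfl rfl)).1
  have b3 := (thr_gt π).1
  linarith

lemma T_gt (π : Par d) (hsol : SolvesFeasibility d alg T (1 / (48 * (d : ℝ) ^ 2 * Real.sqrt d))) :
    π.P * π.k < T := by
  have hd := π.hd
  obtain ⟨ζ, t, x, -, -, h3, h4⟩ := adversary (π := π) (A := fun _ _ => 0) hsol
    (by intro i q; refine ⟨le_rfl, by positivity⟩)
  have key : ∀ j ≤ π.P * π.k, j ≤ t j := by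
    intro j
    induction j with
    | zero => intro _; exact Nat.zero_le _
    | succ j ih =>
      intro hj
      have := t_strict h3 h4 j hj
      have := ih (by omega)
      omega
  have h5 := key _ le_rfl
  have h6 := (h3 _ le_rfl).1
  have : 0 < π.P * π.k := Nat.mul_pos π.Ppos π.kpos
  omega

abbrev Code (π : Par d) (M m : ℕ) : Type :=
  Fin π.P × (Fin M → Bool) × (Fin (π.P * π.k) → Fin (2 * π.k) → ℤ) × Finset (Fin π.n) ×
    (Fin π.k → Fin (m + 1))

/-- extension by zero -/
def ext (π : Par d) (z : Fin (π.P * π.k) → Fin (2 * π.k) → ℤ) (j : ℕ) : Fin (2 * π.k) → ℤ :=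
  if h : j < π.P * π.k then z ⟨j, h⟩ else 0

def wit {m : ℕ} (alg : MemAlg M (EuclideanSpace ℝ (Fin d)) (Option (EuclideanSpace ℝ (Fin d))))
    (c : Code π M m) (A : Fin π.n → π.W → ℤ) (l : Fin π.k) : EuclideanSpace ℝ (Fin d) :=
  alg.query ((stp alg (π.oracle A (π.ext c.2.2.1) (π.P * π.k) c.2.2.2.1))^[(c.2.2.2.2 l : ℕ)] c.2.1)

def Good {m : ℕ} (alg : MemAlg M (EuclideanSpace ℝ (Fin d)) (Option (EuclideanSpace ℝ (Fin d))))
    (c : Code π M m) (A : Fin π.n → π.W → ℤ) : Prop :=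
  c.2.2.2.1.card ≤ m ∧
  (∀ l, ∀ i, |π.rdot (A i) i (wit alg c A l)| ≤ π.eta) ∧
  (∀ l : Fin π.k, π.zdot (π.ext c.2.2.1) (c.1 * π.k + l) (wit alg c A l) ≤ -π.thr) ∧
  (∀ l l' : Fin π.k, l < l' →
    |π.zdot (π.ext c.2.2.1) (c.1 * π.k + l') (wit alg c A l)| ≤ 2 * π.k)

def Codes (π : Par d) (M m : ℕ) : Finset (Code π M m) :=
  Finset.univ ×ˢ Finset.univ ×ˢ
    (Fintype.piFinset fun _ => Fintype.piFinset fun _ => Finset.Icc (-((d : ℤ) ^ 3)) ((d : ℤ) ^ 3)) ×ˢ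
    Finset.univ ×ˢ Finset.univ

lemma card_Codes (π : Par d) (M m : ℕ) : (π.Codes M m).card =
    π.P * (2 ^ M * (((2 * d ^ 3 + 1) ^ (2 * π.k)) ^ (π.P * π.k) * (2 ^ π.n * (m + 1) ^ π.k))) := by
  have : ((d : ℤ) ^ 3 + 1 + ((d : ℤ) ^ 3)).toNat = 2 * d ^ 3 + 1 := by
    have : ((d : ℤ) ^ 3 + 1 + ((d : ℤ) ^ 3)) = ((2 * d ^ 3 + 1 : ℕ) : ℤ) := by push_cast; ring
    rw [this, Int.toNat_natCast]
  simp [Codes, Finset.card_product, Fintype.card_piFinset, this]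

lemma pigeon (t : ℕ → ℕ) (k m : ℕ) : ∀ P, (∀ p < P, t (p * k) + m < t ((p + 1) * k)) →
    P * m + P ≤ t (P * k) := by
  intro P
  induction P with
  | zero => intro _; simp
  | succ P ih =>
    intro h
    have h1 := ih (fun p hp => h p (by omega))
    have h2 := h P (by omega)
    rw [Nat.succ_mul P m]
    omega

lemma encode {m : ℕ} (hsol : SolvesFeasibility d alg T (1 / (48 * (d : ℝ) ^ 2 * Real.sqrt d)))
    (hT : T ≤ π.P * m) (hA : A ∈ π.Box) : ∃ c ∈ π.Codes M m, Good alg c A := by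
  classical
  obtain ⟨ζ, t, x, h1, h2, h3, h4⟩ := adversary hsol (mem_Box.mp hA)
  have hk := π.kpos
  have hmono : ∀ a b, a ≤ b → b ≤ π.P * π.k → t a ≤ t b := by
    intro a b hab
    induction b, hab using Nat.le_induction with
    | base => intro _; exact le_rfl
    | succ b hab ih =>
      intro hb
      exact (ih (by omega)).trans (t_strict h3 h4 b (by omega)).le
  obtain ⟨p, hp, hpm⟩ : ∃ p < π.P, t ((p + 1) * π.k) ≤ t (p * π.k) + m := by
    by_contra hc
    push Not at hc
    have a1 := pigeon t π.k m π.P hc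
    have a2 := (h3 _ le_rfl).1
    have := π.Ppos
    omega
  have hpK : (p + 1) * π.k ≤ π.P * π.k := Nat.mul_le_mul_right _ hp
  have hpk : (p + 1) * π.k = p * π.k + π.k := by ring
  set z : Fin (π.P * π.k) → Fin (2 * π.k) → ℤ := fun j => ζ j with hz
  have hext : ∀ j < π.P * π.k, ζ j = π.ext z j := by
    intro j hj
    simp [ext, hj, hz]
  set S := t ((p + 1) * π.k) - t (p * π.k) with hS
  set f : ℕ → Finset (Fin π.n) := fun s =>
    if h : (π.viol A Finset.univ (x (t (p * π.k) + s))).Nonempty then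
      {(π.viol A Finset.univ (x (t (p * π.k) + s))).min' h} else ∅ with hf
  set I := (Finset.range S).biUnion f with hI
  have hfc : ∀ s, (f s).card ≤ 1 := by
    intro s
    simp only [hf]
    split_ifs <;> simp
  have hIc : I.card ≤ m := by
    refine Finset.card_biUnion_le.trans ?_
    refine (Finset.sum_le_card_nsmul _ _ 1 (fun s _ => hfc s)).trans ?_
    simp
    omega
  have htl : ∀ l : Fin π.k, t (p * π.k) ≤ t (p * π.k + l + 1) ∧
      t (p * π.k + l + 1) ≤ t ((p + 1) * π.k) := by
    intro l
    have := l.2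
    exact ⟨hmono _ _ (by omega) (by omega), hmono _ _ (by omega) (by omega)⟩
  set c : Code π M m := (⟨p, hp⟩, alg.mem (π.oracle A ζ (π.P * π.k) Finset.univ) (t (p * π.k)), z, I,
    fun l => ⟨t (p * π.k + l + 1) - t (p * π.k), by have := htl l; omega⟩) with hc
  have hx : ∀ s, x (t (p * π.k) + s) =
      alg.query ((stp alg (π.oracle A ζ (π.P * π.k) Finset.univ))^[s]
        (alg.mem (π.oracle A ζ (π.P * π.k) Finset.univ) (t (p * π.k)))) := by
    intro s
    rw [h1, mem_eq_iter, mem_eq_iter, add_comm, Function.iterate_add_apply]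
  have hwit : ∀ l, wit alg c A l = x (t (p * π.k + l + 1)) := by
    intro l
    have hl := htl l
    have e1 : t (p * π.k + l + 1) = t (p * π.k) + (t (p * π.k + l + 1) - t (p * π.k)) := by omega
    rw [e1, hx]
    simp only [wit, hc]
    rw [← oracle_congr_z hext]
    congr 1
    symm
    refine iter_congr alg _ _ _ S ?_ _ (by omega)
    intro s hs
    rw [← hx]
    refine oracle_restrict ?_
    intro _ hne
    rw [hI, Finset.mem_biUnion]
    refine ⟨s, Finset.mem_range.mpr hs, ?_⟩
    simp only [hf]
    rw [dif_pos hne]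
    simp
  refine ⟨c, ?_, hIc, ?_, ?_, ?_⟩
  · simp only [Codes, hc, Finset.mem_product, Finset.mem_univ, true_and, and_true,
      Fintype.mem_piFinset, Finset.mem_Icc]
    intro j b
    exact abs_le.mp (h2 j j.2 b)
  · intro l i
    rw [hwit]
    have := l.2
    exact (h3 (p * π.k + l + 1) (by omega)).2.1.2.1 i
  · intro l
    have := l.2
    rw [hwit, ← zdot_congr (hext _ (show p * π.k + l < π.P * π.k by omega))]
    exact (h3 (p * π.k + l + 1) (by omega)).2.1.2.2 _ (by omega)
  · intro l l' hll
    have := l'.2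
    have hll' : (l : ℕ) < l' := hll
    rw [hwit, ← zdot_congr (hext _ (show p * π.k + l' < π.P * π.k by omega))]
    refine h4 _ (by omega) _ (by omega) ?_
    have q1 : ∀ u < π.k, (p * π.k + u) / π.k = p := by
      intro u hu
      rw [mul_comm, Nat.mul_add_div hk, Nat.div_eq_of_lt hu, add_zero]
    rw [q1 l' l'.2, add_assoc, q1 _ (by omega)]

/-- The main counting inequality. -/
lemma main_count (π : Par d) (m : ℕ)
    (hsol : SolvesFeasibility d alg T (1 / (48 * (d : ℝ) ^ 2 * Real.sqrt d)))
    (hT : T ≤ π.P * m) :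
    ((d ^ 4) ^ (π.P * (2 * π.k))) ^ π.n * (2 ^ π.k) ^ (π.n - m) ≤
      (π.P * (2 ^ M * (((2 * d ^ 3 + 1) ^ (2 * π.k)) ^ (π.P * π.k) *
        (2 ^ π.n * (m + 1) ^ π.k)))) *
      ((d ^ 4 + 2 * π.k * d ^ 3) ^ (π.P * (2 * π.k))) ^ π.n := by
  classical
  rw [← card_Box, ← card_Codes]
  have hsub : π.Box ⊆ (π.Codes M m).biUnion (fun c => π.Box.filter (Good alg c)) := by
    intro A hA
    obtain ⟨c, hc, hg⟩ := encode hsol hT hA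
    exact Finset.mem_biUnion.mpr ⟨c, hc, Finset.mem_filter.mpr ⟨hA, hg⟩⟩
  have h1 := (Finset.card_le_card hsub).trans Finset.card_biUnion_le
  refine (Nat.mul_le_mul_right _ h1).trans ?_
  rw [Finset.sum_mul]
  refine (Finset.sum_le_card_nsmul _ _ (((d ^ 4 + 2 * π.k * d ^ 3) ^ (π.P * (2 * π.k))) ^ π.n)
    ?_).trans (le_of_eq (by simp))
  intro c hc
  by_cases hm : c.2.2.2.1.card ≤ m
  · refine count (π.ext c.2.2.1) (c.1 * π.k) ?_ c.2.2.2.1 m hm (wit alg c) ?_ _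
      (Finset.filter_subset _ _) ?_ ?_ ?_
    · intro l _ b
      unfold ext
      split_ifs with h
      · simp only [Codes, Finset.mem_product, Finset.mem_univ, true_and, and_true,
          Fintype.mem_piFinset, Finset.mem_Icc] at hc
        exact abs_le.mpr (hc _ b)
      · simp
    · intro A A' hAA
      funext l
      unfold wit
      rw [oracle_congr_A hAA]
    · intro A hA l i _
      exact (Finset.mem_filter.mp hA).2.2.1 l i
    · intro A hA
      exact (Finset.mem_filter.mp hA).2.2.2.1
    · intro A hA
      exact (Finset.mem_filter.mp hA).2.2.2.2
  · have : π.Box.filter (Good alg c) = ∅ := by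
      refine Finset.filter_eq_empty_iff.mpr ?_
      intro A _ hg
      exact hm hg.1
    rw [this]
    simp

end Par

end
end FeasLB


namespace FeasLB
noncomputable section

def ctr (d : ℕ) (σ : Fin d → Bool) : EuclideanSpace ℝ (Fin d) :=
  WithLp.toLp 2 (fun i => if σ i then 1 / (2 * Real.sqrt d) else -(1 / (2 * Real.sqrt d)))

lemma norm_ctr {d : ℕ} (hd : 1 ≤ d) (σ : Fin d → Bool) : ‖ctr d σ‖ = 1 / 2 := by
  have h0 : (0 : ℝ) < d := by exact_mod_cast hd
  have h : ‖ctr d σ‖ ^ 2 = (1 / 2) ^ 2 := by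
    rw [EuclideanSpace.real_norm_sq_eq]
    have : ∀ i, (ctr d σ i) ^ 2 = 1 / (4 * d) := by
      intro i
      have hs := Real.sq_sqrt h0.le
      have h1 : (1 / (2 * Real.sqrt d)) ^ 2 = 1 / (4 * d) := by
        rw [div_pow, mul_pow, hs]; norm_num
      simp only [ctr]
      split_ifs
      · exact h1
      · rw [neg_sq]; exact h1
    simp only [this, Finset.sum_const, Finset.card_univ, Fintype.card_fin, nsmul_eq_mul]
    field_simp
    norm_num
  exact (sq_eq_sq₀ (norm_nonneg _) (by norm_num)).mp h

open Classical in
def ballO {d : ℕ} (c : EuclideanSpace ℝ (Fin d)) (ε : ℝ) (x : EuclideanSpace ℝ (Fin d)) :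
    Option (EuclideanSpace ℝ (Fin d)) :=
  if x ∈ Metric.closedBall c ε then none else some (x - c)

lemma ballO_sep {d : ℕ} (c : EuclideanSpace ℝ (Fin d)) (ε : ℝ) (hε : 0 < ε) :
    IsSeparationOracle (Metric.closedBall c ε) (ballO c ε) := by
  intro x
  unfold ballO
  split_ifs with h
  · exact ⟨fun _ => h, by simp⟩
  · refine ⟨by simp, ?_⟩
    intro g hg x' hx'
    obtain rfl := Option.some.inj hg
    rw [mem_closedBall_iff_norm] at h hx'
    have e : x - x' = (x - c) - (x' - c) := by abel
    rw [e, inner_sub_right, real_inner_self_eq_norm_sq]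
    have := real_inner_le_norm (x - c) (x' - c)
    push Not at h
    nlinarith [norm_nonneg (x - c), norm_nonneg (x' - c)]

lemma packing {d M T : ℕ} (hd : 1 ≤ d)
    {alg : MemAlg M (EuclideanSpace ℝ (Fin d)) (Option (EuclideanSpace ℝ (Fin d)))}
    (hsol : SolvesFeasibility d alg T (1 / (48 * (d : ℝ) ^ 2 * Real.sqrt d))) : d ≤ M := by
  have h1d : (1 : ℝ) ≤ d := by exact_mod_cast hd
  have hs1 : 1 ≤ Real.sqrt d := Real.one_le_sqrt.mpr h1d
  set ε : ℝ := 1 / (48 * (d : ℝ) ^ 2 * Real.sqrt d) with hε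
  have hεpos : 0 < ε := by positivity
  have hd2 : (1 : ℝ) ≤ (d : ℝ) ^ 2 := one_le_pow₀ h1d
  have hε1 : ε ≤ 1 / (48 * Real.sqrt d) := by
    rw [hε]
    apply one_div_le_one_div_of_le (by positivity)
    nlinarith
  have hε2 : ε ≤ 1 / 48 := by
    refine hε1.trans ?_
    apply one_div_le_one_div_of_le (by positivity)
    linarith
  have hmem : ∀ σ, alg.output (ballO (ctr d σ) ε) T ∈ Metric.closedBall (ctr d σ) ε := by
    intro σ
    refine hsol _ (convex_closedBall _ _) ?_ ⟨ctr d σ, ?_, le_rfl⟩ _ (ballO_sep _ _ hεpos)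
    · refine Metric.closedBall_subset_closedBall' ?_
      rw [dist_zero_right, norm_ctr hd]
      linarith
    · rw [mem_closedBall_zero_iff, norm_ctr hd]
      norm_num
  have hinj : Function.Injective (fun σ => alg.mem (ballO (ctr d σ) ε) (T - 1)) := by
    intro σ σ' h
    simp only at h
    have m1 := hmem σ
    have m2 := hmem σ'
    unfold MemAlg.output at m1 m2
    rw [← h] at m2
    have hdist : dist (ctr d σ) (ctr d σ') ≤ ε + ε := by
      refine (dist_triangle_right _ _ (alg.query (alg.mem (ballO (ctr d σ) ε) (T - 1)))).trans ?_
      exact add_le_add (by rw [dist_comm]; exact m1) (by rw [dist_comm]; exact m2)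
    by_contra hne
    obtain ⟨i, hi⟩ := Function.ne_iff.mp hne
    have h1 := Par.coord_le (ctr d σ - ctr d σ') i
    rw [← dist_eq_norm] at h1
    have h2 : |(ctr d σ - ctr d σ') i| = 1 / Real.sqrt d := by
      have hh : ((ctr d σ - ctr d σ') i) = ctr d σ i - ctr d σ' i := rfl
      have e : 1 / (2 * Real.sqrt d) + 1 / (2 * Real.sqrt d) = 1 / Real.sqrt d := by
        field_simp; norm_num
      have ep : 0 < 1 / Real.sqrt d := by positivity
      rw [hh]
      simp only [ctr]
      rcases hb : σ i <;> rcases hb' : σ' i <;> simp only [hb, hb'] at hi ⊢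
      · exact absurd rfl hi
      · simp only [Bool.false_eq_true, if_false, if_true]
        rw [show -(1 / (2 * Real.sqrt d)) - 1 / (2 * Real.sqrt d) = -(1 / Real.sqrt d) by
          rw [← e]; ring, abs_neg, abs_of_pos ep]
      · simp only [Bool.false_eq_true, if_false, if_true]
        rw [sub_neg_eq_add, e, abs_of_pos ep]
      · exact absurd rfl hi
    have h3 : ε + ε < 1 / Real.sqrt d := by
      have : 1 / (48 * Real.sqrt d) = (1 / 48) * (1 / Real.sqrt d) := by
        field_simp
      have ep : 0 < 1 / Real.sqrt d := by positivity
      linarith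
    linarith
  have := Fintype.card_le_of_injective _ hinj
  simp only [Fintype.card_fun, Fintype.card_bool, Fintype.card_fin] at this
  exact (Nat.pow_le_pow_iff_right (by norm_num)).mp this

end
end FeasLB


namespace FeasLB
noncomputable section

lemma log_count {d k P n m M : ℕ} (hd : 1 ≤ d) (hP : 1 ≤ P) (hmn : m ≤ n)
    (h : ((d ^ 4) ^ (P * (2 * k))) ^ n * (2 ^ k) ^ (n - m) ≤
      (P * (2 ^ M * (((2 * d ^ 3 + 1) ^ (2 * k)) ^ (P * k) *
        (2 ^ n * (m + 1) ^ k)))) *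
      ((d ^ 4 + 2 * k * d ^ 3) ^ (P * (2 * k))) ^ n) :
    (k : ℝ) * (n - m) * Real.log 2 ≤ Real.log P + M * Real.log 2 +
      2 * k * (P * k) * Real.log (2 * (d : ℝ) ^ 3 + 1) + n * Real.log 2 + k * Real.log (m + 1) +
      n * (2 * (P * k)) * (2 * k / d) := by
  have hd0 : (0 : ℝ) < d := by exact_mod_cast hd
  have hP0 : (0 : ℝ) < P := by exact_mod_cast hP
  have hm0 : (0 : ℝ) < (m : ℝ) + 1 := by positivity
  have h' : (((d : ℝ) ^ 4) ^ (P * (2 * k))) ^ n * (2 ^ k) ^ (n - m) ≤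
      (P * (2 ^ M * (((2 * (d : ℝ) ^ 3 + 1) ^ (2 * k)) ^ (P * k) *
        (2 ^ n * ((m : ℝ) + 1) ^ k)))) *
      (((d : ℝ) ^ 4 * (1 + 2 * k / d)) ^ (P * (2 * k))) ^ n := by
    have e : (d : ℝ) ^ 4 * (1 + 2 * k / d) = (d : ℝ) ^ 4 + 2 * k * (d : ℝ) ^ 3 := by
      field_simp
    rw [e]
    exact_mod_cast h
  have hq : (0 : ℝ) < 1 + 2 * k / d := by positivity
  have hl := Real.log_le_log (by positivity) h'
  have hz : (0 : ℝ) < 2 * (d : ℝ) ^ 3 + 1 := by positivity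
  rw [Real.log_mul (by positivity) (by positivity), Real.log_mul (by positivity) (by positivity),
    Real.log_mul (by positivity) (by positivity), Real.log_mul (by positivity) (by positivity),
    Real.log_mul (by positivity) (by positivity), Real.log_mul (by positivity) (by positivity)] at hl
  simp only [Real.log_pow] at hl
  rw [Real.log_mul (by positivity) (by positivity), Real.log_pow] at hl
  have hlq := Real.log_le_sub_one_of_pos hq
  push_cast [Nat.cast_sub hmn] at hl
  have : (n : ℝ) * (2 * (P * k)) * Real.log (1 + 2 * k / d) ≤ n * (2 * (P * k)) * (2 * k / d) :=
    mul_le_mul_of_nonneg_left (by linarith) (by positivity)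
  linarith

lemma mkPar {d k P n : ℕ} (hk : 0 < k) (hP : 0 < P) (h : P * (2 * k) + n ≤ d)
    (hK : 64 * (P * k) ≤ d) (hd : 16 ≤ d) : ∃ π : Par d, π.k = k ∧ π.P = P ∧ π.n = n := by
  obtain ⟨κ⟩ : Nonempty ((Fin P × Fin (2 * k)) ⊕ Fin n ↪ Fin d) :=
    Function.Embedding.nonempty_of_card_le (by simpa using h)
  exact ⟨⟨k, P, n, hk, hP, κ, hK, hd⟩, rfl, rfl, rfl⟩

lemma linear_bound {d M T : ℕ} (hd : 256 ≤ d)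
    {alg : MemAlg M (EuclideanSpace ℝ (Fin d)) (Option (EuclideanSpace ℝ (Fin d)))}
    (hsol : SolvesFeasibility d alg T (1 / (48 * (d : ℝ) ^ 2 * Real.sqrt d))) :
    (d : ℝ) / 256 ≤ T := by
  obtain ⟨π, h1, h2, h3⟩ := mkPar (d := d) (k := 1) (P := d / 128) (n := 0) (by norm_num)
    (by omega) (by omega) (by omega) (by omega)
  have h := π.T_gt hsol
  rw [h1, h2] at h
  have : d ≤ 256 * T := by omega
  have : (d : ℝ) ≤ 256 * T := by exact_mod_cast this
  linarith

set_option maxHeartbeats 1000000 in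
/-- The main dichotomy. -/
lemma main_bound {d M T : ℕ} (hd : 1000 ≤ d) (hlog1 : 1 ≤ Real.log d)
    (hlog : Real.log d ≤ d / 128)
    {alg : MemAlg M (EuclideanSpace ℝ (Fin d)) (Option (EuclideanSpace ℝ (Fin d)))}
    (hsol : SolvesFeasibility d alg T (1 / (48 * (d : ℝ) ^ 2 * Real.sqrt d))) :
    (d : ℝ) ^ 3 ≤ 2 ^ 24 * (M * Real.log d * T) := by
  have hM : d ≤ M := packing (by omega) hsol
  have hdR : (1000 : ℝ) ≤ d := by exact_mod_cast hd
  set lam := Real.log d with hlam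
  -- parameters
  obtain ⟨n, hn⟩ : ∃ n, n = d - d / 2 := ⟨_, rfl⟩
  obtain ⟨q, hq⟩ : ∃ q, q = M / d := ⟨_, rfl⟩
  have hq1 : 1 ≤ q := by rw [hq]; exact (Nat.one_le_div_iff (by omega)).mpr hM
  have hqM : q * d ≤ M := by rw [hq]; exact Nat.div_mul_le_self _ _
  have hMq : M < 2 * (q * d) := by
    have := Nat.lt_div_mul_add (a := M) (b := d) (by omega)
    rw [← hq] at this
    nlinarith
  obtain ⟨k, hk⟩ : ∃ k, k = 64 * q := ⟨_, rfl⟩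
  obtain ⟨m, hm⟩ : ∃ m, m = n / 4 := ⟨_, rfl⟩
  have hn1 : (d : ℝ) ≤ 2 * n := by
    have : d ≤ 2 * n := by omega
    exact_mod_cast this
  have hn2 : (2 * n : ℝ) ≤ d + 1 := by
    have : 2 * n ≤ d + 1 := by omega
    exact_mod_cast this
  have hm1 : (n : ℝ) ≤ 8 * m := by
    have : n ≤ 8 * m := by omega
    exact_mod_cast this
  have hm2 : (4 * m : ℝ) ≤ n := by
    have : 4 * m ≤ n := by omega
    exact_mod_cast this
  have hkq : (k : ℝ) = 64 * q := by rw [hk]; push_cast; ring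
  have hq1R : (1 : ℝ) ≤ q := by exact_mod_cast hq1
  have hqMR : (q : ℝ) * d ≤ M := by exact_mod_cast hqM
  have hMqR : (M : ℝ) ≤ 2 * (q * d) := by exact_mod_cast hMq.le
  have hk0 : (0 : ℝ) < k := by linarith
  obtain ⟨P, hP⟩ : ∃ P, P = ⌊(n : ℝ) / (256 * lam * k)⌋₊ := ⟨_, rfl⟩
  have hlam0 : 0 < lam := by linarith
  have hden : 0 < 256 * lam * k := by positivity
  have hkd : (k : ℝ) * d ≤ 64 * M := by rw [hkq]; linarith
  have hPle : (P : ℝ) * (256 * lam * k) ≤ n := by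
    rw [← le_div_iff₀ hden, hP]
    exact Nat.floor_le (by positivity)
  have hPlt : (n : ℝ) < (P + 1) * (256 * lam * k) := by
    rw [← div_lt_iff₀ hden, hP]
    exact Nat.lt_floor_add_one _
  have hnlk : (n : ℝ) * d ≤ (P + 1) * (2 ^ 14 * (lam * M)) := by
    have : (n : ℝ) * d ≤ (P + 1) * (256 * lam * k) * d :=
      mul_le_mul_of_nonneg_right hPlt.le (by linarith)
    have h2 : (P + 1) * (256 * lam * k) * d ≤ (P + 1) * (256 * lam) * (64 * M) := by
      have := mul_le_mul_of_nonneg_left hkd (show 0 ≤ ((P : ℝ) + 1) * (256 * lam) by positivity)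
      linarith
    linarith
  have hM0 : (0 : ℝ) ≤ M := by positivity
  rcases Nat.eq_zero_or_pos P with hP0 | hPpos
  · rw [hP0] at hnlk
    have hT := linear_bound (by omega) hsol
    have h1 : (d : ℝ) * d ≤ 2 ^ 15 * (lam * M) := by
      have := mul_le_mul_of_nonneg_right hn1 (show (0 : ℝ) ≤ d by linarith)
      push_cast at hnlk
      linarith
    have h2 : (d : ℝ) ≤ 256 * T := by linarith
    have h3 := mul_le_mul h1 h2 (by linarith) (by positivity)
    calc (d : ℝ) ^ 3 = d * d * d := by ring
      _ ≤ _ := h3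
      _ ≤ _ := by
        have : 0 ≤ lam * M * T := by positivity
        linarith
  · have hPR : (1 : ℝ) ≤ P := by exact_mod_cast hPpos
    have hPk : (P : ℝ) * k * 256 * lam ≤ n := by linarith
    have hPk0 : (0 : ℝ) ≤ P * k := by positivity
    have hPk' : (P : ℝ) * k * 256 ≤ n := by nlinarith
    have hPkN : P * k * 256 ≤ n := by exact_mod_cast hPk'
    obtain ⟨π, e1, e2, e3⟩ := mkPar (d := d) (k := k) (P := P) (n := n) (by omega)
      hPpos (by rw [show P * (2 * k) = 2 * (P * k) by ring]; omega) (by omega) (by omega)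
    have hTm : P * m < T := by
      by_contra hc
      have hc := π.main_count m hsol (by rw [e2]; omega)
      rw [e1, e2, e3] at hc
      have hl := log_count (by omega) hPpos (by omega) hc
      have L1 := Real.log_two_gt_d9
      have L2 := Real.log_two_lt_d9
      have hkn0 : (0 : ℝ) ≤ k * n := by positivity
      have hk64 : (64 : ℝ) ≤ k := by rw [hkq]; linarith
      have hkn : (64 : ℝ) * n ≤ k * n := mul_le_mul_of_nonneg_right hk64 (by positivity)
      -- left side
      have b0 : (k : ℝ) * n * (1 / 2) ≤ k * (n - m) * Real.log 2 := by
        have : (k : ℝ) * n * (3 / 4) ≤ k * (n - m) := by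
          have := mul_le_mul_of_nonneg_left hm2 hk0.le
          linarith
        have h2 := mul_le_mul this (show (2 / 3 : ℝ) ≤ Real.log 2 by linarith) (by norm_num)
          (le_trans (by positivity) this)
        linarith
      have b1 : Real.log P ≤ k * n / 64 := by
        have : (P : ℝ) * 1 ≤ P * k := mul_le_mul_of_nonneg_left (by linarith) (by linarith)
        have := Real.log_le_sub_one_of_pos (show (0 : ℝ) < P by linarith)
        linarith
      have b2 : M * Real.log 2 ≤ k * n / 16 := by
        have h1 : (M : ℝ) ≤ k * n / 16 := by
          have h2 := mul_le_mul_of_nonneg_left hn1 (show (0 : ℝ) ≤ q by linarith)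
          have h3 : (k : ℝ) * n = 64 * (q * n) := by rw [hkq]; ring
          linarith
        have h4 : (M : ℝ) * Real.log 2 ≤ M * 1 :=
          mul_le_mul_of_nonneg_left (by linarith) hM0
        linarith
      have b3 : 2 * k * (P * k) * Real.log (2 * (d : ℝ) ^ 3 + 1) ≤ k * n / 32 := by
        have h1 : Real.log (2 * (d : ℝ) ^ 3 + 1) ≤ 4 * lam := by
          have : 4 * lam = Real.log ((d : ℝ) ^ 4) := by rw [Real.log_pow]; norm_num [hlam]
          rw [this]
          apply Real.log_le_log (by positivity)
          have : (1 : ℝ) ≤ (d : ℝ) ^ 3 := one_le_pow₀ (by linarith)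
          have h5 := mul_le_mul_of_nonneg_left hdR (show (0 : ℝ) ≤ (d : ℝ) ^ 3 by positivity)
          rw [pow_succ (d : ℝ) 3]
          linarith
        have h2 := mul_le_mul_of_nonneg_left h1 (show (0 : ℝ) ≤ 2 * k * (P * k) by positivity)
        have h3 := mul_le_mul_of_nonneg_left hPk hk0.le
        linarith
      have b4 : n * Real.log 2 ≤ k * n / 64 := by
        have : (n : ℝ) * Real.log 2 ≤ n * 1 :=
          mul_le_mul_of_nonneg_left (by linarith) (by positivity)
        linarith
      have b5 : k * Real.log (m + 1) ≤ k * n / 64 := by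
        have h1 : Real.log (m + 1) ≤ lam := by
          apply Real.log_le_log (by positivity)
          linarith
        have h2 : Real.log (m + 1) ≤ n / 64 := by linarith
        have := mul_le_mul_of_nonneg_left h2 hk0.le
        linarith
      have b6 : n * (2 * (P * k)) * (2 * k / d) ≤ (k : ℝ) * n / 64 := by
        have hd0 : (0 : ℝ) < d := by linarith
        have e : (n : ℝ) * (2 * (P * k)) * (2 * k / d) = (k * n) * (4 * (P * k) / d) := by
          field_simp; ring
        have h1 : 4 * ((P : ℝ) * k) / d ≤ 1 / 64 := by
          rw [div_le_iff₀ hd0]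
          linarith
        rw [e]
        have := mul_le_mul_of_nonneg_left h1 hkn0
        linarith
      have : (0 : ℝ) < k * n := by
        have : (0 : ℝ) < n := by linarith
        positivity
      linarith
    have hTR : (P : ℝ) * m ≤ T := by exact_mod_cast hTm.le
    have h1 : (n : ℝ) * d ≤ 2 ^ 15 * (lam * M) * P := by
      have : ((P : ℝ) + 1) * (2 ^ 14 * (lam * M)) ≤ (2 * P) * (2 ^ 14 * (lam * M)) :=
        mul_le_mul_of_nonneg_right (by linarith) (by positivity)
      linarith
    have h2 : (d : ℝ) * d ≤ 2 ^ 16 * (lam * M) * P := by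
      have := mul_le_mul_of_nonneg_right hn1 (show (0 : ℝ) ≤ d by linarith)
      linarith
    have h3 : (d : ℝ) ≤ 16 * m := by linarith
    have h4 := mul_le_mul h2 h3 (by linarith) (by positivity)
    have h5 := mul_le_mul_of_nonneg_left hTR (show 0 ≤ lam * M by positivity)
    have h6 : 0 ≤ lam * M * T := by positivity
    calc (d : ℝ) ^ 3 = d * d * d := by ring
      _ ≤ _ := h4
      _ = 2 ^ 20 * (lam * M * (P * m)) := by ring
      _ ≤ _ := by linarith

end
end FeasLB

/-- To solve the feasibility problem over the unit ball with accuracy `1/(48 d² √d)`,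
any `M`-bit deterministic algorithm (with `M ≥ 1`) must make at least
`Ω(d³ / ((M + log d) (log d)³))` queries. -/
theorem feasibility_query_lower_bound :
    ∃ c : ℝ, 0 < c ∧ ∃ d₀ : ℕ, ∀ d : ℕ, d₀ ≤ d →
      ∀ M T : ℕ, 1 ≤ M →
        ∀ alg : MemAlg M (EuclideanSpace ℝ (Fin d)) (Option (EuclideanSpace ℝ (Fin d))),
          SolvesFeasibility d alg T (1 / (48 * (d : ℝ) ^ 2 * Real.sqrt d)) →
            c * (d : ℝ) ^ 3 / (((M : ℝ) + Real.log d) * Real.log d ^ 3) ≤ (T : ℝ) := by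
  have hlog : ∀ᶠ d : ℕ in Filter.atTop, Real.log d ≤ d / 128 := by
    have h := (Real.isLittleO_log_id_atTop.comp_tendsto tendsto_natCast_atTop_atTop).def
      (show (0 : ℝ) < 1 / 128 by norm_num)
    filter_upwards [h] with d hd
    simp only [Function.comp, id, Real.norm_eq_abs, Nat.abs_cast] at hd
    have := le_abs_self (Real.log d)
    linarith
  obtain ⟨d₁, hd₁⟩ := Filter.eventually_atTop.mp hlog
  refine ⟨1 / 2 ^ 24, by positivity, max 1000 d₁, ?_⟩
  intro d hd M T hM alg hsol
  have hd1 : 1000 ≤ d := (le_max_left _ _).trans hd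
  have hdR : (1000 : ℝ) ≤ d := by exact_mod_cast hd1
  have hl1 : 1 ≤ Real.log d := by
    rw [Real.le_log_iff_exp_le (by linarith)]
    have := Real.exp_one_lt_d9
    linarith
  have h := FeasLB.main_bound hd1 hl1 (hd₁ d ((le_max_right _ _).trans hd)) hsol
  have hM0 : (1 : ℝ) ≤ M := by exact_mod_cast hM
  rw [div_le_iff₀ (by positivity)]
  have h1 : Real.log d ≤ Real.log d ^ 3 := le_self_pow₀ hl1 (by norm_num)
  have h2 : M * Real.log d ≤ (M + Real.log d) * Real.log d ^ 3 :=
    mul_le_mul (by linarith) h1 (by linarith) (by positivity)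
  have h3 := mul_le_mul_of_nonneg_right h2 (show (0 : ℝ) ≤ T by positivity)
  linarith
end

section
/- There exists a universal constant C > 0 such that for every d ≥ 2 and every 0 < δ < π/2, there is a finite partition of the unit sphere S^{d−1} ⊂ ℝ^d into N measurable cells, with N ≤ (C/δ)^d, such that every cell has σ_{d−1}-measure exactly 1/N and Euclidean diameter at most δ. -/
open MeasureTheory

/-- The uniform probability measure on the unit sphere of `ℝ^d`, viewed as a measure on
`EuclideanSpace ℝ (Fin d)`: the normalized rotation-invariant surface measure. -/
noncomputable def sphereUniform (d : ℕ) : Measure (EuclideanSpace ℝ (Fin d)) :=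
  (((volume : Measure (EuclideanSpace ℝ (Fin d))).toSphere Set.univ)⁻¹ •
    (volume : Measure (EuclideanSpace ℝ (Fin d))).toSphere).map Subtype.val


section Split
variable {E : Type*} [MeasurableSpace E]

theorem sev_split [StandardBorelSpace E] (ν : Measure E) [IsFiniteMeasure ν] [NullSingletonClass ν]
    {A : Set E} (hA : MeasurableSet A) {c : ℝ} (hc0 : 0 ≤ c) (hc : c ≤ ν.real A) :
    ∃ B ⊆ A, MeasurableSet B ∧ ν.real B = c := by
  classical
  let f : E → ℝ := fun x => Real.sigmoid (embeddingReal E x)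
  have hf : Measurable f := by
    have := (measurableEmbedding_embeddingReal E).measurable
    fun_prop
  have hinj : Function.Injective f :=
    Real.sigmoid_injective.comp (measurableEmbedding_embeddingReal E).injective
  let κ : Measure ℝ := (ν.restrict A).map f
  have hκ : ∀ s, MeasurableSet s → κ.real s = ν.real (f ⁻¹' s ∩ A) := by
    intro s hs
    simp only [κ, measureReal_def]
    rw [Measure.map_apply hf hs, Measure.restrict_apply (hf hs)]
  have : IsFiniteMeasure κ := by dsimp only [κ]; infer_instance
  have : NullSingletonClass κ := by
    constructor
    intro x
    dsimp only [κ]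
    rw [Measure.map_apply hf (measurableSet_singleton x)]
    exact Set.Subsingleton.measure_zero (Set.subsingleton_singleton.preimage hinj) _
  have hcont : Continuous fun b : ℝ => ∫ x in (0:ℝ)..b, (1:ℝ) ∂κ :=
    intervalIntegral.continuous_primitive (fun a b => intervalIntegrable_const) 0
  have hval : ∀ b : ℝ, 0 ≤ b → ∫ x in (0:ℝ)..b, (1:ℝ) ∂κ = κ.real (Set.Ioc 0 b) := by
    intro b hb
    rw [intervalIntegral.integral_of_le hb]
    simp
  have h0 : ∫ x in (0:ℝ)..0, (1:ℝ) ∂κ = 0 := by simp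
  have h1 : ∫ x in (0:ℝ)..1, (1:ℝ) ∂κ = ν.real A := by
    rw [hval 1 zero_le_one, hκ _ measurableSet_Ioc]
    congr 1
    rw [Set.inter_eq_right]
    intro x _
    exact ⟨Real.sigmoid_pos _, (Real.sigmoid_lt_one _).le⟩
  have hmem : c ∈ Set.Icc (∫ x in (0:ℝ)..0, (1:ℝ) ∂κ) (∫ x in (0:ℝ)..1, (1:ℝ) ∂κ) := by
    rw [h0, h1]; exact ⟨hc0, hc⟩
  obtain ⟨t, ht, htc⟩ := intermediate_value_Icc zero_le_one hcont.continuousOn hmem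
  refine ⟨f ⁻¹' (Set.Ioc 0 t) ∩ A, Set.inter_subset_right, (hf measurableSet_Ioc).inter hA, ?_⟩
  rw [← hκ _ measurableSet_Ioc, ← hval t ht.1]
  exact htc

end Split

section Partition
variable {E : Type*} [PseudoMetricSpace E] [MeasurableSpace E]

/-- `U` can be cut into finitely many measurable cells of measure `ε`, each in a ball. -/
def SevGood (ν : Measure E) (ε ρ : ℝ) (U : Set E) : Prop :=
  ∃ (ι : Type) (_ : Fintype ι) (W : ι → Set E), (∀ i, MeasurableSet (W i)) ∧
    (∀ i j, i ≠ j → Disjoint (W i) (W j)) ∧ (⋃ i, W i) = U ∧ (∀ i, ν.real (W i) = ε) ∧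
    ∀ i, ∃ p, W i ⊆ Metric.closedBall p ρ

theorem SevGood.union {ν : Measure E} {ε ρ : ℝ} {U V : Set E} (hU : SevGood ν ε ρ U)
    (hV : SevGood ν ε ρ V) (hd : Disjoint U V) : SevGood ν ε ρ (U ∪ V) := by
  obtain ⟨ι, _, W, h1, h2, h3, h4, h5⟩ := hU
  obtain ⟨κ, _, X, g1, g2, g3, g4, g5⟩ := hV
  have hWU : ∀ i, W i ⊆ U := fun i => h3 ▸ Set.subset_iUnion W i
  have hXV : ∀ i, X i ⊆ V := fun i => g3 ▸ Set.subset_iUnion X i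
  refine ⟨ι ⊕ κ, inferInstance, Sum.elim W X, ?_, ?_, ?_, ?_, ?_⟩
  · rintro (i | i)
    exacts [h1 i, g1 i]
  · rintro (i | i) (j | j) hij
    · exact h2 i j (by simpa using hij)
    · exact hd.mono (hWU i) (hXV j)
    · exact (hd.mono (hWU j) (hXV i)).symm
    · exact g2 i j (by simpa using hij)
  · rw [Set.iUnion_sum]; simp [h3, g3]
  · rintro (i | i)
    exacts [h4 i, g4 i]
  · rintro (i | i)
    exacts [h5 i, g5 i]

theorem SevGood.single {ν : Measure E} {ε ρ : ℝ} {A : Set E} (hA : MeasurableSet A)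
    (h : ν.real A = ε) {p : E} (hp : A ⊆ Metric.closedBall p ρ) : SevGood ν ε ρ A :=
  ⟨Unit, inferInstance, fun _ => A, fun _ => hA, fun i j hij => absurd (Subsingleton.elim i j) hij,
    by simp [Set.iUnion_const], fun _ => h, fun _ => ⟨p, hp⟩⟩

theorem sev_chop [StandardBorelSpace E] (ν : Measure E) [IsFiniteMeasure ν] [NullSingletonClass ν]
    {ε ρ : ℝ} (hε : 0 ≤ ε) (p : E) (k : ℕ) : ∀ A : Set E, MeasurableSet A →
    A ⊆ Metric.closedBall p ρ → ν.real A = (k + 1) * ε → SevGood ν ε ρ A := by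
  induction k with
  | zero =>
    intro A hA hp h
    exact SevGood.single hA (by simpa using h) hp
  | succ k ih =>
    intro A hA hp h
    push_cast at h
    have hk : 0 ≤ (k:ℝ) * ε := by positivity
    obtain ⟨B, hBA, hB, hBm⟩ := sev_split ν hA hε (by rw [h]; nlinarith)
    have h2 : ν.real (A \ B) = (k + 1) * ε := by
      rw [measureReal_sdiff hBA hB, h, hBm]; ring
    have := (SevGood.single hB hBm (hBA.trans hp)).union
      (ih (A \ B) (hA.diff hB) (Set.sdiff_subset.trans hp) h2) Set.disjoint_sdiff_right
    rwa [Set.union_sdiff_cancel hBA] at this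

def SevSolv (ν : Measure E) (ε r : ℝ) (B : E → Set E) (T : Finset E) : Prop :=
  ∀ X : E → Set E, (∀ p ∈ T, MeasurableSet (X p)) → (∀ p ∈ T, B p ⊆ X p) →
    (∀ p ∈ T, X p ⊆ Metric.closedBall p (3 * r)) → (T : Set E).PairwiseDisjoint X →
    (∃ k : ℕ, ν.real (⋃ p ∈ T, X p) = k * ε) → SevGood ν ε (3 * r) (⋃ p ∈ T, X p)

theorem sevSolv_singleton [StandardBorelSpace E] (ν : Measure E) [IsFiniteMeasure ν] [NullSingletonClass ν]
    {ε r : ℝ} (hε : 0 < ε) {B : E → Set E} {a : E} (hB : ε ≤ ν.real (B a)) :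
    SevSolv ν ε r B {a} := by
  intro X h1 h2 h3 _ ⟨k, hk⟩
  simp only [Finset.mem_singleton, forall_eq, Set.iUnion_iUnion_eq_left] at *
  have h4 : ε ≤ k * ε := hk ▸ hB.trans (measureReal_mono h2)
  rcases k with _ | k
  · simp at h4; linarith
  · exact sev_chop ν hε.le a k _ h1 h3 (by rw [hk]; push_cast; ring)

theorem sevSolv_insert [DecidableEq E] [StandardBorelSpace E] (ν : Measure E) [IsFiniteMeasure ν]
    [NullSingletonClass ν] {ε r : ℝ} (hε : 0 < ε) {B : E → Set E} {T : Finset E} {a b : E}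
    (hT : SevSolv ν ε r B T) (ha : a ∈ T) (hb : b ∉ T) (hab : dist b a ≤ 2 * r)
    (hBm : MeasurableSet (B b)) (hB : ε ≤ ν.real (B b)) (hBr : B b ⊆ Metric.closedBall b r) :
    SevSolv ν ε r B (insert b T) := by
  intro X h1 h2 h3 h4 ⟨k, hk⟩
  have hXb := h1 b (by simp)
  have hBX := h2 b (by simp)
  have hεX : ε ≤ ν.real (X b) := hB.trans (measureReal_mono hBX)
  set n := ⌊ν.real (X b) / ε⌋₊ with hn
  have hn1 : 1 ≤ n := by
    rw [hn, Nat.one_le_floor_iff, one_le_div hε]; exact hεX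
  have hnle : n * ε ≤ ν.real (X b) := by
    rw [← le_div_iff₀ hε]; exact Nat.floor_le (by positivity)
  have hnlt : ν.real (X b) < (n + 1) * ε := by
    rw [← div_lt_iff₀ hε]; exact Nat.lt_floor_add_one _
  obtain ⟨R, hRB, hR, hRm⟩ := sev_split ν hBm (c := ν.real (X b) - n * ε) (by linarith)
    (by linarith)
  have hRX := hRB.trans hBX
  have hdiff : ν.real (X b \ R) = n * ε := by
    rw [measureReal_sdiff hRX hR, hRm]; ring
  have hgood1 : SevGood ν ε (3 * r) (X b \ R) := by
    refine sev_chop ν hε.le b (n - 1) _ (hXb.diff hR) (Set.sdiff_subset.trans (h3 b (by simp))) ?_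
    rw [hdiff]
    congr 1
    exact_mod_cast (Nat.sub_add_cancel hn1).symm
  have hbX : ∀ p ∈ T, Disjoint (X b) (X p) := fun p hp =>
    h4 (by simp) (by simp [hp]) (fun h => hb (h ▸ hp))
  let X' : E → Set E := fun p => if p = a then X p ∪ R else X p
  have hX'U : (⋃ p ∈ T, X' p) = (⋃ p ∈ T, X p) ∪ R := by
    ext x
    simp only [X', Set.mem_iUnion, Set.mem_union]
    constructor
    · rintro ⟨p, hp, hx⟩
      split_ifs at hx with h
      · rcases hx with hx | hx
        exacts [Or.inl ⟨p, hp, hx⟩, Or.inr hx]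
      · exact Or.inl ⟨p, hp, hx⟩
    · rintro (⟨p, hp, hx⟩ | hx)
      · refine ⟨p, hp, ?_⟩
        split_ifs
        exacts [Or.inl hx, hx]
      · exact ⟨a, ha, by simp [hx]⟩
  have hUm : MeasurableSet (⋃ p ∈ T, X' p) := by
    rw [hX'U]
    exact (Finset.measurableSet_biUnion T fun p hp => h1 p (by simp [hp])).union hR
  have hbU : Disjoint (X b) (⋃ p ∈ T, X p) := by
    simp only [Set.disjoint_iUnion_right]; exact hbX
  have hdisj : Disjoint (X b \ R) (⋃ p ∈ T, X' p) := by
    rw [hX'U, Set.disjoint_union_right]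
    exact ⟨hbU.mono_left Set.sdiff_subset, Set.disjoint_sdiff_left⟩
  have htot : (⋃ p ∈ insert b T, X p) = (X b \ R) ∪ ⋃ p ∈ T, X' p := by
    rw [hX'U, Finset.set_biUnion_insert]
    ext x
    have := @hRX x
    simp only [Set.mem_union, Set.mem_sdiff]
    tauto
  rw [htot] at hk ⊢
  rw [measureReal_union hdisj hUm (measure_ne_top _ _) (measure_ne_top _ _), hdiff] at hk
  have hnk : n ≤ k := by
    have : (n:ℝ) * ε ≤ k * ε := by
      have : 0 ≤ ν.real (⋃ p ∈ T, X' p) := measureReal_nonneg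
      linarith
    exact_mod_cast le_of_mul_le_mul_right this hε
  refine hgood1.union (hT X' ?_ ?_ ?_ ?_ ⟨k - n, ?_⟩) hdisj
  · intro p hp
    have := h1 p (by simp [hp])
    simp only [X']
    split_ifs
    exacts [this.union hR, this]
  · intro p hp
    have := h2 p (by simp [hp])
    simp only [X']
    split_ifs
    exacts [this.trans Set.subset_union_left, this]
  · intro p hp
    have := h3 p (by simp [hp])
    simp only [X']
    split_ifs with h
    · refine Set.union_subset this ?_
      subst h
      refine (hRB.trans hBr).trans (Metric.closedBall_subset_closedBall' ?_)
      linarith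
    · exact this
  · intro p hp q hq hpq
    have hpqd : Disjoint (X p) (X q) := h4 (by simp_all) (by simp_all) hpq
    have hp' : Disjoint R (X p) := (hbX p hp).mono_left hRX
    have hq' : Disjoint R (X q) := (hbX q hq).mono_left hRX
    simp only [Function.onFun, X']
    split_ifs with h h'
    · exact absurd (h.trans h'.symm) hpq
    · exact Set.disjoint_union_left.2 ⟨hpqd, hq'⟩
    · exact Set.disjoint_union_right.2 ⟨hpqd, hp'.symm⟩
    · exact hpqd
  · rw [Nat.cast_sub hnk]; linarith

theorem sevSolv_all [StandardBorelSpace E] (ν : Measure E) [IsFiniteMeasure ν]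
    [NullSingletonClass ν] {ε r : ℝ} (hε : 0 < ε) {B : E → Set E} {P : Finset E} (hP : P.Nonempty)
    (hBm : ∀ p ∈ P, MeasurableSet (B p)) (hB : ∀ p ∈ P, ε ≤ ν.real (B p))
    (hBr : ∀ p ∈ P, B p ⊆ Metric.closedBall p r)
    (hconn : ∀ T ⊂ P, T.Nonempty → ∃ a ∈ T, ∃ b ∈ P, b ∉ T ∧ dist b a ≤ 2 * r) :
    SevSolv ν ε r B P := by
  classical
  obtain ⟨a, ha⟩ := hP
  have key : ∀ n : ℕ, n < P.card → ∃ T ⊆ P, T.card = n + 1 ∧ SevSolv ν ε r B T := by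
    intro n
    induction n with
    | zero =>
      intro _
      exact ⟨{a}, by simpa using ha, by simp, sevSolv_singleton ν hε (hB a ha)⟩
    | succ n ih =>
      intro hn
      obtain ⟨T, hTP, hTc, hT⟩ := ih (by omega)
      have hss : T ⊂ P := Finset.ssubset_iff_subset_ne.2 ⟨hTP, by rintro rfl; omega⟩
      obtain ⟨c, hc, b, hb, hbT, hd⟩ := hconn T hss (Finset.card_pos.1 (by omega))
      exact ⟨insert b T, Finset.insert_subset hb hTP, by simp [hbT, hTc],
        sevSolv_insert ν hε hT hc hbT hd (hBm b hb) (hB b hb) (hBr b hb)⟩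
  have hpos : 0 < P.card := Finset.card_pos.2 ⟨a, ha⟩
  obtain ⟨T, hTP, hTc, hT⟩ := key (P.card - 1) (by omega)
  rwa [← Finset.eq_of_subset_of_card_le hTP (by omega)]

theorem sev_disjointed {E : Type*} [MeasurableSpace E] (D : E → Set E) (P : Finset E)
    (hD : ∀ p ∈ P, MeasurableSet (D p)) :
    ∃ D' : E → Set E, (∀ p ∈ P, MeasurableSet (D' p)) ∧ (∀ p ∈ P, D' p ⊆ D p) ∧
      (P : Set E).PairwiseDisjoint D' ∧ (⋃ p ∈ P, D' p) = ⋃ p ∈ P, D p := by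
  classical
  induction P using Finset.induction_on with
  | empty => exact ⟨D, by simp⟩
  | insert b T hb ih =>
    obtain ⟨D', h1, h2, h3, h4⟩ := ih fun p hp => hD p (by simp [hp])
    have hm : MeasurableSet (⋃ p ∈ T, D' p) := Finset.measurableSet_biUnion T h1
    have hne : ∀ p ∈ T, p ≠ b := fun p hp h => hb (h ▸ hp)
    let D'' : E → Set E := fun p => if p = b then D b \ ⋃ p ∈ T, D' p else D' p
    have hb'' : D'' b = D b \ ⋃ p ∈ T, D' p := by simp [D'']
    have hT'' : ∀ p ∈ T, D'' p = D' p := fun p hp => by simp [D'', hne p hp]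
    have hdis : ∀ p ∈ T, Disjoint (D'' b) (D'' p) := by
      intro p hp
      rw [hb'', hT'' p hp]
      exact Set.disjoint_sdiff_left.mono_right (Set.subset_biUnion_of_mem (u := D') hp)
    refine ⟨D'', ?_, ?_, ?_, ?_⟩
    · intro p hp
      rcases Finset.mem_insert.1 hp with rfl | hp
      · rw [hb'']; exact (hD p (by simp)).diff hm
      · rw [hT'' p hp]; exact h1 p hp
    · intro p hp
      rcases Finset.mem_insert.1 hp with rfl | hp
      · rw [hb'']; exact Set.sdiff_subset
      · rw [hT'' p hp]; exact h2 p hp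
    · intro p hp q hq hpq
      have hp' : p = b ∨ p ∈ T := by simpa using hp
      have hq' : q = b ∨ q ∈ T := by simpa using hq
      clear hp hq
      rcases hp' with rfl | hp <;> rcases hq' with rfl | hq
      · exact absurd rfl hpq
      · exact hdis q hq
      · exact (hdis p hp).symm
      · simp only [Function.onFun]
        rw [hT'' p hp, hT'' q hq]; exact h3 hp hq hpq
    · rw [Finset.set_biUnion_insert, Finset.set_biUnion_insert, hb'',
        Set.iUnion₂_congr hT'', ← h4, Set.sdiff_union_self]

end Partition

theorem sev_net {E : Type*} [MetricSpace E] {S : Set E} (hS : IsCompact S) {r : ℝ} (hr : 0 < r) :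
    ∃ P : Finset E, (P : Set E) ⊆ S ∧ (∀ p ∈ P, ∀ q ∈ P, p ≠ q → r < dist p q) ∧
      ∀ x ∈ S, ∃ p ∈ P, dist x p ≤ r := by
  lift r to NNReal using hr.le
  have hr0 : 0 < r := by exact_mod_cast hr
  obtain ⟨F, hFS, hFf, hF⟩ := Metric.exists_finite_isCover_of_isCompact (ε := r / 2)
    (by positivity) hS
  have htop : Metric.packingNumber r S ≠ ⊤ := by
    have h1 := Metric.packingNumber_two_mul_le_externalCoveringNumber (r / 2) S
    rw [mul_div_cancel₀ r (two_ne_zero)] at h1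
    have h2 := h1.trans hF.externalCoveringNumber_le_encard
    exact ne_top_of_le_ne_top (Set.encard_ne_top_iff.2 hFf) h2
  obtain ⟨C, hCf⟩ : ∃ C : Finset E, (C : Set E) = Metric.maximalSeparatedSet r S := by
    have : (Metric.maximalSeparatedSet r S).Finite := by
      rw [← Set.encard_ne_top_iff, Metric.encard_maximalSeparatedSet htop]; exact htop
    exact ⟨this.toFinset, by simp⟩
  refine ⟨C, hCf ▸ Metric.maximalSeparatedSet_subset, ?_, ?_⟩
  · intro p hp q hq hpq
    have h := Metric.isSeparated_maximalSeparatedSet (ε := r) (A := S)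
    rw [← hCf] at h
    have h3 : (r : ENNReal) < edist p q := h hp hq hpq
    rw [edist_nndist] at h3
    exact_mod_cast h3
  · intro x hx
    obtain ⟨p, hp, hxp⟩ := Metric.isCover_maximalSeparatedSet htop hx
    rw [← hCf] at hp
    refine ⟨p, hp, ?_⟩
    have h3 : edist x p ≤ r := hxp
    rw [edist_nndist] at h3
    exact_mod_cast h3

theorem sev_abstract {E : Type*} [MetricSpace E] [MeasurableSpace E] [BorelSpace E]
    [StandardBorelSpace E] (ν : Measure E) [IsFiniteMeasure ν] [NullSingletonClass ν] {S : Set E}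
    (hS : IsCompact S) (hSc : IsPreconnected S) (hSn : S.Nonempty) {r ε : ℝ} (hr : 0 < r)
    (hε : 0 < ε) (hcap : ∀ p ∈ S, ε ≤ ν.real (Metric.ball p (r / 2) ∩ S))
    (hN : ∃ N : ℕ, ν.real S = N * ε) : SevGood ν ε (3 * r) S := by
  classical
  obtain ⟨P, hPS, hsep, hcov⟩ := sev_net hS hr
  have hSm : MeasurableSet S := hS.isClosed.measurableSet
  let B : E → Set E := fun p => Metric.ball p (r / 2) ∩ S
  have hBm : ∀ p, MeasurableSet (B p) := fun p => Metric.isOpen_ball.measurableSet.inter hSm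
  have hBr : ∀ p, B p ⊆ Metric.closedBall p r := fun p =>
    Set.inter_subset_left.trans
      (Metric.ball_subset_closedBall.trans (Metric.closedBall_subset_closedBall (by linarith)))
  have hPn : P.Nonempty := by
    obtain ⟨x, hx⟩ := hSn
    obtain ⟨p, hp, _⟩ := hcov x hx
    exact ⟨p, hp⟩
  have hsolv : SevSolv ν ε r B P := by
    refine sevSolv_all ν hε hPn (fun p _ => hBm p) (fun p hp => hcap p (hPS hp))
      (fun p _ => hBr p) ?_
    intro T hT hTn
    have hcl : ∀ Q : Finset E, IsClosed (⋃ p ∈ Q, Metric.closedBall p r) := fun Q =>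
      Q.finite_toSet.isClosed_biUnion fun p _ => Metric.isClosed_closedBall
    have hself : ∀ Q ⊆ P, Q.Nonempty → (S ∩ ⋃ p ∈ Q, Metric.closedBall p r).Nonempty := by
      rintro Q hQ ⟨q, hq⟩
      refine ⟨q, hPS (hQ hq), ?_⟩
      simp only [Set.mem_iUnion]
      exact ⟨q, hq, Metric.mem_closedBall_self hr.le⟩
    obtain ⟨x, hxS, hx1, hx2⟩ := isPreconnected_closed_iff.1 hSc _ _ (hcl T) (hcl (P \ T))
      (by
        intro x hx
        obtain ⟨p, hp, hxp⟩ := hcov x hx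
        simp only [Set.mem_union, Set.mem_iUnion]
        by_cases h : p ∈ T
        · exact Or.inl ⟨p, h, hxp⟩
        · exact Or.inr ⟨p, by simp [hp, h], hxp⟩)
      (hself T hT.subset hTn)
      (hself (P \ T) Finset.sdiff_subset (Finset.sdiff_nonempty.2 hT.not_subset))
    simp only [Set.mem_iUnion] at hx1 hx2
    obtain ⟨a, ha, hxa⟩ := hx1
    obtain ⟨b, hb, hxb⟩ := hx2
    rw [Finset.mem_sdiff] at hb
    rw [Metric.mem_closedBall] at hxa hxb
    refine ⟨a, ha, b, hb.1, hb.2, ?_⟩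
    linarith [dist_triangle_left b a x]
  have hUB : MeasurableSet (⋃ p ∈ P, B p) := Finset.measurableSet_biUnion P fun p _ => hBm p
  obtain ⟨D, d1, d2, d3, d4⟩ := sev_disjointed
    (fun p => (Metric.closedBall p r ∩ S) \ ⋃ p ∈ P, B p) P
    (fun p _ => (Metric.isClosed_closedBall.measurableSet.inter hSm).diff hUB)
  have hBd : ∀ p ∈ P, ∀ q ∈ P, p ≠ q → Disjoint (B p) (B q) := by
    intro p hp q hq hpq
    exact (Metric.ball_disjoint_ball (by linarith [hsep p hp q hq hpq])).mono
      Set.inter_subset_left Set.inter_subset_left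
  have hBD : ∀ p ∈ P, ∀ q ∈ P, Disjoint (B p) (D q) := by
    intro p hp q hq
    exact Set.disjoint_sdiff_right.mono (Set.subset_biUnion_of_mem (u := B) hp) (d2 q hq)
  have hUnion : (⋃ p ∈ P, (B p ∪ D p)) = S := by
    simp only [Set.iUnion_union_distrib]
    rw [d4]
    ext x
    simp only [Set.mem_union, Set.mem_iUnion, Set.mem_sdiff]
    constructor
    · rintro (⟨p, hp, hx⟩ | ⟨p, hp, hx, _⟩)
      exacts [hx.2, hx.2]
    · intro hx
      by_cases h : ∃ p, ∃ (_ : p ∈ P), x ∈ B p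
      · exact Or.inl h
      · obtain ⟨p, hp, hxp⟩ := hcov x hx
        exact Or.inr ⟨p, hp, ⟨hxp, hx⟩, h⟩
  have := hsolv (fun p => B p ∪ D p) (fun p hp => (hBm p).union (d1 p hp))
    (fun p _ => Set.subset_union_left)
    (fun p hp => Set.union_subset
      ((hBr p).trans (Metric.closedBall_subset_closedBall (by linarith)))
      (((d2 p hp).trans (Set.sdiff_subset.trans Set.inter_subset_left)).trans
        (Metric.closedBall_subset_closedBall (by linarith))))
    (by
      intro p hp q hq hpq
      simp only [Function.onFun, Set.disjoint_union_left, Set.disjoint_union_right]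
      exact ⟨⟨hBd p hp q hq hpq, (hBD q hq p hp).symm⟩, hBD p hp q hq, d3 hp hq hpq⟩)
    (by rw [hUnion]; exact hN)
  rwa [hUnion] at this

theorem sev_cone {E : Type*} [NormedAddCommGroup E] [NormedSpace ℝ E]
    (x : E) (hx : ‖x‖ = 1) (ε : ℝ) (hε2 : ε ≤ 1) :
    Metric.ball ((1 / 2 : ℝ) • x) (ε / 4) ⊆
      {y | ∃ t ∈ Set.Ioo (0 : ℝ) 1, ∃ u, ‖u‖ = 1 ∧ dist u x < ε ∧ t • u = y} := by
  intro y hy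
  rw [Metric.mem_ball] at hy
  have hn : ‖(1 / 2 : ℝ) • x‖ = 1 / 2 := by simp [norm_smul, hx]
  have h1 : |‖y‖ - 1 / 2| < ε / 4 := by
    have := abs_norm_sub_norm_le y ((1 / 2 : ℝ) • x)
    rw [hn] at this
    rw [dist_eq_norm] at hy
    linarith
  rw [abs_lt] at h1
  have hy0 : 0 < ‖y‖ := by linarith
  refine ⟨‖y‖, ⟨hy0, by linarith⟩, ‖y‖⁻¹ • y, ?_, ?_, ?_⟩
  · rw [norm_smul, norm_inv, norm_norm, inv_mul_cancel₀ hy0.ne']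
  · have e1 : dist (‖y‖⁻¹ • y) ((2:ℝ) • y) < ε / 2 := by
      rw [dist_eq_norm, ← sub_smul, norm_smul, Real.norm_eq_abs, ← abs_of_pos hy0, ← abs_mul,
        sub_mul, abs_of_pos hy0, inv_mul_cancel₀ hy0.ne', abs_lt]
      constructor <;> linarith
    have e2 : dist ((2:ℝ) • y) x < ε / 2 := by
      have : x = (2:ℝ) • (1 / 2 : ℝ) • x := by rw [smul_smul]; norm_num
      rw [this, dist_smul₀]
      norm_num
      norm_num at hy
      linarith
    linarith [dist_triangle (‖y‖⁻¹ • y) ((2:ℝ) • y) x]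
  · rw [smul_smul, mul_inv_cancel₀ hy0.ne', one_smul]

open scoped Pointwise

theorem sphereUniform_eq (d : ℕ) (A : Set (EuclideanSpace ℝ (Fin d))) :
    sphereUniform d A = ((volume : Measure (EuclideanSpace ℝ (Fin d))).toSphere Set.univ)⁻¹ *
      (volume : Measure (EuclideanSpace ℝ (Fin d))).toSphere (Subtype.val ⁻¹' A) := by
  unfold sphereUniform
  rw [(MeasurableEmbedding.subtype_coe
    (Metric.isClosed_sphere.measurableSet)).map_apply]
  simp

theorem sev_total_ne {d : ℕ} (hd : 2 ≤ d) :
    (volume : Measure (EuclideanSpace ℝ (Fin d))).toSphere Set.univ ≠ 0 := by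
  have : Nonempty (Fin d) := ⟨⟨0, by omega⟩⟩
  rw [Ne, Measure.measure_univ_eq_zero]
  exact Measure.toSphere_ne_zero _

theorem sphereUniform_sphere {d : ℕ} (hd : 2 ≤ d) :
    sphereUniform d (Metric.sphere 0 1) = 1 := by
  rw [sphereUniform_eq, Subtype.coe_preimage_self]
  exact ENNReal.inv_mul_cancel (sev_total_ne hd) (measure_ne_top _ _)

theorem sphereUniform_univ {d : ℕ} (hd : 2 ≤ d) :
    sphereUniform d Set.univ = 1 := by
  rw [sphereUniform_eq, Set.preimage_univ]
  exact ENNReal.inv_mul_cancel (sev_total_ne hd) (measure_ne_top _ _)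

theorem sphereUniform_null {d : ℕ} (hd : 2 ≤ d) : NullSingletonClass (sphereUniform d) := by
  constructor
  intro x
  rw [sphereUniform_eq, Measure.toSphere_apply' _
    (measurableSet_singleton x |>.preimage measurable_subtype_coe)]
  have hsub : Set.Ioo (0:ℝ) 1 • (Subtype.val '' ((Subtype.val :
      Metric.sphere (0 : EuclideanSpace ℝ (Fin d)) 1 → _) ⁻¹' {x})) ⊆
      (Submodule.span ℝ {x} : Set (EuclideanSpace ℝ (Fin d))) := by
    rintro y ⟨t, _, u, ⟨v, hv, rfl⟩, rfl⟩
    have hv' : (v : EuclideanSpace ℝ (Fin d)) = x := hv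
    simp only [hv']
    exact Submodule.smul_mem _ _ (Submodule.mem_span_singleton_self x)
  have h0 : volume (Submodule.span ℝ {x} : Set (EuclideanSpace ℝ (Fin d))) = 0 := by
    apply Measure.addHaar_submodule
    intro h
    have h1 := finrank_span_le_card (R := ℝ) ({x} : Set (EuclideanSpace ℝ (Fin d)))
    rw [h, finrank_top, finrank_euclideanSpace_fin] at h1
    simp at h1
    omega
  rw [measure_mono_null hsub h0]
  simp

theorem sphereUniform_cap {d : ℕ} (hd : 2 ≤ d) {p : EuclideanSpace ℝ (Fin d)}
    (hp : p ∈ Metric.sphere (0 : EuclideanSpace ℝ (Fin d)) 1) {ρ : ℝ} (h0 : 0 < ρ) (h1 : ρ ≤ 1) :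
    ENNReal.ofReal ((ρ / 4) ^ d) ≤ sphereUniform d (Metric.ball p ρ ∩ Metric.sphere 0 1) := by
  have : Nonempty (Fin d) := ⟨⟨0, by omega⟩⟩
  have hm : MeasurableSet ((Subtype.val : Metric.sphere (0 : EuclideanSpace ℝ (Fin d)) 1 → _) ⁻¹'
      (Metric.ball p ρ ∩ Metric.sphere 0 1)) :=
    (Metric.isOpen_ball.measurableSet.inter Metric.isClosed_sphere.measurableSet).preimage
      measurable_subtype_coe
  have hsub : Metric.ball ((1 / 2 : ℝ) • p) (ρ / 4) ⊆ Set.Ioo (0:ℝ) 1 • (Subtype.val ''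
      ((Subtype.val : Metric.sphere (0 : EuclideanSpace ℝ (Fin d)) 1 → _) ⁻¹'
      (Metric.ball p ρ ∩ Metric.sphere 0 1))) := by
    intro y hy
    obtain ⟨t, ht, u, hu, hup, rfl⟩ := sev_cone p (by simpa using hp) ρ h1 hy
    have hus : u ∈ Metric.sphere (0 : EuclideanSpace ℝ (Fin d)) 1 := by simpa using hu
    exact Set.smul_mem_smul ht ⟨⟨u, hus⟩, ⟨hup, hus⟩, rfl⟩
  have hvol := measure_mono (μ := (volume : Measure (EuclideanSpace ℝ (Fin d)))) hsub
  rw [Measure.addHaar_ball _ _ (by positivity), finrank_euclideanSpace_fin] at hvol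
  rw [sphereUniform_eq, mul_comm, ← div_eq_mul_inv,
    ENNReal.le_div_iff_mul_le (Or.inl (sev_total_ne hd)) (Or.inl (measure_ne_top _ _)),
    Measure.toSphere_apply' _ hm, Measure.toSphere_apply_univ, mul_left_comm]
  gcongr

/-- For any `0 < δ < π/2`, the unit sphere `S^{d-1}` can be partitioned into
`N = (O(1)/δ)^d` measurable cells of equal measure, each of diameter at most `δ`. -/
theorem sphere_equal_volume_partition :
    ∃ C : ℝ, 0 < C ∧ ∀ d : ℕ, 2 ≤ d → ∀ δ : ℝ, 0 < δ → δ < Real.pi / 2 →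
      ∃ (N : ℕ) (V : Fin N → Set (EuclideanSpace ℝ (Fin d))),
        (N : ℝ) ≤ (C / δ) ^ d ∧
        (∀ i, MeasurableSet (V i)) ∧
        (∀ i j, i ≠ j → Disjoint (V i) (V j)) ∧
        (⋃ i, V i) = Metric.sphere (0 : EuclideanSpace ℝ (Fin d)) 1 ∧
        (∀ i, sphereUniform d (V i) = 1 / (N : ENNReal)) ∧
        (∀ i, Metric.diam (V i) ≤ δ) := by
  refine ⟨96, by norm_num, ?_⟩
  intro d hd δ hδ hδπ
  have hδ2 : δ < 2 := by linarith [Real.pi_lt_four]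
  have := sphereUniform_null hd
  have : IsProbabilityMeasure (sphereUniform d) := ⟨sphereUniform_univ hd⟩
  set K : ℝ := (48 / δ) ^ d with hK
  have hK1 : 1 ≤ K := one_le_pow₀ (by rw [one_le_div hδ]; linarith)
  set N : ℕ := ⌈K⌉₊ with hN
  have hKN : K ≤ N := Nat.le_ceil K
  have hNpos : (0:ℝ) < N := by linarith
  have hN2 : (N:ℝ) ≤ 2 * K := by
    have := Nat.ceil_lt_add_one (by linarith : 0 ≤ K)
    linarith
  have hNb : (N:ℝ) ≤ (96 / δ) ^ d := by
    have h96 : (96 / δ) ^ d = 2 ^ d * K := by rw [hK, ← mul_pow]; congr 1; ring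
    have h2 : (2:ℝ) ≤ 2 ^ d := by
      calc (2:ℝ) = 2 ^ 1 := by norm_num
        _ ≤ 2 ^ d := pow_le_pow_right₀ (by norm_num) (by omega)
    rw [h96]
    nlinarith
  have hSreal : (sphereUniform d).real (Metric.sphere 0 1) = 1 := by
    rw [measureReal_def, sphereUniform_sphere hd]; simp
  have hrank : 1 < Module.rank ℝ (EuclideanSpace ℝ (Fin d)) := by
    rw [← Module.finrank_eq_rank, finrank_euclideanSpace_fin]
    exact_mod_cast hd
  have hgood : SevGood (sphereUniform d) (1 / N) (3 * (δ / 6))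
      (Metric.sphere (0 : EuclideanSpace ℝ (Fin d)) 1) := by
    refine sev_abstract (sphereUniform d) (isCompact_sphere 0 1)
      (isPreconnected_sphere hrank 0 1) (isConnected_sphere hrank 0 zero_le_one).nonempty
      (by positivity) (by positivity) ?_ ⟨N, ?_⟩
    · intro p hp
      have hcap := sphereUniform_cap hd hp (ρ := δ / 6 / 2) (by positivity) (by linarith)
      rw [ENNReal.ofReal_le_iff_le_toReal (measure_ne_top _ _)] at hcap
      refine le_trans ?_ hcap
      have : (δ / 6 / 2 / 4) ^ d = 1 / K := by
        rw [hK, one_div, ← inv_pow]; congr 1; rw [inv_div]; ring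
      rw [this]
      exact one_div_le_one_div_of_le (by linarith) hKN
    · rw [hSreal]; field_simp
  obtain ⟨ι, _, W, w1, w2, w3, w4, w5⟩ := hgood
  have hcard : Fintype.card ι = N := by
    have h1 : (sphereUniform d).real (⋃ i, W i) = ∑ i, (sphereUniform d).real (W i) :=
      measureReal_iUnion_fintype (fun i j hij => w2 i j hij) w1
    rw [w3, hSreal] at h1
    simp only [w4, Finset.sum_const, Finset.card_univ, nsmul_eq_mul] at h1
    field_simp at h1
    exact_mod_cast h1.symm
  let e : Fin N ≃ ι := (Fintype.equivFinOfCardEq hcard).symm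
  refine ⟨N, fun i => W (e i), hNb, fun i => w1 _, fun i j hij => w2 _ _ (by simpa using hij),
    ?_, ?_, ?_⟩
  · rw [← w3]; exact e.surjective.iUnion_comp W
  · intro i
    have h := w4 (e i)
    rw [measureReal_def] at h
    rw [← ENNReal.ofReal_toReal (measure_ne_top (sphereUniform d) (W (e i))), h,
      ENNReal.ofReal_div_of_pos hNpos]
    simp
  · intro i
    obtain ⟨p, hp⟩ := w5 (e i)
    refine (Metric.diam_mono hp Metric.isBounded_closedBall).trans
      ((Metric.diam_closedBall (by positivity)).trans ?_)
    linarith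
end

section
/- Let d ≥ 1, let P : ℝ^d → ℝ^d be an orthogonal projection of rank r, and let x be a random vector distributed according to σ_{d−1}. Then for every t > 0, both ℙ(‖P x‖² − r/d ≥ t) ≤ e^{−d t²} and ℙ(‖P x‖² − r/d ≤ −t) ≤ e^{−d t²}. -/
open MeasureTheory
open scoped RealInnerProductSpace

lemma pnc_ode (M0 M1 M2 : ℝ → ℝ) (D r : ℝ) (hD : 0 < D)
    (h0 : ∀ x, HasDerivAt M0 (M1 x) x) (h1 : ∀ x, HasDerivAt M1 (M2 x) x)
    (hpos : ∀ x, 0 < M0 x) (hone : M0 0 = 1)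
    (hode : ∀ x, D * M1 x - r * M0 x = 2 * x * (M1 x - M2 x)) (l : ℝ) (hl : 0 ≤ l) :
    M0 l ≤ Real.exp (r * l / D + l ^ 2 / (4 * D)) := by
  set y : ℝ → ℝ := fun x => M1 x / M0 x - r / D - x / (2 * D + 4) with hy
  have hyd : ∀ x, HasDerivAt y ((M2 x * M0 x - M1 x * M1 x) / (M0 x) ^ 2 - 1 / (2 * D + 4)) x := by
    intro x
    have := (((h1 x).div (h0 x) (hpos x).ne').sub_const (r / D)).sub
      ((hasDerivAt_id x).div_const (2 * D + 4))
    exact this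
  have hkey : ∀ x, 0 ≤ x →
      2 * x * ((M2 x * M0 x - M1 x * M1 x) / (M0 x) ^ 2 - 1 / (2 * D + 4)) + D * y x ≤ 0 := by
    intro x hx
    have hp := hpos x
    have hg : M1 x = (M1 x / M0 x) * M0 x := by field_simp
    set g := M1 x / M0 x with hgd
    have e1 : 2 * x * ((M2 x * M0 x - M1 x * M1 x) / (M0 x) ^ 2)
        = r + 2 * x * (g * (1 - g)) - D * g := by
      have h2 : 2 * x * M2 x = 2 * x * M1 x - (D * M1 x - r * M0 x) := by
        linarith [hode x]
      have : 2 * x * ((M2 x * M0 x - M1 x * M1 x) / (M0 x) ^ 2)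
        = ((2 * x * M2 x) * M0 x - 2 * x * (M1 x * M1 x)) / (M0 x) ^ 2 := by ring
      rw [this, h2, hg]
      field_simp
      ring
    have e2 : y x = g - r / D - x / (2 * D + 4) := rfl
    have e3 : 2 * x * (1 / (2 * D + 4)) + D * (x / (2 * D + 4)) = x / 2 := by
      field_simp
      ring
    have e4 : D * (r / D) = r := by field_simp
    have e5 : 2 * x * (g * (1 - g)) ≤ x / 2 := by
      nlinarith [mul_nonneg hx (sq_nonneg (2 * g - 1))]
    rw [mul_sub, e1, e2]
    linarith
  have hyle : ∀ x, 0 < x → y x ≤ 0 := by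
    intro x hx
    have hanti : AntitoneOn (fun x : ℝ => x ^ (D / 2) * y x) (Set.Ici 0) := by
      apply antitoneOn_of_deriv_nonpos (convex_Ici 0)
      · apply ContinuousOn.mul
        · exact (Real.continuous_rpow_const (by positivity)).continuousOn
        · exact fun x _ => (hyd x).continuousAt.continuousWithinAt
      · intro z hz
        simp only [interior_Ici, Set.mem_Ioi] at hz
        exact ((Real.hasDerivAt_rpow_const (Or.inl hz.ne')).mul
          (hyd z)).differentiableAt.differentiableWithinAt
      · intro z hz
        simp only [interior_Ici, Set.mem_Ioi] at hz
        have := ((Real.hasDerivAt_rpow_const (p := D / 2) (Or.inl hz.ne')).mul (hyd z)).deriv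
        have e : (fun x : ℝ => x ^ (D / 2) * y x) = (fun x : ℝ => x ^ (D / 2)) * y := rfl
        rw [e, this]
        have hzz : z ^ (D / 2) = z ^ (D / 2 - 1) * z := by
          rw [← Real.rpow_add_one hz.ne']; congr 1; ring
        rw [hzz]
        have hp : 0 ≤ z ^ (D / 2 - 1) := Real.rpow_nonneg hz.le _
        have := mul_nonpos_of_nonneg_of_nonpos hp (hkey z hz.le)
        nlinarith
    have h := hanti (Set.mem_Ici.2 le_rfl) (Set.mem_Ici.2 hx.le) hx.le
    simp only at h
    rw [Real.zero_rpow (by positivity), zero_mul] at h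
    have hp : 0 < x ^ (D / 2) := Real.rpow_pos_of_pos hx _
    by_contra hc
    push Not at hc
    have := mul_pos hp hc
    linarith
  have hKd : ∀ x, HasDerivAt (fun x => Real.log (M0 x) - r / D * x - x ^ 2 / (4 * D + 8)) (y x) x := by
    intro x
    have := (((h0 x).log (hpos x).ne').sub ((hasDerivAt_id x).const_mul (r / D))).sub
      (((hasDerivAt_id x).pow 2).div_const (4 * D + 8))
    refine this.congr_deriv ?_
    simp only [hy, id]
    field_simp
    ring
  have hanti : AntitoneOn (fun x => Real.log (M0 x) - r / D * x - x ^ 2 / (4 * D + 8)) (Set.Ici 0) := by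
    apply antitoneOn_of_deriv_nonpos (convex_Ici 0)
    · exact fun x _ => (hKd x).continuousAt.continuousWithinAt
    · exact fun x _ => (hKd x).differentiableAt.differentiableWithinAt
    · intro z hz
      simp only [interior_Ici, Set.mem_Ioi] at hz
      rw [(hKd z).deriv]
      exact hyle z hz
  have h := hanti (Set.mem_Ici.2 le_rfl) (Set.mem_Ici.2 hl) hl
  simp [hone] at h
  rw [← Real.log_le_iff_le_exp (hpos l)]
  have : l ^ 2 / (4 * D + 8) ≤ l ^ 2 / (4 * D) := by gcongr; linarith
  have e : r * l / D = r / D * l := by ring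
  linarith

lemma pnc_tail {Ω : Type*} [MeasurableSpace Ω] (μ : Measure Ω) [IsProbabilityMeasure μ]
    (X : Ω → ℝ) (hX : AEMeasurable X μ) (hb : ∀ᵐ ω ∂μ, X ω ∈ Set.Icc (0 : ℝ) 1)
    (D r : ℝ) (hD : 0 < D)
    (hst : ∀ l : ℝ, ∫ ω, ((D * X ω - r) - 2 * l * (X ω * (1 - X ω))) * Real.exp (l * X ω) ∂μ = 0)
    (t : ℝ) (ht : 0 < t) :
    μ {ω | t ≤ X ω - r / D} ≤ ENNReal.ofReal (Real.exp (-(D * t ^ 2))) := by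
  have hint : ∀ l : ℝ, Integrable (fun ω => Real.exp (l * X ω)) μ := fun l =>
    ProbabilityTheory.integrable_exp_mul_of_mem_Icc hX hb
  have hset : ProbabilityTheory.integrableExpSet X μ = Set.univ := by
    ext l; simpa [ProbabilityTheory.integrableExpSet] using hint l
  have hmem : ∀ l : ℝ, l ∈ interior (ProbabilityTheory.integrableExpSet X μ) := by
    intro l; simp [hset]
  have hin : ∀ (l : ℝ) (n : ℕ), Integrable (fun ω => X ω ^ n * Real.exp (l * X ω)) μ := fun l n =>
    ProbabilityTheory.integrable_pow_mul_exp_of_mem_interior_integrableExpSet (hmem l) n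
  have hmgf : ∀ l : ℝ, 0 ≤ l → ∫ ω, X ω ^ 0 * Real.exp (l * X ω) ∂μ
      ≤ Real.exp (r * l / D + l ^ 2 / (4 * D)) := by
    refine pnc_ode (fun l => ∫ ω, X ω ^ 0 * Real.exp (l * X ω) ∂μ)
      (fun l => ∫ ω, X ω ^ 1 * Real.exp (l * X ω) ∂μ)
      (fun l => ∫ ω, X ω ^ 2 * Real.exp (l * X ω) ∂μ) D r hD
      (fun l => ProbabilityTheory.hasDerivAt_integral_pow_mul_exp_real (hmem l) 0)
      (fun l => ProbabilityTheory.hasDerivAt_integral_pow_mul_exp_real (hmem l) 1) ?_ ?_ ?_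
    · intro l
      have := ProbabilityTheory.mgf_pos (hint l)
      simpa [ProbabilityTheory.mgf] using this
    · simp
    · intro l
      have h := hst l
      have e : (fun ω => ((D * X ω - r) - 2 * l * (X ω * (1 - X ω))) * Real.exp (l * X ω)) =
        fun ω => (D * (X ω ^ 1 * Real.exp (l * X ω)) - r * (X ω ^ 0 * Real.exp (l * X ω)))
          - (2 * l * (X ω ^ 1 * Real.exp (l * X ω)) - 2 * l * (X ω ^ 2 * Real.exp (l * X ω))) := by
        funext ω; ring
      rw [e, integral_sub, integral_sub, integral_sub, integral_const_mul, integral_const_mul,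
        integral_const_mul, integral_const_mul] at h
      · linarith
      · exact (hin l 1).const_mul _
      · exact (hin l 2).const_mul _
      · exact (hin l 1).const_mul _
      · exact (hin l 0).const_mul _
      · exact ((hin l 1).const_mul _).sub ((hin l 0).const_mul _)
      · exact ((hin l 1).const_mul _).sub ((hin l 2).const_mul _)
  have hl : 0 ≤ 2 * D * t := by positivity
  have h := ProbabilityTheory.measure_ge_le_exp_mul_mgf (r / D + t) hl (hint (2 * D * t))
  have h2 := hmgf _ hl
  have e : {ω | t ≤ X ω - r / D} = {ω | r / D + t ≤ X ω} := by
    ext ω; simp only [Set.mem_ofPred_eq]; constructor <;> intro h <;> linarith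
  rw [e]
  apply (ENNReal.le_ofReal_iff_toReal_le (measure_ne_top _ _) (Real.exp_pos _).le).2
  refine h.trans ?_
  simp only [pow_zero, one_mul] at h2
  rw [ProbabilityTheory.mgf]
  refine (mul_le_mul_of_nonneg_left h2 (Real.exp_pos _).le).trans ?_
  rw [← Real.exp_add]
  apply le_of_eq
  congr 1
  field_simp
  ring

lemma pnc_nontriv (d : ℕ) (hd : 1 ≤ d) : Nontrivial (EuclideanSpace ℝ (Fin d)) := by
  have : Nonempty (Fin d) := ⟨⟨0, hd⟩⟩
  infer_instance

lemma pnc_prob (d : ℕ) (hd : 1 ≤ d) : IsProbabilityMeasure (sphereUniform d) := by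
  have := pnc_nontriv d hd
  unfold sphereUniform
  have : IsProbabilityMeasure (((volume : Measure (EuclideanSpace ℝ (Fin d))).toSphere Set.univ)⁻¹ •
    (volume : Measure (EuclideanSpace ℝ (Fin d))).toSphere) := by
    constructor
    rw [Measure.smul_apply, smul_eq_mul]
    apply ENNReal.inv_mul_cancel
    · rw [Ne, Measure.measure_univ_eq_zero]
      exact Measure.toSphere_ne_zero _
    · exact measure_ne_top _ _
  exact Measure.isProbabilityMeasure_map measurable_subtype_coe.aemeasurable

lemma pnc_norm (d : ℕ) : ∀ᵐ x ∂(sphereUniform d), ‖x‖ = 1 := by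
  unfold sphereUniform
  rw [ae_map_iff measurable_subtype_coe.aemeasurable
    (measurableSet_eq_fun measurable_norm measurable_const)]
  exact Filter.Eventually.of_forall fun x => by simp

lemma pnc_apply (d : ℕ) {A : Set (EuclideanSpace ℝ (Fin d))} (hA : MeasurableSet A) :
    sphereUniform d A = ((volume : Measure (EuclideanSpace ℝ (Fin d))).toSphere Set.univ)⁻¹ *
      (Module.finrank ℝ (EuclideanSpace ℝ (Fin d)) *
        volume (Set.image2 (fun (c : ℝ) (x : EuclideanSpace ℝ (Fin d)) => c • x) (Set.Ioo (0 : ℝ) 1) {x | ‖x‖ = 1 ∧ x ∈ A})) := by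
  unfold sphereUniform
  rw [Measure.map_apply measurable_subtype_coe hA, Measure.smul_apply, smul_eq_mul,
    Measure.toSphere_apply' _ (measurable_subtype_coe hA)]
  congr 3
  rw [← Set.image2_smul]
  congr 1
  ext x
  simp [and_comm]

lemma pnc_inv (d : ℕ) (R : EuclideanSpace ℝ (Fin d) ≃ₗᵢ[ℝ] EuclideanSpace ℝ (Fin d)) :
    MeasurePreserving R (sphereUniform d) (sphereUniform d) := by
  refine ⟨R.continuous.measurable, ?_⟩
  ext A hA
  rw [Measure.map_apply R.continuous.measurable hA, pnc_apply d hA,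
    pnc_apply d (R.continuous.measurable hA)]
  congr 2
  have hR : MeasurePreserving R.toMeasurableEquiv (volume : Measure (EuclideanSpace ℝ (Fin d)))
      volume := R.measurePreserving
  refine Eq.trans ?_ (hR.measure_preimage_equiv _)
  congr 1
  ext x
  simp only [Set.mem_preimage, Set.mem_image2, Set.mem_ofPred_eq]
  constructor
  · rintro ⟨c, hc, z, ⟨hz, hzA⟩, rfl⟩
    exact ⟨c, hc, R z, ⟨by simpa using hz, hzA⟩, by simp⟩
  · rintro ⟨c, hc, z, ⟨hz, hzA⟩, hx⟩
    refine ⟨c, hc, R.symm z, ⟨by simpa using hz, by simpa using hzA⟩, ?_⟩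
    apply R.injective
    simpa using hx

lemma pnc_int (d : ℕ) (hd : 1 ≤ d) {f : EuclideanSpace ℝ (Fin d) → ℝ} (hf : Continuous f) :
    Integrable f (sphereUniform d) := by
  have := pnc_nontriv d hd
  unfold sphereUniform
  rw [integrable_map_measure hf.aestronglyMeasurable measurable_subtype_coe.aemeasurable]
  apply Integrable.smul_measure
  · exact (hf.comp continuous_subtype_val).integrable_of_hasCompactSupport
      (HasCompactSupport.of_compactSpace _)
  · apply ENNReal.inv_ne_top.2
    rw [Ne, Measure.measure_univ_eq_zero]
    exact Measure.toSphere_ne_zero _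

lemma pnc_rot (d : ℕ) (u v : EuclideanSpace ℝ (Fin d)) (hu : ‖u‖ = 1) (hv : ‖v‖ = 1)
    (huv : ⟪u, v⟫ = 0) (θ : ℝ) :
    ∃ R : EuclideanSpace ℝ (Fin d) ≃ₗᵢ[ℝ] EuclideanSpace ℝ (Fin d), ∀ x,
      R x = x + ((Real.cos θ - 1) * ⟪u, x⟫ - Real.sin θ * ⟪v, x⟫) • u
        + ((Real.cos θ - 1) * ⟪v, x⟫ + Real.sin θ * ⟪u, x⟫) • v := by
  let L : EuclideanSpace ℝ (Fin d) →ₗ[ℝ] EuclideanSpace ℝ (Fin d) :=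
    { toFun := fun x => x + ((Real.cos θ - 1) * ⟪u, x⟫ - Real.sin θ * ⟪v, x⟫) • u
        + ((Real.cos θ - 1) * ⟪v, x⟫ + Real.sin θ * ⟪u, x⟫) • v
      map_add' := by
        intro x y
        simp only [inner_add_right]
        module
      map_smul' := by
        intro c x
        simp only [inner_smul_right, RingHom.id_apply]
        module }
  have hL : ∀ x, ‖L x‖ = ‖x‖ := by
    intro x
    rw [← sq_eq_sq₀ (norm_nonneg _) (norm_nonneg _), ← real_inner_self_eq_norm_sq,
      ← real_inner_self_eq_norm_sq]
    have huu : ⟪u, u⟫ = 1 := by rw [real_inner_self_eq_norm_sq, hu]; norm_num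
    have hvv : ⟪v, v⟫ = 1 := by rw [real_inner_self_eq_norm_sq, hv]; norm_num
    have hvu : ⟪v, u⟫ = 0 := by rw [real_inner_comm]; exact huv
    change ⟪x + ((Real.cos θ - 1) * ⟪u, x⟫ - Real.sin θ * ⟪v, x⟫) • u
        + ((Real.cos θ - 1) * ⟪v, x⟫ + Real.sin θ * ⟪u, x⟫) • v,
        x + ((Real.cos θ - 1) * ⟪u, x⟫ - Real.sin θ * ⟪v, x⟫) • u
        + ((Real.cos θ - 1) * ⟪v, x⟫ + Real.sin θ * ⟪u, x⟫) • v⟫ = ⟪x, x⟫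
    simp only [inner_add_left, inner_add_right, real_inner_smul_left, real_inner_smul_right,
      huu, hvv, huv, hvu, real_inner_comm u x, real_inner_comm v x]
    linear_combination (⟪u, x⟫ ^ 2 + ⟪v, x⟫ ^ 2) * (Real.sin_sq_add_cos_sq θ)
  let I : EuclideanSpace ℝ (Fin d) →ₗᵢ[ℝ] EuclideanSpace ℝ (Fin d) := ⟨L, hL⟩
  exact ⟨I.toLinearIsometryEquiv rfl, fun x => rfl⟩

lemma pnc_stein (d : ℕ) (hd : 1 ≤ d)
    (P : EuclideanSpace ℝ (Fin d) →ₗ[ℝ] EuclideanSpace ℝ (Fin d))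
    (hidem : ∀ x, P (P x) = P x)
    (hsa : ∀ x y, ⟪P x, y⟫ = ⟪x, P y⟫)
    (u v : EuclideanSpace ℝ (Fin d)) (hu : ‖u‖ = 1) (hv : ‖v‖ = 1)
    (hPu : P u = u) (hPv : P v = 0) (l : ℝ) :
    ∫ x, (⟪u, x⟫ ^ 2 - ⟪v, x⟫ ^ 2 - 2 * l * (⟪u, x⟫ ^ 2 * ⟪v, x⟫ ^ 2)) * Real.exp (l * ‖P x‖ ^ 2)
      ∂(sphereUniform d) = 0 := by
  have hprob := pnc_prob d hd
  have hPc : Continuous P := P.continuous_of_finiteDimensional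
  have huv : ⟪u, v⟫ = 0 := by rw [← hPu, hsa, hPv, inner_zero_right]
  have hvu : ⟪v, u⟫ = 0 := by rw [real_inner_comm]; exact huv
  have huu : ⟪u, u⟫ = 1 := by rw [real_inner_self_eq_norm_sq, hu]; norm_num
  have hvv : ⟪v, v⟫ = 1 := by rw [real_inner_self_eq_norm_sq, hv]; norm_num
  set p : ℝ → EuclideanSpace ℝ (Fin d) → ℝ :=
    fun θ x => Real.cos θ * ⟪u, x⟫ - Real.sin θ * ⟪v, x⟫ with hp
  set q : ℝ → EuclideanSpace ℝ (Fin d) → ℝ :=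
    fun θ x => Real.cos θ * ⟪v, x⟫ + Real.sin θ * ⟪u, x⟫ with hq
  set F : ℝ → EuclideanSpace ℝ (Fin d) → ℝ := fun θ x =>
    p θ x * q θ x * Real.exp (l * (‖P x‖ ^ 2 + p θ x ^ 2 - ⟪u, x⟫ ^ 2)) with hF
  set F' : ℝ → EuclideanSpace ℝ (Fin d) → ℝ := fun θ x =>
    (p θ x ^ 2 - q θ x ^ 2 - 2 * l * (p θ x ^ 2 * q θ x ^ 2)) *
      Real.exp (l * (‖P x‖ ^ 2 + p θ x ^ 2 - ⟪u, x⟫ ^ 2)) with hF'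
  have hpc : ∀ θ, Continuous (p θ) := fun θ => by simp only [hp]; fun_prop
  have hqc : ∀ θ, Continuous (q θ) := fun θ => by simp only [hq]; fun_prop
  have hFc : ∀ θ, Continuous (F θ) := fun θ => by
    have := hpc θ; have := hqc θ; simp only [hF]; fun_prop
  have hF'c : ∀ θ, Continuous (F' θ) := fun θ => by
    have := hpc θ; have := hqc θ; simp only [hF']; fun_prop
  have hdp : ∀ θ x, HasDerivAt (fun θ => p θ x) (-q θ x) θ := by
    intro θ x
    refine (((Real.hasDerivAt_cos θ).mul_const _).sub
      ((Real.hasDerivAt_sin θ).mul_const _)).congr_deriv ?_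
    simp only [hq]; ring
  have hdq : ∀ θ x, HasDerivAt (fun θ => q θ x) (p θ x) θ := by
    intro θ x
    refine (((Real.hasDerivAt_cos θ).mul_const _).add
      ((Real.hasDerivAt_sin θ).mul_const _)).congr_deriv ?_
    simp only [hp]; ring
  have hdF : ∀ θ x, HasDerivAt (fun θ => F θ x) (F' θ x) θ := by
    intro θ x
    refine (((hdp θ x).mul (hdq θ x)).mul
      (((((hdp θ x).pow 2).const_add (‖P x‖ ^ 2)).sub_const (⟪u, x⟫ ^ 2)).const_mul
        l).exp).congr_deriv ?_
    simp only [hF', Pi.mul_apply, Pi.pow_apply]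
    ring
  have hconst : ∀ θ, ∫ x, F θ x ∂(sphereUniform d) = ∫ x, F 0 x ∂(sphereUniform d) := by
    intro θ
    obtain ⟨R, hR⟩ := pnc_rot d u v hu hv huv θ
    have hmp := pnc_inv d R
    rw [← hmp.integral_comp R.toHomeomorph.measurableEmbedding (F 0)]
    congr 1
    funext x
    have h1 : ⟪u, R x⟫ = p θ x := by
      rw [hR]
      simp only [inner_add_right, real_inner_smul_right, huu, huv, hp]; ring
    have h2 : ⟪v, R x⟫ = q θ x := by
      rw [hR]
      simp only [inner_add_right, real_inner_smul_right, hvv, hvu, hq]; ring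
    have h3 : P (R x) = P x + (p θ x - ⟪u, x⟫) • u := by
      rw [hR]
      simp only [map_add, map_smul, hPu, hPv, hp, smul_zero, add_zero]
      congr 2; ring
    have h4 : ‖P (R x)‖ ^ 2 = ‖P x‖ ^ 2 + p θ x ^ 2 - ⟪u, x⟫ ^ 2 := by
      have h5 : ⟪P x, u⟫ = ⟪u, x⟫ := by rw [hsa, hPu, real_inner_comm]
      have h6 : ⟪u, P x⟫ = ⟪u, x⟫ := by rw [← hsa, hPu]
      rw [h3, ← real_inner_self_eq_norm_sq, ← real_inner_self_eq_norm_sq]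
      simp only [inner_add_left, inner_add_right, real_inner_smul_left, real_inner_smul_right,
        huu, h5, h6]
      ring
    have h01 : p 0 (R x) = p θ x := by rw [← h1]; simp [hp]
    have h02 : q 0 (R x) = q θ x := by rw [← h2]; simp [hq]
    simp only [hF, h01, h02, h4, h1]
    ring_nf
  have hbound : ∀ᵐ x ∂(sphereUniform d), ∀ θ ∈ (Set.univ : Set ℝ),
      ‖F' θ x‖ ≤ (4 + 4 + 2 * |l| * (4 * 4)) * Real.exp (|l| * (‖P x‖ ^ 2 + 4 + 1)) := by
    filter_upwards [pnc_norm d] with x hx θ _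
    have hux : |⟪u, x⟫| ≤ 1 := by
      have := abs_real_inner_le_norm u x; rwa [hu, hx, one_mul] at this
    have hvx : |⟪v, x⟫| ≤ 1 := by
      have := abs_real_inner_le_norm v x; rwa [hv, hx, one_mul] at this
    have hc := Real.abs_cos_le_one θ
    have hs := Real.abs_sin_le_one θ
    have hm : ∀ a b : ℝ, |a| ≤ 1 → |b| ≤ 1 → |a * b| ≤ 1 := by
      intro a b ha hb
      rw [abs_mul]; exact mul_le_one₀ ha (abs_nonneg _) hb
    have hpb : p θ x ^ 2 ≤ 4 := by
      have : |p θ x| ≤ 2 := by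
        refine (abs_sub _ _).trans ?_
        linarith [hm _ _ hc hux, hm _ _ hs hvx]
      nlinarith [sq_abs (p θ x), abs_nonneg (p θ x)]
    have hqb : q θ x ^ 2 ≤ 4 := by
      have : |q θ x| ≤ 2 := by
        refine (abs_add_le _ _).trans ?_
        linarith [hm _ _ hc hvx, hm _ _ hs hux]
      nlinarith [sq_abs (q θ x), abs_nonneg (q θ x)]
    have hu2 : ⟪u, x⟫ ^ 2 ≤ 1 := by nlinarith [sq_abs ⟪u, x⟫, abs_nonneg ⟪u, x⟫]
    have hp0 := sq_nonneg (p θ x)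
    have hq0 := sq_nonneg (q θ x)
    simp only [hF', norm_mul, Real.norm_eq_abs, Real.abs_exp]
    refine mul_le_mul ?_ (Real.exp_le_exp.2 ?_) (Real.exp_pos _).le (by positivity)
    · refine (abs_sub _ _).trans (add_le_add ((abs_sub _ _).trans (add_le_add ?_ ?_)) ?_)
      · rwa [abs_of_nonneg hp0]
      · rwa [abs_of_nonneg hq0]
      · rw [abs_mul, abs_mul, abs_of_nonneg (mul_nonneg hp0 hq0), abs_two]
        gcongr
    · refine (le_abs_self _).trans ?_
      rw [abs_mul]
      gcongr
      rw [abs_le]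
      constructor <;> nlinarith [sq_nonneg ‖P x‖, sq_nonneg ⟪u, x⟫]
  have hder := (hasDerivAt_integral_of_dominated_loc_of_deriv_le (μ := sphereUniform d)
    (F := F) (F' := F') (x₀ := 0) (s := Set.univ)
    (bound := fun x => (4 + 4 + 2 * |l| * (4 * 4)) * Real.exp (|l| * (‖P x‖ ^ 2 + 4 + 1)))
    Filter.univ_mem
    (Filter.Eventually.of_forall fun θ => (hFc θ).aestronglyMeasurable)
    (pnc_int d hd (hFc 0)) (hF'c 0).aestronglyMeasurable hbound
    (pnc_int d hd (by fun_prop))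
    (Filter.Eventually.of_forall fun x θ _ => hdF θ x)).2
  have hder2 : HasDerivAt (fun θ => ∫ x, F θ x ∂(sphereUniform d)) 0 0 := by
    have : (fun θ => ∫ x, F θ x ∂(sphereUniform d)) = fun _ => ∫ x, F 0 x ∂(sphereUniform d) :=
      funext hconst
    rw [this]
    exact hasDerivAt_const _ _
  have := hder.unique hder2
  rw [← this]
  congr 1
  funext x
  simp [hF', hp, hq]

lemma pnc_stein_sum (d r : ℕ) (hd : 1 ≤ d)
    (P : EuclideanSpace ℝ (Fin d) →ₗ[ℝ] EuclideanSpace ℝ (Fin d))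
    (hidem : ∀ x, P (P x) = P x)
    (hsa : ∀ x y, ⟪P x, y⟫ = ⟪x, P y⟫)
    (hrank : Module.finrank ℝ (LinearMap.range P) = r) (l : ℝ) :
    ∫ x, (((d : ℝ) * ‖P x‖ ^ 2 - r) - 2 * l * (‖P x‖ ^ 2 * (1 - ‖P x‖ ^ 2))) *
      Real.exp (l * ‖P x‖ ^ 2) ∂(sphereUniform d) = 0 := by
  have hPc : Continuous P := P.continuous_of_finiteDimensional
  have hdim := LinearMap.finrank_range_add_finrank_ker P
  rw [finrank_euclideanSpace_fin] at hdim
  let U := stdOrthonormalBasis ℝ (LinearMap.range P)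
  let V := stdOrthonormalBasis ℝ (LinearMap.ker P)
  have hPU : ∀ i, P (U i : EuclideanSpace ℝ (Fin d)) = U i := by
    intro i
    obtain ⟨z, hz⟩ := (U i).2
    rw [← hz, hidem]
  have hPV : ∀ j, P (V j : EuclideanSpace ℝ (Fin d)) = 0 := fun j => (V j).2
  have hUs : ∀ x, ∑ i, ⟪(U i : EuclideanSpace ℝ (Fin d)), x⟫ ^ 2 = ‖P x‖ ^ 2 := by
    intro x
    have := U.sum_sq_norm_inner_right ⟨P x, LinearMap.mem_range_self P x⟩
    simp only [Submodule.coe_inner, Submodule.coe_norm, Real.norm_eq_abs, sq_abs] at this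
    rw [← this]
    refine Finset.sum_congr rfl fun i _ => ?_
    rw [← hsa, hPU]
  have hVs : ∀ x, ∑ j, ⟪(V j : EuclideanSpace ℝ (Fin d)), x⟫ ^ 2 = ‖x‖ ^ 2 - ‖P x‖ ^ 2 := by
    intro x
    have hk : x - P x ∈ LinearMap.ker P := by
      rw [LinearMap.mem_ker, map_sub, hidem, sub_self]
    have := V.sum_sq_norm_inner_right ⟨x - P x, hk⟩
    simp only [Submodule.coe_inner, Submodule.coe_norm, Real.norm_eq_abs, sq_abs] at this
    have e : ‖x - P x‖ ^ 2 = ‖x‖ ^ 2 - ‖P x‖ ^ 2 := by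
      have h1 : ⟪x, P x⟫ = ‖P x‖ ^ 2 := by
        rw [← real_inner_self_eq_norm_sq, hsa, hidem]
      rw [norm_sub_sq_real, h1]; ring
    rw [← e, ← this]
    refine Finset.sum_congr rfl fun i _ => ?_
    rw [inner_sub_right, ← hsa, hPV, inner_zero_left, sub_zero]
  have hsum : ∫ x, ∑ i, ∑ j, (⟪(U i : EuclideanSpace ℝ (Fin d)), x⟫ ^ 2
      - ⟪(V j : EuclideanSpace ℝ (Fin d)), x⟫ ^ 2
      - 2 * l * (⟪(U i : EuclideanSpace ℝ (Fin d)), x⟫ ^ 2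
        * ⟪(V j : EuclideanSpace ℝ (Fin d)), x⟫ ^ 2)) * Real.exp (l * ‖P x‖ ^ 2)
      ∂(sphereUniform d) = 0 := by
    rw [integral_finsetSum]
    · refine Finset.sum_eq_zero fun i _ => ?_
      rw [integral_finsetSum]
      · refine Finset.sum_eq_zero fun j _ => ?_
        exact pnc_stein d hd P hidem hsa _ _ (U.orthonormal.1 i) (V.orthonormal.1 j)
          (hPU i) (hPV j) l
      · exact fun j _ => pnc_int d hd (by fun_prop)
    · exact fun i _ => pnc_int d hd (by fun_prop)
  rw [← hsum]
  apply integral_congr_ae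
  filter_upwards [pnc_norm d] with x hx
  simp only [← Finset.sum_mul]
  congr 1
  simp only [Finset.sum_sub_distrib, ← Finset.mul_sum, ← Finset.sum_mul, hUs, hVs, Finset.sum_const,
    Finset.card_univ, Fintype.card_fin, nsmul_eq_mul, hx, hrank]
  have : (Module.finrank ℝ (LinearMap.ker P) : ℝ) = d - r := by
    rw [← hrank]
    have : ((Module.finrank ℝ (LinearMap.range P) + Module.finrank ℝ (LinearMap.ker P) : ℕ) : ℝ) = d := by
      exact_mod_cast hdim
    push_cast at this
    linarith
  rw [this]
  ring

/-- Concentration for the squared norm of the projection of a uniformly random unit vector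
onto a subspace of dimension `r`: two-sided sub-Gaussian tails around `r/d`. -/
theorem projection_norm_concentration (d r : ℕ) (hd : 1 ≤ d)
    (P : EuclideanSpace ℝ (Fin d) →ₗ[ℝ] EuclideanSpace ℝ (Fin d))
    (hidem : ∀ x, P (P x) = P x)
    (hsa : ∀ x y, ⟪P x, y⟫ = ⟪x, P y⟫)
    (hrank : Module.finrank ℝ (LinearMap.range P) = r)
    (t : ℝ) (ht : 0 < t) :
    sphereUniform d {x | t ≤ ‖P x‖ ^ 2 - (r : ℝ) / d}
        ≤ ENNReal.ofReal (Real.exp (-((d : ℝ) * t ^ 2))) ∧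
      sphereUniform d {x | ‖P x‖ ^ 2 - (r : ℝ) / d ≤ -t}
        ≤ ENNReal.ofReal (Real.exp (-((d : ℝ) * t ^ 2))) := by
  have hprob := pnc_prob d hd
  have hPc : Continuous P := P.continuous_of_finiteDimensional
  have hD : (0 : ℝ) < d := by exact_mod_cast hd
  have hst := pnc_stein_sum d r hd P hidem hsa hrank
  have hb : ∀ᵐ x ∂(sphereUniform d), ‖P x‖ ^ 2 ∈ Set.Icc (0 : ℝ) 1 := by
    filter_upwards [pnc_norm d] with x hx
    refine ⟨sq_nonneg _, ?_⟩
    have h1 : ‖P x‖ ^ 2 ≤ ‖x‖ * ‖P x‖ := by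
      rw [← real_inner_self_eq_norm_sq, hsa, hidem]
      exact real_inner_le_norm _ _
    rw [hx, one_mul] at h1
    nlinarith [norm_nonneg (P x)]
  constructor
  · exact pnc_tail (sphereUniform d) (fun x => ‖P x‖ ^ 2)
      (by fun_prop : Continuous fun x => ‖P x‖ ^ 2).measurable.aemeasurable hb d r hD hst t ht
  · have h := pnc_tail (sphereUniform d) (fun x => 1 - ‖P x‖ ^ 2)
      (by fun_prop : Continuous fun x => 1 - ‖P x‖ ^ 2).measurable.aemeasurable
      (by
        filter_upwards [hb] with x hx
        exact ⟨by linarith [hx.2], by linarith [hx.1]⟩) d (d - r) hD ?_ t ht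
    · refine (measure_mono ?_).trans h
      intro x hx
      have hx' : ‖P x‖ ^ 2 - (r : ℝ) / d ≤ -t := hx
      have : ((d : ℝ) - r) / d = 1 - r / d := by field_simp
      change t ≤ 1 - ‖P x‖ ^ 2 - ((d : ℝ) - r) / d
      rw [this]
      linarith
    · intro l
      have h := hst (-l)
      have e : (fun x => ((d : ℝ) * (1 - ‖P x‖ ^ 2) - (d - r)
          - 2 * l * ((1 - ‖P x‖ ^ 2) * (1 - (1 - ‖P x‖ ^ 2)))) * Real.exp (l * (1 - ‖P x‖ ^ 2)))
          = fun x => (-Real.exp l) * ((((d : ℝ) * ‖P x‖ ^ 2 - r)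
          - 2 * (-l) * (‖P x‖ ^ 2 * (1 - ‖P x‖ ^ 2))) * Real.exp (-l * ‖P x‖ ^ 2)) := by
        funext x
        have : Real.exp (l * (1 - ‖P x‖ ^ 2)) = Real.exp l * Real.exp (-l * ‖P x‖ ^ 2) := by
          rw [← Real.exp_add]; congr 1; ring
        rw [this]; ring
      rw [e, integral_const_mul, h, mul_zero]
end

section
/- Let d ≥ 2, let P : ℝ^d → ℝ^d be an orthogonal projection of rank r with 1 ≤ r < d, let x be a random vector distributed according to σ_{d−1}, and let 0 < t < 1 − r/d. Then ℙ(‖P x‖² − r/d ≥ t) ≤ exp(−(d/2) · D_KL(r/d ‖ r/d + t)), where D_KL(p ‖ q) = p·log(p/q) + (1−p)·log((1−p)/(1−q)) is the Kullback–Leibler divergence between Bernoulli distributions with parameters p and q. -/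
open MeasureTheory
open scoped RealInnerProductSpace

/-- The Kullback–Leibler divergence between Bernoulli distributions of parameters
`p` and `q`. -/
noncomputable def klBernoulli (p q : ℝ) : ℝ :=
  p * Real.log (p / q) + (1 - p) * Real.log ((1 - p) / (1 - q))

open scoped Pointwise

theorem det_aux {d r : ℕ} (hrd : r < d)
    (P : EuclideanSpace ℝ (Fin d) →ₗ[ℝ] EuclideanSpace ℝ (Fin d))
    (hidem : ∀ x, P (P x) = P x)
    (hrank : Module.finrank ℝ (LinearMap.range P) = r) (a b : ℝ) :
    LinearMap.det (a • P + b • (LinearMap.id - P)) = a ^ r * b ^ (d - r) := by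
  have hP : LinearMap.IsProj (LinearMap.range P) P :=
    ⟨fun x => ⟨x, rfl⟩, by rintro _ ⟨y, rfl⟩; exact hidem y⟩
  have hk : Module.finrank ℝ (LinearMap.ker P) = d - r := by
    have := P.finrank_range_add_finrank_ker
    simp at this
    omega
  set e := (LinearMap.range P).prodEquivOfIsCompl (LinearMap.ker P) hP.isCompl with he
  have hT : a • P + b • (LinearMap.id - P) =
      e.conj ((a • LinearMap.id).prodMap (b • LinearMap.id)) := by
    have h2 : ∀ z, (a • P + b • (LinearMap.id - P) : Module.End ℝ _) (e z) =
        e ((LinearMap.prodMap (a • (LinearMap.id : Module.End ℝ (LinearMap.range P)))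
          (b • (LinearMap.id : Module.End ℝ (LinearMap.ker P)))) z) := by
      rintro ⟨u, v⟩
      have hu := hP.map_id u u.2
      have hv : P v = 0 := v.2
      simp [he, hu, hv]
    ext1 x
    have := h2 (e.symm x)
    rw [LinearEquiv.apply_symm_apply] at this
    rw [this, LinearEquiv.conj_apply_apply]
  rw [hT, LinearEquiv.conj_apply, LinearMap.comp_assoc, LinearMap.det_conj, LinearMap.det_prodMap, LinearMap.det_smul, LinearMap.det_smul, hrank, hk]
  simp

theorem norm_aux {d : ℕ}
    (P : EuclideanSpace ℝ (Fin d) →ₗ[ℝ] EuclideanSpace ℝ (Fin d))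
    (hidem : ∀ x, P (P x) = P x)
    (hsa : ∀ x y, ⟪P x, y⟫ = ⟪x, P y⟫) (a b : ℝ) (x : EuclideanSpace ℝ (Fin d)) :
    ‖(a • P + b • (LinearMap.id - P) : Module.End ℝ _) x‖ ^ 2 = b ^ 2 * ‖x‖ ^ 2 - (b ^ 2 - a ^ 2) * ‖P x‖ ^ 2 := by
  have h1 : ⟪P x, x⟫ = ‖P x‖ ^ 2 := by
    rw [← real_inner_self_eq_norm_sq, hsa x (P x), hidem, hsa]
  have h2 : (a • P + b • (LinearMap.id - P) : Module.End ℝ _) x = (a - b) • P x + b • x := by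
    simp; module
  rw [h2, norm_add_sq_real, norm_smul, norm_smul, inner_smul_left, inner_smul_right, h1]
  simp [mul_pow]
  ring

theorem exp_aux {d r : ℕ} (hr : 1 ≤ r) (hrd : r < d) (q : ℝ) (hq : 0 < q) (hq1 : q < 1) :
    Real.exp (-((d : ℝ) / 2) * klBernoulli ((r : ℝ) / d) q) =
      (√((r / d : ℝ) / q) ^ r * √((1 - (r / d : ℝ)) / (1 - q)) ^ (d - r))⁻¹ := by
  have hd : (0 : ℝ) < d := by exact_mod_cast (by omega : 0 < d)
  have hr0 : (0 : ℝ) < r := by exact_mod_cast hr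
  have hp1 : (r : ℝ) / d < 1 := by rw [div_lt_one hd]; exact_mod_cast hrd
  have hA : 0 < (r / d : ℝ) / q := by positivity
  have hB : 0 < (1 - (r / d : ℝ)) / (1 - q) := div_pos (by linarith) (by linarith)
  have hA' := Real.sqrt_pos.2 hA
  have hB' := Real.sqrt_pos.2 hB
  rw [← Real.exp_log (inv_pos.2 (mul_pos (pow_pos hA' r) (pow_pos hB' (d - r))))]
  congr 1
  rw [Real.log_inv, Real.log_mul (by positivity) (by positivity), Real.log_pow, Real.log_pow,
    Real.log_sqrt hA.le, Real.log_sqrt hB.le, klBernoulli, Nat.cast_sub hrd.le]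
  generalize Real.log ((r / d : ℝ) / q) = u
  generalize Real.log ((1 - (r / d : ℝ)) / (1 - q)) = v
  field_simp

/-- Chernoff-type upper tail for the squared norm of the projection of a uniformly random
unit vector onto a subspace of dimension `r`, expressed through the Kullback–Leibler
divergence of Bernoulli distributions. -/
theorem projection_norm_kl_tail (d r : ℕ) (hd : 2 ≤ d) (hr : 1 ≤ r) (hrd : r < d)
    (P : EuclideanSpace ℝ (Fin d) →ₗ[ℝ] EuclideanSpace ℝ (Fin d))
    (hidem : ∀ x, P (P x) = P x)
    (hsa : ∀ x y, ⟪P x, y⟫ = ⟪x, P y⟫)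
    (hrank : Module.finrank ℝ (LinearMap.range P) = r)
    (t : ℝ) (ht : 0 < t) (ht' : t < 1 - (r : ℝ) / d) :
    sphereUniform d {x | t ≤ ‖P x‖ ^ 2 - (r : ℝ) / d}
      ≤ ENNReal.ofReal
          (Real.exp (-((d : ℝ) / 2) * klBernoulli ((r : ℝ) / d) ((r : ℝ) / d + t))) := by
  have hd0 : (0 : ℝ) < d := by exact_mod_cast (by omega : 0 < d)
  have hr0 : (0 : ℝ) < r := by exact_mod_cast hr
  have hp0 : 0 < (r : ℝ) / d := by positivity
  have hq0 : 0 < (r : ℝ) / d + t := by linarith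
  have hq1 : (r : ℝ) / d + t < 1 := by linarith
  rw [exp_aux hr hrd _ hq0 hq1]
  set p : ℝ := (r : ℝ) / d with hp
  set q : ℝ := p + t with hq
  have hA : 0 < p / q := by positivity
  have hB : 0 < (1 - p) / (1 - q) := div_pos (by linarith) (by linarith)
  set a := √(p / q) with ha
  set b := √((1 - p) / (1 - q)) with hb
  have ha0 : 0 < a := Real.sqrt_pos.2 hA
  have hb0 : 0 < b := Real.sqrt_pos.2 hB
  have ha2 : a ^ 2 * q = p := by rw [ha, Real.sq_sqrt hA.le]; field_simp
  have hb2 : b ^ 2 * (1 - q) = 1 - p := by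
    rw [hb, Real.sq_sqrt hB.le, div_mul_cancel₀ _ (by linarith)]
  have hab : a ^ 2 ≤ b ^ 2 := by
    have h1 : a ^ 2 ≤ 1 := by
      rw [ha, Real.sq_sqrt hA.le, div_le_one hq0]; linarith
    have h2 : 1 ≤ b ^ 2 := by
      rw [hb, Real.sq_sqrt hB.le, one_le_div (by linarith)]; linarith
    linarith
  set D := a ^ r * b ^ (d - r) with hD
  have hD0 : 0 < D := by positivity
  set S : Set (EuclideanSpace ℝ (Fin d)) := {x | t ≤ ‖P x‖ ^ 2 - p} with hS
  have hPc : Continuous P := P.continuous_of_finiteDimensional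
  have hSm : MeasurableSet S := (isClosed_le continuous_const (by fun_prop)).measurableSet
  have hne : Nonempty (Fin d) := ⟨⟨0, by omega⟩⟩
  rw [sphereUniform, Measure.map_apply measurable_subtype_coe hSm, Measure.smul_apply,
    Measure.toSphere_apply_univ,
    Measure.toSphere_apply' _ (measurable_subtype_coe hSm)]
  set A := Set.Ioo (0 : ℝ) 1 •
    ((Subtype.val : Metric.sphere (0 : EuclideanSpace ℝ (Fin d)) 1 → _) '' (Subtype.val ⁻¹' S))
  set V := (volume : Measure (EuclideanSpace ℝ (Fin d))) (Metric.ball 0 1) with hV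
  have hV0 : V ≠ 0 := (Metric.measure_ball_pos _ _ one_pos).ne'
  have hVt : V ≠ ⊤ := measure_ball_lt_top.ne
  set T := a • P + b • (LinearMap.id - P) with hT
  have hsub : T '' A ⊆ Metric.ball 0 1 := by
    rintro _ ⟨y, hy, rfl⟩
    obtain ⟨s, hs, _, ⟨x, hx, rfl⟩, rfl⟩ := Set.mem_smul.1 hy
    have hxn : ‖(x : EuclideanSpace ℝ (Fin d))‖ = 1 := by simp
    have hx' : t ≤ ‖P x‖ ^ 2 - p := hx
    have hTx : ‖T x‖ ^ 2 ≤ 1 := by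
      rw [hT, norm_aux P hidem hsa, hxn]
      have : (b ^ 2 - a ^ 2) * q ≤ (b ^ 2 - a ^ 2) * ‖P x‖ ^ 2 :=
        mul_le_mul_of_nonneg_left (by linarith) (by linarith)
      linarith
    have hTx' : ‖T x‖ ≤ 1 := by
      rw [sq_le_one_iff₀ (norm_nonneg _)] at hTx
      exact hTx
    rw [mem_ball_zero_iff, map_smul, norm_smul, Real.norm_of_nonneg hs.1.le]
    nlinarith [hs.1, hs.2]
  have hvol : ENNReal.ofReal D * volume A ≤ V := by
    have := Measure.addHaar_image_linearMap volume T A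
    rw [hT, det_aux hrd P hidem hrank, abs_of_pos hD0] at this
    rw [← this]
    exact measure_mono hsub
  have hD1 : ENNReal.ofReal D ≠ 0 := by simpa using hD0
  rw [ENNReal.ofReal_inv_of_pos hD0]
  have hn : (Module.finrank ℝ (EuclideanSpace ℝ (Fin d)) : ENNReal) ≠ 0 := by simp; omega
  have hn' : (Module.finrank ℝ (EuclideanSpace ℝ (Fin d)) : ENNReal) ≠ ⊤ := by simp
  rw [smul_eq_mul, mul_comm, ← div_eq_mul_inv, ENNReal.mul_div_mul_left _ _ hn hn']
  apply ENNReal.div_le_of_le_mul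
  rw [mul_comm, ← div_eq_mul_inv, ENNReal.le_div_iff_mul_le (Or.inl hD1) (Or.inl ENNReal.ofReal_ne_top),
    mul_comm]
  exact hvol
end

section
/- Let d ≥ 4, let k be an integer with 0 ≤ k ≤ d/3 − 1, let x_1, …, x_k be orthonormal vectors in ℝ^d, and let x ∈ B_d(0,1). Let S = S^{d−1} ∩ {w ∈ ℝ^d : |⟨x_i, w⟩| ≤ d^{−3} for all i ≤ k} (a set of positive σ_{d−1}-measure), and let μ be the probability measure obtained by conditioning σ_{d−1} on S. Then for every t ≥ 2, μ({y : |⟨x, y⟩| ≥ √(t/d) + 1/d²}) ≤ 2 √t · e^{−t/3}. -/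
open MeasureTheory
open scoped RealInnerProductSpace

section aux
open Metric Set Module

lemma aux_exp1 (n : ℕ) (s : ℝ) :
    (Real.sqrt (1 - s ^ 2)) ^ n ≤ Real.exp (-(n * s ^ 2 / 2)) := by
  have h : Real.sqrt (1 - s ^ 2) ≤ Real.exp (-(s ^ 2 / 2)) := by
    rw [Real.sqrt_le_left (Real.exp_pos _).le, ← Real.exp_nat_mul]
    have := Real.add_one_le_exp (-(s ^ 2))
    refine le_trans (by linarith) (this.trans (le_of_eq ?_))
    congr 1
    push_cast
    ring
  calc _ ≤ (Real.exp (-(s ^ 2 / 2))) ^ n := pow_le_pow_left₀ (Real.sqrt_nonneg _) h n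
    _ = _ := by
      rw [← Real.exp_nat_mul]
      congr 1
      ring

lemma aux_exp2 (n : ℕ) (s : ℝ) (h0 : 0 < s) (h1 : 1 / 2 ≤ s ^ 2) (h2 : s ≤ 1) :
    (1 / (2 * s)) ^ n ≤ Real.exp (-(n * s ^ 2 / 2)) := by
  have h : 1 / (2 * s) ≤ Real.exp (-(s ^ 2 / 2)) := by
    rw [Real.exp_neg, ← one_div]
    apply one_div_le_one_div_of_le (Real.exp_pos _)
    -- exp (s^2/2) ≤ 2 s; square: exp (s^2) ≤ 4 s^2
    have hc : Real.exp (s ^ 2) ≤ 4 * s ^ 2 := by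
      set u := s ^ 2
      have hu1 : u ≤ 1 := by
        have : s ^ 2 ≤ 1 := by nlinarith
        exact this
      have hu0 : 0 ≤ 1 - u := by linarith
      -- convexity between 1/2 and 1
      have e1 : Real.exp 1 ≤ 2.7182818286 := Real.exp_one_lt_d9.le
      have eh : Real.exp (1 / 2) ≤ 1.7 := by
        have : Real.exp (1 / 2) ^ 2 = Real.exp 1 := by
          rw [← Real.exp_nat_mul]; norm_num
        nlinarith [Real.exp_pos (1 / 2)]
      have hconv := convexOn_exp.2 (mem_univ (1 / 2 : ℝ)) (mem_univ (1 : ℝ))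
        (show 0 ≤ 2 * (1 - u) by linarith) (show 0 ≤ 2 * u - 1 by linarith) (by ring)
      simp only [smul_eq_mul] at hconv
      have : 2 * (1 - u) * (1 / 2) + (2 * u - 1) * 1 = u := by ring
      rw [this] at hconv
      nlinarith
    have : Real.exp (s ^ 2 / 2) ^ 2 = Real.exp (s ^ 2) := by
      rw [← Real.exp_nat_mul]; congr 1; push_cast; ring
    apply le_of_sq_le_sq _ (by positivity)
    rw [this]; linarith
  calc _ ≤ (Real.exp (-(s ^ 2 / 2))) ^ n := pow_le_pow_left₀ (by positivity) h n
    _ = _ := by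
      rw [← Real.exp_nat_mul]
      congr 1
      ring

variable {E : Type*} [NormedAddCommGroup E] [InnerProductSpace ℝ E] [FiniteDimensional ℝ E]
  [MeasurableSpace E] [BorelSpace E]

lemma aux_cap [Nontrivial E] (v : E) (hv : ‖v‖ ≤ 1) (s : ℝ) (hs : 0 < s) :
    (volume : Measure E) {b | 0 < ‖b‖ ∧ ‖b‖ < 1 ∧ s * ‖b‖ ≤ ⟪v, b⟫} ≤
      ENNReal.ofReal (Real.exp (-(finrank ℝ E * s ^ 2 / 2))) * (volume : Measure E) (ball 0 1) := by
  by_cases hs1 : 1 < s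
  · have : {b : E | 0 < ‖b‖ ∧ ‖b‖ < 1 ∧ s * ‖b‖ ≤ ⟪v, b⟫} = ∅ := by
      ext b
      simp only [mem_ofPred_eq, mem_empty_iff_false, iff_false, not_and, not_le]
      intro h0 h1
      have := real_inner_le_norm v b
      nlinarith
    rw [this]; simp
  push Not at hs1
  have hv2 : ‖v‖ ^ 2 ≤ 1 := by nlinarith [norm_nonneg v]
  by_cases hs2 : s ^ 2 ≤ 1 / 2
  · calc _ ≤ (volume : Measure E) (closedBall (s • v) (Real.sqrt (1 - s ^ 2))) := by
          apply measure_mono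
          rintro b ⟨h0, h1, h2⟩
          rw [mem_closedBall, dist_eq_norm]
          apply Real.le_sqrt_of_sq_le
          rw [norm_sub_sq_real, norm_smul, inner_smul_right, mul_pow, real_inner_comm,
            Real.norm_eq_abs, sq_abs]
          nlinarith [mul_le_mul_of_nonneg_left h2 hs.le, mul_le_mul_of_nonneg_left hv2 (sq_nonneg s)]
      _ ≤ _ := by
        rw [Measure.addHaar_closedBall _ _ (Real.sqrt_nonneg _)]
        gcongr
        exact aux_exp1 _ s
  · push Not at hs2
    calc _ ≤ (volume : Measure E) (closedBall ((1 / (2 * s)) • v) (1 / (2 * s))) := by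
          apply measure_mono
          rintro b ⟨h0, h1, h2⟩
          rw [mem_closedBall, dist_eq_norm]
          apply le_of_sq_le_sq _ (by positivity)
          rw [norm_sub_sq_real, norm_smul, inner_smul_right, mul_pow, real_inner_comm,
            Real.norm_eq_abs, sq_abs]
          have hr : 0 < 1 / (2 * s) := by positivity
          have h3 := mul_le_mul_of_nonneg_left h2 hr.le
          have h4 : 1 / (2 * s) * (s * ‖b‖) = ‖b‖ / 2 := by field_simp
          nlinarith [mul_le_mul_of_nonneg_left hv2 (sq_nonneg (1 / (2 * s)))]
      _ ≤ _ := by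
        rw [Measure.addHaar_closedBall _ _ (by positivity)]
        gcongr
        exact aux_exp2 _ s hs hs2.le hs1

lemma aux_toSphere (T : Set E) (hT : MeasurableSet T) :
    (volume : Measure E).toSphere (Subtype.val ⁻¹' T) =
      finrank ℝ E * (volume : Measure E) {w | 0 < ‖w‖ ∧ ‖w‖ < 1 ∧ ‖w‖⁻¹ • w ∈ T} := by
  rw [Measure.toSphere_apply' _ (measurable_subtype_coe hT)]
  congr 2
  ext w
  simp only [mem_smul, Subtype.image_preimage_coe, mem_inter_iff, mem_sphere_zero_iff_norm,
    mem_Ioo, mem_ofPred_eq]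
  constructor
  · rintro ⟨r, ⟨h0, h1⟩, y, ⟨hy, hyT⟩, rfl⟩
    have : ‖r • y‖ = r := by rw [norm_smul, hy, Real.norm_eq_abs, abs_of_pos h0, mul_one]
    rw [this, smul_smul, inv_mul_cancel₀ h0.ne', one_smul]
    exact ⟨h0, h1, hyT⟩
  · rintro ⟨h0, h1, h2⟩
    refine ⟨‖w‖, ⟨h0, h1⟩, ‖w‖⁻¹ • w, ⟨?_, h2⟩, ?_⟩
    · rw [norm_smul, norm_inv, norm_norm, inv_mul_cancel₀ h0.ne']
    · rw [smul_smul, mul_inv_cancel₀ h0.ne', one_smul]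

lemma aux_sphere_tail [Nontrivial E] (v : E) (hv : ‖v‖ ≤ 1) (s : ℝ) (hs : 0 < s) :
    (volume : Measure E).toSphere (Subtype.val ⁻¹' {y | s ≤ |⟪v, y⟫|}) ≤
      ENNReal.ofReal (2 * Real.exp (-(finrank ℝ E * s ^ 2 / 2))) *
        (volume : Measure E).toSphere univ := by
  rw [aux_toSphere _ (by measurability), Measure.toSphere_apply_univ]
  have : {w : E | 0 < ‖w‖ ∧ ‖w‖ < 1 ∧ ‖w‖⁻¹ • w ∈ {y | s ≤ |⟪v, y⟫|}} ⊆
      {b | 0 < ‖b‖ ∧ ‖b‖ < 1 ∧ s * ‖b‖ ≤ ⟪v, b⟫} ∪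
      {b | 0 < ‖b‖ ∧ ‖b‖ < 1 ∧ s * ‖b‖ ≤ ⟪-v, b⟫} := by
    rintro w ⟨h0, h1, h2⟩
    rw [mem_ofPred_eq, inner_smul_right, abs_mul, abs_of_pos (inv_pos.2 h0), inv_mul_eq_div,
      le_div_iff₀ h0] at h2
    rcases le_abs.1 h2 with h | h
    · exact Or.inl ⟨h0, h1, h⟩
    · exact Or.inr ⟨h0, h1, by rwa [inner_neg_left]⟩
  have h1 := aux_cap v hv s hs
  have h2 := aux_cap (-v) (by rwa [norm_neg]) s hs
  have h3 := (measure_mono (μ := volume) this).trans (measure_union_le _ _)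
  have h4 := h3.trans (add_le_add h1 h2)
  rw [two_mul, ENNReal.ofReal_add (by positivity) (by positivity), mul_left_comm]
  gcongr
  rwa [add_mul]

lemma aux_radial [Nontrivial E] (v : E) (hv : ‖v‖ ≤ 1) (s : ℝ) (hs : 0 < s) (I : Set ℝ)
    (hI : MeasurableSet I) :
    (volume : Measure E) {b | ‖b‖ ∈ I ∧ s * ‖b‖ ≤ |⟪v, b⟫|} ≤
      ENNReal.ofReal (2 * Real.exp (-(finrank ℝ E * s ^ 2 / 2))) *
        (volume : Measure E) {b | ‖b‖ ∈ I} := by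
  have key : ∀ T : Set E, MeasurableSet T →
      (volume : Measure E) ({b | ‖b‖ ∈ I ∧ ‖b‖⁻¹ • b ∈ T} ∩ {0}ᶜ) =
      (volume : Measure E).toSphere (Subtype.val ⁻¹' T) *
        Measure.volumeIoiPow (finrank ℝ E - 1) (Subtype.val ⁻¹' I) := by
    intro T hT
    rw [← Measure.prod_prod, ← (volume : Measure E).measurePreserving_homeomorphUnitSphereProd.measure_preimage
      (((measurable_subtype_coe hT).prod (measurable_subtype_coe hI)).nullMeasurableSet),
      (MeasurableEmbedding.subtype_coe (measurableSet_singleton (0:E)).compl).comap_apply]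
    congr 1
    ext b
    simp only [mem_inter_iff, mem_ofPred_eq, mem_compl_iff, mem_singleton_iff, mem_image,
      mem_preimage, mem_prod, Subtype.exists, homeomorphUnitSphereProd_apply_fst_coe,
      homeomorphUnitSphereProd_apply_snd_coe, exists_and_right, exists_eq_right]
    constructor
    · rintro ⟨⟨h1, h2⟩, h3⟩
      exact ⟨⟨h3, h2⟩, h1⟩
    · rintro ⟨⟨h3, h2⟩, h1⟩
      exact ⟨⟨h1, h2⟩, h3⟩
  have hz : ∀ A : Set E, (volume : Measure E) A = (volume : Measure E) (A ∩ {0}ᶜ) := by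
    intro A
    rw [← Set.sdiff_eq, measure_sdiff_null (measure_singleton (0 : E))]
  have k1 := key {y | s ≤ |⟪v, y⟫|} (measurableSet_le (by fun_prop) (by fun_prop))
  have k2 := key univ MeasurableSet.univ
  have e1 : {b : E | ‖b‖ ∈ I ∧ ‖b‖⁻¹ • b ∈ {y | s ≤ |⟪v, y⟫|}} ∩ {0}ᶜ =
      {b | ‖b‖ ∈ I ∧ s * ‖b‖ ≤ |⟪v, b⟫|} ∩ {0}ᶜ := by
    ext b
    simp only [mem_inter_iff, mem_ofPred_eq, mem_compl_iff, mem_singleton_iff]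
    refine and_congr_left fun hb => and_congr_right fun _ => ?_
    have h0 : 0 < ‖b‖ := norm_pos_iff.2 hb
    rw [inner_smul_right, abs_mul, abs_of_pos (inv_pos.2 h0), inv_mul_eq_div, le_div_iff₀ h0]
  rw [hz, hz {b | ‖b‖ ∈ I}, ← e1, k1]
  simp only [mem_univ, and_true, preimage_univ] at k2
  rw [k2, ← mul_assoc]
  gcongr
  exact aux_sphere_tail v hv s hs

lemma aux_fubini {ι : Type*} [Finite ι] (K : Submodule ℝ E) [Nontrivial Kᗮ] (x : ι → E)
    (hx : ∀ i, x i ∈ K) (v : E)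
    (hvK : v ∈ Kᗮ) (hv : ‖v‖ ≤ 1) (s : ℝ) (hs : 0 < s) (c : ℝ) :
    (volume : Measure E) {w | (0 < ‖w‖ ∧ ‖w‖ < 1 ∧ ∀ i, |⟪x i, w⟫| ≤ c * ‖w‖) ∧
        s * ‖w‖ ≤ |⟪v, w⟫|} ≤
      ENNReal.ofReal (2 * Real.exp (-(finrank ℝ Kᗮ * s ^ 2 / 2))) *
      (volume : Measure E) {w | 0 < ‖w‖ ∧ ‖w‖ < 1 ∧ ∀ i, |⟪x i, w⟫| ≤ c * ‖w‖} := by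
  have mp : MeasurePreserving (fun p : K × Kᗮ => (p.1 : E) + (p.2 : E))
      ((volume : Measure K).prod (volume : Measure Kᗮ)) volume :=
    (K.orthogonalDecomposition.symm.measurePreserving).comp (WithLp.volume_preserving_toLp K Kᗮ)
  have m1 : MeasurableSet {w : E | 0 < ‖w‖ ∧ ‖w‖ < 1 ∧ ∀ i, |⟪x i, w⟫| ≤ c * ‖w‖} := by
    have m3 : MeasurableSet {w : E | ∀ i, |⟪x i, w⟫| ≤ c * ‖w‖} := by
      rw [ofPred_forall]
      refine MeasurableSet.iInter fun i => measurableSet_le ?_ ?_ <;> fun_prop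
    exact (measurableSet_lt measurable_const measurable_norm).inter
      ((measurableSet_lt measurable_norm measurable_const).inter m3)
  have m2 : MeasurableSet {w : E | (0 < ‖w‖ ∧ ‖w‖ < 1 ∧ ∀ i, |⟪x i, w⟫| ≤ c * ‖w‖) ∧
        s * ‖w‖ ≤ |⟪v, w⟫|} :=
    m1.inter (measurableSet_le (f := fun w : E => s * ‖w‖) (g := fun w : E => |⟪v, w⟫|)
      (by fun_prop) (by fun_prop))
  rw [← mp.measure_preimage m1.nullMeasurableSet, ← mp.measure_preimage m2.nullMeasurableSet,
    Measure.prod_apply (mp.measurable m1), Measure.prod_apply (mp.measurable m2),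
    ← lintegral_const_mul _ (measurable_measure_prodMk_left (mp.measurable m1))]
  apply lintegral_mono
  intro a
  set I : Set ℝ := {r | 0 < Real.sqrt (‖a‖ ^ 2 + r ^ 2) ∧ Real.sqrt (‖a‖ ^ 2 + r ^ 2) < 1 ∧
    ∀ i, |⟪x i, (a : E)⟫| ≤ c * Real.sqrt (‖a‖ ^ 2 + r ^ 2)} with hIdef
  have hI : MeasurableSet I := by
    have hq : Measurable fun r : ℝ => Real.sqrt (‖a‖ ^ 2 + r ^ 2) := by fun_prop
    have m3 : MeasurableSet {r : ℝ | ∀ i, |⟪x i, (a : E)⟫| ≤ c * Real.sqrt (‖a‖ ^ 2 + r ^ 2)} := by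
      rw [ofPred_forall]
      refine MeasurableSet.iInter fun i => measurableSet_le ?_ ?_ <;> fun_prop
    exact (measurableSet_lt measurable_const hq).inter
      ((measurableSet_lt hq measurable_const).inter m3)
  have hn : ∀ b : Kᗮ, ‖(a : E) + (b : E)‖ = Real.sqrt (‖a‖ ^ 2 + ‖b‖ ^ 2) := by
    intro b
    have h0 : ⟪(a : E), (b : E)⟫ = 0 := Submodule.inner_right_of_mem_orthogonal a.2 b.2
    have := norm_add_sq_eq_norm_sq_add_norm_sq_real h0
    rw [← Real.sqrt_sq (norm_nonneg ((a : E) + b))]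
    congr 1
    simp only [Submodule.coe_norm]
    nlinarith
  have hi : ∀ (i : ι) (b : Kᗮ), ⟪x i, (a : E) + (b : E)⟫ = ⟪x i, (a : E)⟫ := by
    intro i b
    rw [inner_add_right, Submodule.inner_right_of_mem_orthogonal (hx i) b.2, add_zero]
  have hvb : ∀ b : Kᗮ, ⟪v, (a : E) + (b : E)⟫ = ⟪(⟨v, hvK⟩ : Kᗮ), b⟫ := by
    intro b
    rw [inner_add_right, Submodule.inner_left_of_mem_orthogonal a.2 hvK, zero_add]
    rfl
  have hb : ∀ b : Kᗮ, ‖b‖ ≤ ‖(a : E) + (b : E)‖ := by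
    intro b
    rw [hn]
    apply Real.le_sqrt_of_sq_le
    nlinarith [sq_nonneg ‖a‖]
  refine le_trans (measure_mono ?_) ((aux_radial (⟨v, hvK⟩ : Kᗮ) hv s hs I hI).trans
    (mul_le_mul_right (measure_mono ?_) _))
  · rintro b ⟨⟨h1, h2, h3⟩, h4⟩
    simp only [hi] at h3
    simp only [hvb] at h4
    refine ⟨?_, le_trans (mul_le_mul_of_nonneg_left (hb b) hs.le) h4⟩
    simp only [hn] at h1 h2 h3
    exact ⟨h1, h2, h3⟩
  · rintro b ⟨h1, h2, h3⟩
    simp only [mem_preimage, mem_ofPred_eq, hi, hn]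
    exact ⟨h1, h2, h3⟩

end aux

/-- Concentration for a random unit vector conditioned to be `1/d³`-approximately
orthogonal to `k ≤ d/3 - 1` orthonormal vectors: for any fixed `x` in the unit ball and
`t ≥ 2`, `ℙ(|⟨x, y⟩| ≥ √(t/d) + 1/d²) ≤ 2√t e^{-t/3}`. -/
theorem conditioned_sphere_concentration (d k : ℕ) (hd : 4 ≤ d)
    (hk : (k : ℝ) ≤ (d : ℝ) / 3 - 1)
    (x : Fin k → EuclideanSpace ℝ (Fin d)) (hx : Orthonormal ℝ x)
    (x₀ : EuclideanSpace ℝ (Fin d)) (hx₀ : x₀ ∈ Metric.closedBall (0 : EuclideanSpace ℝ (Fin d)) 1)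
    (S : Set (EuclideanSpace ℝ (Fin d)))
    (hS : S = Metric.sphere (0 : EuclideanSpace ℝ (Fin d)) 1 ∩
        {w | ∀ i : Fin k, |⟪x i, w⟫| ≤ 1 / (d : ℝ) ^ 3})
    (t : ℝ) (ht : 2 ≤ t) :
    ProbabilityTheory.cond (sphereUniform d) S {y | Real.sqrt (t / d) + 1 / (d : ℝ) ^ 2 ≤ |⟪x₀, y⟫|}
      ≤ ENNReal.ofReal (2 * Real.sqrt t * Real.exp (-t / 3)) := by
  have hd0 : (4 : ℝ) ≤ d := by exact_mod_cast hd
  have hdpos : (0 : ℝ) < d := by linarith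
  set A : Set (EuclideanSpace ℝ (Fin d)) := {y | Real.sqrt (t / d) + 1 / (d : ℝ) ^ 2 ≤ |⟪x₀, y⟫|} with hA
  set s := Real.sqrt (t / d) with hsdef
  have hs : 0 < s := Real.sqrt_pos.2 (by positivity)
  have hs2 : s ^ 2 = t / d := Real.sq_sqrt (by positivity)
  have mA : MeasurableSet A := measurableSet_le (by fun_prop) (by fun_prop)
  have mS : MeasurableSet S := by
    rw [hS]
    refine Metric.isClosed_sphere.measurableSet.inter ?_
    rw [Set.ofPred_forall]
    refine MeasurableSet.iInter fun i => measurableSet_le ?_ ?_ <;> fun_prop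
  -- the orthogonal decomposition of x₀
  set K : Submodule ℝ (EuclideanSpace ℝ (Fin d)) := Submodule.span ℝ (Set.range x) with hK
  have hxK : ∀ i, x i ∈ K := fun i => Submodule.subset_span ⟨i, rfl⟩
  set u : (EuclideanSpace ℝ (Fin d)) := ∑ i, ⟪x i, x₀⟫ • x i with hu
  have huK : u ∈ K := Submodule.sum_mem _ fun i _ => Submodule.smul_mem _ _ (hxK i)
  have hvi : ∀ i, ⟪x i, x₀ - u⟫ = 0 := by
    intro i
    rw [inner_sub_right, hu, hx.inner_right_fintype, sub_self]
  have hvK : x₀ - u ∈ Kᗮ := by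
    rw [hK, Submodule.mem_orthogonal]
    intro w hw
    induction hw using Submodule.span_induction with
    | mem w hw => obtain ⟨i, rfl⟩ := hw; exact hvi i
    | zero => simp
    | add a b _ _ ha hb => rw [inner_add_left, ha, hb, add_zero]
    | smul r a _ ha => rw [inner_smul_left, ha, mul_zero]
  have hx01 : ‖x₀‖ ≤ 1 := by simpa using hx₀
  have hv : ‖x₀ - u‖ ≤ 1 := by
    have h0 : ⟪u, x₀ - u⟫ = 0 := Submodule.inner_right_of_mem_orthogonal huK hvK
    have := norm_add_sq_eq_norm_sq_add_norm_sq_real h0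
    rw [add_sub_cancel] at this
    nlinarith [norm_nonneg u, norm_nonneg (x₀ - u), norm_nonneg x₀]
  -- dimensions
  have hfK : Module.finrank ℝ K = k := by
    rw [hK, finrank_span_eq_card hx.linearIndependent, Fintype.card_fin]
  have hfsum : k + Module.finrank ℝ Kᗮ = d := by
    have := K.finrank_add_finrank_orthogonal
    rwa [hfK, finrank_euclideanSpace_fin] at this
  have hfR : (k : ℝ) + (Module.finrank ℝ Kᗮ : ℝ) = d := by exact_mod_cast hfsum
  have hm : 2 * (d : ℝ) / 3 + 1 ≤ Module.finrank ℝ Kᗮ := by linarith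
  have hnt : Nontrivial Kᗮ := by
    apply Module.nontrivial_of_finrank_pos (R := ℝ)
    have : (0 : ℝ) < Module.finrank ℝ Kᗮ := by linarith
    exact_mod_cast this
  have hF := aux_fubini K x hxK (x₀ - u) hvK hv s hs (1 / (d : ℝ) ^ 3)
  have hC : ENNReal.ofReal (2 * Real.exp (-(Module.finrank ℝ Kᗮ * s ^ 2 / 2))) ≤
      ENNReal.ofReal (2 * Real.sqrt t * Real.exp (-t / 3)) := by
    apply ENNReal.ofReal_le_ofReal
    have h1 : 1 ≤ Real.sqrt t := by
      rw [Real.one_le_sqrt]; linarith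
    have h2 : Real.exp (-(Module.finrank ℝ Kᗮ * s ^ 2 / 2)) ≤ Real.exp (-t / 3) := by
      apply Real.exp_le_exp.2
      have : 2 * (d : ℝ) / 3 * s ^ 2 ≤ Module.finrank ℝ Kᗮ * s ^ 2 := by
        apply mul_le_mul_of_nonneg_right _ (sq_nonneg s)
        linarith
      have h3 : 2 * (d : ℝ) / 3 * s ^ 2 = 2 * t / 3 := by
        rw [hs2]; field_simp
      linarith
    calc _ ≤ 2 * Real.exp (-t / 3) := by linarith
      _ ≤ _ := by nlinarith [Real.exp_pos (-t / 3)]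
  have hσ : ∀ T : Set (EuclideanSpace ℝ (Fin d)), MeasurableSet T → sphereUniform d T =
      ((volume : Measure (EuclideanSpace ℝ (Fin d))).toSphere Set.univ)⁻¹ * (Module.finrank ℝ (EuclideanSpace ℝ (Fin d)) *
        (volume : Measure (EuclideanSpace ℝ (Fin d))) {w | 0 < ‖w‖ ∧ ‖w‖ < 1 ∧ ‖w‖⁻¹ • w ∈ T}) := by
    intro T hT
    rw [sphereUniform, Measure.map_apply measurable_subtype_coe hT, Measure.smul_apply,
      aux_toSphere T hT, smul_eq_mul]
  have hiff : ∀ w : (EuclideanSpace ℝ (Fin d)), 0 < ‖w‖ → (‖w‖⁻¹ • w ∈ S ↔ ∀ i, |⟪x i, w⟫| ≤ 1 / (d : ℝ) ^ 3 * ‖w‖) := by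
    intro w h0
    rw [hS]
    simp only [Set.mem_inter_iff, mem_sphere_zero_iff_norm, norm_smul, norm_inv, norm_norm,
      inv_mul_cancel₀ h0.ne', true_and, Set.mem_ofPred_eq, inner_smul_right, inv_mul_eq_div,
      abs_div, abs_norm, div_le_iff₀ h0]
  have main : sphereUniform d (S ∩ A) ≤
      ENNReal.ofReal (2 * Real.sqrt t * Real.exp (-t / 3)) * sphereUniform d S := by
    rw [hσ _ (mS.inter mA), hσ _ mS, mul_left_comm (ENNReal.ofReal _),
      mul_left_comm (ENNReal.ofReal _)]
    refine mul_le_mul_right (mul_le_mul_right ?_ _) _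
    refine le_trans (measure_mono ?_) (hF.trans (mul_le_mul' hC (measure_mono ?_)))
    · rintro w ⟨h0, h1, h2, h3⟩
      have h4 := (hiff w h0).1 h2
      refine ⟨⟨h0, h1, h4⟩, ?_⟩
      rw [hA, Set.mem_ofPred_eq, inner_smul_right, abs_mul, abs_inv, abs_norm, inv_mul_eq_div,
        le_div_iff₀ h0] at h3
      have hsum : |⟪u, w⟫| ≤ 1 / (d : ℝ) ^ 2 * ‖w‖ := by
        rw [hu, sum_inner]
        calc _ ≤ ∑ i, |⟪⟪x i, x₀⟫ • x i, w⟫| := Finset.abs_sum_le_sum_abs _ _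
          _ ≤ ∑ i : Fin k, 1 / (d : ℝ) ^ 3 * ‖w‖ := by
            apply Finset.sum_le_sum
            intro i _
            rw [real_inner_smul_left, abs_mul]
            have hb : |⟪x i, x₀⟫| ≤ 1 := by
              have := abs_real_inner_le_norm (x i) x₀
              rw [hx.1 i, one_mul] at this
              linarith
            calc _ ≤ 1 * |⟪x i, w⟫| := mul_le_mul_of_nonneg_right hb (abs_nonneg _)
              _ ≤ _ := by rw [one_mul]; exact h4 i
          _ = k * (1 / (d : ℝ) ^ 3 * ‖w‖) := by simp
          _ ≤ d * (1 / (d : ℝ) ^ 3 * ‖w‖) := by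
            apply mul_le_mul_of_nonneg_right _ (by positivity)
            linarith
          _ = _ := by field_simp
      have htri : |⟪x₀, w⟫| ≤ |⟪x₀ - u, w⟫| + |⟪u, w⟫| := by
        have : ⟪x₀, w⟫ = ⟪x₀ - u, w⟫ + ⟪u, w⟫ := by rw [inner_sub_left]; ring
        rw [this]; exact abs_add_le _ _
      rw [add_mul] at h3
      linarith
    · rintro w ⟨h0, h1, h2⟩
      exact ⟨h0, h1, (hiff w h0).2 h2⟩
  rw [ProbabilityTheory.cond_apply mS]
  calc _ ≤ (sphereUniform d S)⁻¹ *
      (ENNReal.ofReal (2 * Real.sqrt t * Real.exp (-t / 3)) * sphereUniform d S) := by gcongr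
    _ = ENNReal.ofReal (2 * Real.sqrt t * Real.exp (-t / 3)) *
      ((sphereUniform d S)⁻¹ * sphereUniform d S) := by ring
    _ ≤ ENNReal.ofReal (2 * Real.sqrt t * Real.exp (-t / 3)) * 1 := by
      gcongr
      exact ENNReal.inv_mul_le_one _
    _ = _ := mul_one _
end
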